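/- arXiv:2402.19152 — 3 statements merged into one kernel-verified Lean document; each statement's English description precedes it below -/
import Mathlib

section
/- Let (Ω, Σ, μ) be a σ-finite measure space and let h_1, …, h_n : Ω → ℝ be measurable functions each of which is integrable on every set of finite measure. Set h = Σ_{k=1}^n |h_k|. For every ε > 0 there exists a sequence (U_i) of pairwise disjoint measurable sets with 0 < μ(U_i) < ∞ for all i such that, μ-almost everywhere, |h_k − P_𝒰 h_k| ≤ ε·h for every 1 ≤ k ≤ n, where P_𝒰 f = Σ_i (μ(U_i)^{-1} ∫_{U_i} f dμ)·χ_{U_i} is the conditional expectation over the family 𝒰 = (U_i). -/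
open MeasureTheory

noncomputable section

/-!
A nonzero vector of a normed space lies in a ball `B(c, δ‖c‖)` around some term `c` of any sequence
accumulating at it, and for `δ = ε / (2 + ε)` two points `x`, `y` of such a ball satisfy
`‖x - y‖ ≤ ε‖x‖`. Pulling these countably many balls back along a function `f` and cutting with sets
of finite measure covers the support of `f` by countably many sets on which `f` oscillates by at
most `ε‖f‖`. Making the sets disjoint and discarding the null ones gives the family: on each member
`f` is bounded, hence integrable, and its average stays in every closed ball containing its values.
Finitely many functions `hₖ` are handled at once by taking for `f` the tuple `(hₖ)` with the
`ℓ¹` norm, so that `‖f‖ = ∑ₖ ‖hₖ‖`.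
-/

open Set
open scoped Function

section FinStronglyMeasurable

variable {Ω : Type*} [MeasurableSpace Ω] {μ : Measure Ω}

lemma continuous_comp_aefinStronglyMeasurable {E F : Type*} [TopologicalSpace E] [Zero E]
    [TopologicalSpace F] [Zero F] {f : Ω → E} (hf : AEFinStronglyMeasurable f μ) {g : E → F}
    (hg : Continuous g) (hg0 : g 0 = 0) : AEFinStronglyMeasurable (g ∘ f) μ := by
  obtain ⟨f', ⟨s, hs, hlim⟩, hff'⟩ := hf
  refine ⟨g ∘ f', ⟨fun n ↦ (s n).map g, fun n ↦ ?_, fun ω ↦ ?_⟩, hff'.fun_comp g⟩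
  · rw [SimpleFunc.coe_map]
    exact (measure_mono (Function.support_comp_subset hg0 _)).trans_lt (hs n)
  · exact (hg.tendsto _).comp (hlim ω)

lemma aefinStronglyMeasurable_pi {κ : Type*} [Finite κ] {E : κ → Type*}
    [∀ k, TopologicalSpace (E k)] [∀ k, AddCommMonoid (E k)] [∀ k, ContinuousAdd (E k)]
    {h : ∀ k, Ω → E k} (hh : ∀ k, AEFinStronglyMeasurable (h k) μ) :
    AEFinStronglyMeasurable (fun ω k ↦ h k ω) μ := by
  classical
  have := Fintype.ofFinite κ
  have hsum : (fun ω k ↦ h k ω) = ∑ k, Pi.single k ∘ h k := by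
    ext ω k
    simp
  rw [hsum]
  exact Finset.sum_induction _ (AEFinStronglyMeasurable · μ) (fun _ _ ↦ .add)
    (aefinStronglyMeasurable_zero μ) fun k _ ↦
      continuous_comp_aefinStronglyMeasurable (hh k) (continuous_single k) (Pi.single_zero k)

end FinStronglyMeasurable

section RelativeBalls

variable {E : Type*} [NormedAddCommGroup E]

lemma norm_sub_le_mul_norm_of_mem_ball {c x y : E} {ε : ℝ} (hε : 0 < ε)
    (hx : x ∈ Metric.ball c (ε / (2 + ε) * ‖c‖)) (hy : y ∈ Metric.ball c (ε / (2 + ε) * ‖c‖)) :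
    ‖x - y‖ ≤ ε * ‖x‖ := by
  set δ := ε / (2 + ε) with hδ
  have hδε : 2 * δ = ε * (1 - δ) := by rw [hδ]; field_simp; ring
  rw [mem_ball_iff_norm] at hx hy
  have hxy : ‖x - y‖ ≤ ‖x - c‖ + ‖y - c‖ := by simpa using norm_sub_le (x - c) (y - c)
  have hcx : (1 - δ) * ‖c‖ ≤ ‖x‖ := by linarith [norm_sub_norm_le c x, norm_sub_rev c x]
  calc ‖x - y‖ ≤ 2 * δ * ‖c‖ := by linarith
    _ = ε * ((1 - δ) * ‖c‖) := by rw [hδε, mul_assoc]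
    _ ≤ ε * ‖x‖ := by gcongr

lemma exists_mem_ball_mul_norm {u : ℕ → E} {x : E} (hx : x ∈ closure (range u)) (hx0 : x ≠ 0)
    {δ : ℝ} (hδ : 0 < δ) : ∃ k, x ∈ Metric.ball (u k) (δ * ‖u k‖) := by
  have hopen : IsOpen {y : E | ‖x - y‖ < δ * ‖y‖} :=
    isOpen_lt (by fun_prop) (by fun_prop)
  have hmem : x ∈ {y : E | ‖x - y‖ < δ * ‖y‖} := by simp [hδ, hx0]
  obtain ⟨_, hy, k, rfl⟩ := mem_closure_iff.1 hx _ hopen hmem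
  exact ⟨k, mem_ball_iff_norm.2 hy⟩

end RelativeBalls

/-- The oscillation of `f` on `A`, relative to the size of any value of `f` on `A`, is at
most `ε`. -/
def RelOscOnLE {Ω E : Type*} [NormedAddCommGroup E] (f : Ω → E) (A : Set Ω) (ε : ℝ) : Prop :=
  ∀ x ∈ A, ∀ y ∈ A, ‖f x - f y‖ ≤ ε * ‖f x‖

/-- A family of sets over which a conditional expectation can be taken: pairwise disjoint measurable
sets of positive finite measure. -/
structure IsAveragingFamily {Ω ι : Type*} [MeasurableSpace Ω] (μ : Measure Ω) (U : ι → Set Ω) :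
    Prop where
  measurableSet : ∀ i, MeasurableSet (U i)
  disjoint : Pairwise (Disjoint on U)
  measure_pos : ∀ i, 0 < μ (U i)
  measure_lt_top : ∀ i, μ (U i) < ⊤

/-- The conditional expectation `P_𝒰 f` over the family `𝒰 = U`; it is meaningful when `U` is an
averaging family and `f` is integrable on each `U i`. -/
def condExpOver {Ω ι E : Type*} [MeasurableSpace Ω] [NormedAddCommGroup E] [NormedSpace ℝ E]
    (μ : Measure Ω) (U : ι → Set Ω) (f : Ω → E) (ω : Ω) : E :=
  ∑' i, (U i).indicator (fun _ ↦ ⨍ x in U i, f x ∂μ) ω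

section Oscillation

variable {Ω E : Type*} [NormedAddCommGroup E] {f : Ω → E} {A B : Set Ω} {ε : ℝ}

lemma RelOscOnLE.mono (hA : RelOscOnLE f A ε) (hBA : B ⊆ A) : RelOscOnLE f B ε :=
  fun x hx y hy ↦ hA x (hBA hx) y (hBA hy)

variable [MeasurableSpace Ω] {μ : Measure Ω}

lemma RelOscOnLE.integrableOn (hosc : RelOscOnLE f A ε)
    (hf : AEStronglyMeasurable f (μ.restrict A)) (hA : MeasurableSet A) (hμA : μ A < ⊤) :
    IntegrableOn f A μ := by
  obtain rfl | ⟨a, ha⟩ := A.eq_empty_or_nonempty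
  · exact integrableOn_empty
  refine .of_bound hμA hf (‖f a‖ + ε * ‖f a‖) ?_
  filter_upwards [ae_restrict_mem hA] with x hx
  linarith [hosc a ha x hx, norm_sub_norm_le (f x) (f a), norm_sub_rev (f x) (f a)]

lemma RelOscOnLE.norm_sub_setAverage_le [NormedSpace ℝ E] [CompleteSpace E]
    (hosc : RelOscOnLE f A ε) (hf : IntegrableOn f A μ) (hA : MeasurableSet A) (hμA : 0 < μ A)
    (hμA' : μ A < ⊤) {ω : Ω} (hω : ω ∈ A) : ‖f ω - ⨍ x in A, f x ∂μ‖ ≤ ε * ‖f ω‖ := by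
  have hball : ∀ᵐ x ∂μ.restrict A, f x ∈ Metric.closedBall (f ω) (ε * ‖f ω‖) := by
    filter_upwards [ae_restrict_mem hA] with x hx
    exact mem_closedBall_iff_norm'.2 (hosc ω hω x hx)
  exact mem_closedBall_iff_norm'.1 <|
    (convex_closedBall _ _).set_average_mem Metric.isClosed_closedBall hμA.ne' hμA'.ne hball hf

lemma exists_seq_relOscOnLE_cover_support (hf : FinStronglyMeasurable f μ) (hε : 0 < ε) :
    ∃ A : ℕ → Set Ω, (∀ n, MeasurableSet (A n)) ∧ (∀ n, μ (A n) < ⊤) ∧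
      (∀ n, RelOscOnLE f (A n) ε) ∧ Function.support f ⊆ ⋃ n, A n := by
  obtain ⟨c, hc, hfc⟩ := hf.stronglyMeasurable.isSeparable_range
  obtain ⟨u, hcu⟩ := countable_iff_exists_subset_range.1 hc
  have hfu (ω : Ω) : f ω ∈ closure (range u) := closure_mono hcu (hfc (mem_range_self ω))
  let A (p : ℕ × ℕ) : Set Ω :=
    Function.support (hf.approx p.1) ∩ {ω | ‖f ω - u p.2‖ < ε / (2 + ε) * ‖u p.2‖}
  refine ⟨fun n ↦ A n.unpair, fun n ↦ ?_, fun n ↦ ?_, fun n x hx y hy ↦ ?_, fun ω hω ↦ ?_⟩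
  · exact (hf.approx _).measurableSet_support.inter <|
      (hf.stronglyMeasurable.sub stronglyMeasurable_const).norm.measurableSet_lt
        stronglyMeasurable_const
  · exact (measure_mono inter_subset_left).trans_lt (hf.fin_support_approx _)
  · exact norm_sub_le_mul_norm_of_mem_ball hε (mem_ball_iff_norm.2 hx.2) (mem_ball_iff_norm.2 hy.2)
  · obtain ⟨n, hn⟩ := ((hf.tendsto_approx ω).eventually_ne hω).exists
    obtain ⟨k, hk⟩ := exists_mem_ball_mul_norm (hfu ω) hω (δ := ε / (2 + ε)) (by positivity)
    exact mem_iUnion.2 ⟨Nat.pair n k, by simpa [A] using ⟨hn, mem_ball_iff_norm.1 hk⟩⟩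

end Oscillation

section AveragingFamily

variable {Ω ι : Type*} [MeasurableSpace Ω] {μ : Measure Ω} {U : ι → Set Ω}

lemma exists_isAveragingFamily_ae_cover {A : ℕ → Set Ω} (hA : ∀ n, MeasurableSet (A n))
    (hμA : ∀ n, μ (A n) < ⊤) :
    ∃ (ι : Type) (_ : Countable ι) (U : ι → Set Ω), IsAveragingFamily μ U ∧
      (∀ i, ∃ n, U i ⊆ A n) ∧ ∀ᵐ ω ∂μ, ω ∈ ⋃ n, A n → ω ∈ ⋃ i, U i := by
  refine ⟨{n // 0 < μ (disjointed A n)}, inferInstance, fun i ↦ disjointed A i,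
    ⟨fun i ↦ .disjointed hA i, (disjoint_disjointed A).comp_of_injective Subtype.val_injective,
      fun i ↦ i.2, fun i ↦ (measure_mono (disjointed_subset A i)).trans_lt (hμA i)⟩,
    fun i ↦ ⟨i, disjointed_subset A i⟩, ?_⟩
  have hnull : ∀ᵐ ω ∂μ, ∀ n, μ (disjointed A n) = 0 → ω ∉ disjointed A n :=
    ae_all_iff.2 fun n ↦ Filter.eventually_imp_distrib_left.2 measure_eq_zero_iff_ae_notMem.1
  filter_upwards [hnull] with ω hω hωA
  rw [← iUnion_disjointed, mem_iUnion] at hωA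
  obtain ⟨n, hn⟩ := hωA
  exact mem_iUnion.2 ⟨⟨n, pos_iff_ne_zero.2 fun h0 ↦ hω n h0 hn⟩, hn⟩

variable {E : Type*} [NormedAddCommGroup E] [NormedSpace ℝ E]

lemma condExpOver_of_mem (hU : Pairwise (Disjoint on U)) (f : Ω → E) {i : ι} {ω : Ω}
    (hω : ω ∈ U i) : condExpOver μ U f ω = ⨍ x in U i, f x ∂μ := by
  rw [condExpOver, tsum_eq_single i, indicator_of_mem hω]
  exact fun j hj ↦ indicator_of_notMem (disjoint_left.1 (hU hj.symm) hω) _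

lemma condExpOver_of_notMem (f : Ω → E) {ω : Ω} (hω : ω ∉ ⋃ i, U i) :
    condExpOver μ U f ω = 0 := by
  rw [mem_iUnion, not_exists] at hω
  simp only [condExpOver, indicator_of_notMem (hω _), tsum_zero]

lemma condExpOver_congr_ae {f g : Ω → E} (hfg : f =ᵐ[μ] g) :
    condExpOver μ U f = condExpOver μ U g := by
  ext ω
  simp only [condExpOver, average_congr (ae_restrict_of_ae hfg)]

lemma map_condExpOver [CompleteSpace E] {F : Type*} [NormedAddCommGroup F] [NormedSpace ℝ F]
    [CompleteSpace F] (L : E →L[ℝ] F) {f : Ω → E} (hU : Pairwise (Disjoint on U))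
    (hf : ∀ i, IntegrableOn f (U i) μ) (ω : Ω) :
    L (condExpOver μ U f ω) = condExpOver μ U (fun x ↦ L (f x)) ω := by
  by_cases hω : ω ∈ ⋃ i, U i
  · obtain ⟨i, hi⟩ := mem_iUnion.1 hω
    rw [condExpOver_of_mem hU _ hi, condExpOver_of_mem hU _ hi, average, average,
      L.integral_comp_comm (hf i).to_average]
  · rw [condExpOver_of_notMem _ hω, condExpOver_of_notMem _ hω, map_zero]

theorem exists_norm_sub_condExpOver_le [CompleteSpace E] {f : Ω → E}
    (hf : AEFinStronglyMeasurable f μ) {ε : ℝ} (hε : 0 < ε) :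
    ∃ (ι : Type) (_ : Countable ι) (U : ι → Set Ω), IsAveragingFamily μ U ∧
      (∀ i, IntegrableOn f (U i) μ) ∧ ∀ᵐ ω ∂μ, ‖f ω - condExpOver μ U f ω‖ ≤ ε * ‖f ω‖ := by
  obtain ⟨g, hg, hfg⟩ := hf
  obtain ⟨A, hA, hμA, hosc, hsupp⟩ := exists_seq_relOscOnLE_cover_support hg hε
  obtain ⟨ι, hι, U, hU, hUA, hcover⟩ := exists_isAveragingFamily_ae_cover hA hμA
  have hoscU (i : ι) : RelOscOnLE g (U i) ε := (hUA i).elim fun n hn ↦ (hosc n).mono hn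
  have hint (i : ι) : IntegrableOn g (U i) μ := (hoscU i).integrableOn
    hg.stronglyMeasurable.aestronglyMeasurable (hU.measurableSet i) (hU.measure_lt_top i)
  refine ⟨ι, hι, U, hU, fun i ↦ (hint i).congr (ae_restrict_of_ae hfg.symm), ?_⟩
  rw [condExpOver_congr_ae hfg]
  filter_upwards [hcover, hfg] with ω hω hfgω
  rw [hfgω]
  by_cases hωU : ω ∈ ⋃ i, U i
  · obtain ⟨i, hi⟩ := mem_iUnion.1 hωU
    rw [condExpOver_of_mem hU.disjoint _ hi]
    exact (hoscU i).norm_sub_setAverage_le (hint i) (hU.measurableSet i) (hU.measure_pos i)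
      (hU.measure_lt_top i) hi
  · have hgω : g ω = 0 := Function.notMem_support.1 fun h ↦ hωU (hω (hsupp h))
    simp [condExpOver_of_notMem _ hωU, hgω]

end AveragingFamily

theorem statement5_general {Ω κ : Type*} [MeasurableSpace Ω] {μ : Measure Ω} [Fintype κ]
    {E : κ → Type*} [∀ k, NormedAddCommGroup (E k)] [∀ k, NormedSpace ℝ (E k)]
    [∀ k, CompleteSpace (E k)] {h : ∀ k, Ω → E k} (hh : ∀ k, AEFinStronglyMeasurable (h k) μ)
    {ε : ℝ} (hε : 0 < ε) :
    ∃ (ι : Type) (_ : Countable ι) (U : ι → Set Ω), IsAveragingFamily μ U ∧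
      (∀ k i, IntegrableOn (h k) (U i) μ) ∧
      ∀ k, ∀ᵐ ω ∂μ, ‖h k ω - condExpOver μ U (h k) ω‖ ≤ ε * ∑ j, ‖h j ω‖ := by
  let f : Ω → PiLp 1 E := fun ω ↦ WithLp.toLp 1 fun k ↦ h k ω
  have hf : AEFinStronglyMeasurable f μ := continuous_comp_aefinStronglyMeasurable
    (aefinStronglyMeasurable_pi hh) (PiLp.continuous_toLp 1 E) (WithLp.toLp_zero 1)
  obtain ⟨ι, hι, U, hU, hint, hle⟩ := exists_norm_sub_condExpOver_le hf hε
  refine ⟨ι, hι, U, hU, fun k i ↦ (hint i).eval_piLp k, fun k ↦ ?_⟩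
  have hcoord (ω : Ω) : condExpOver μ U f ω k = condExpOver μ U (h k) ω :=
    map_condExpOver (PiLp.proj (𝕜 := ℝ) 1 E k) hU.disjoint hint ω
  filter_upwards [hle] with ω hω
  calc ‖h k ω - condExpOver μ U (h k) ω‖ = ‖(f ω - condExpOver μ U f ω) k‖ := by
        rw [← hcoord, PiLp.sub_apply]
    _ ≤ ‖f ω - condExpOver μ U f ω‖ := PiLp.norm_apply_le _ k
    _ ≤ ε * ‖f ω‖ := hω
    _ = ε * ∑ j, ‖h j ω‖ := by rw [PiLp.norm_eq_of_L1]

/-- Given finitely many functions `h₁, …, hₙ` on a σ-finite measure space, each integrable on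
sets of finite measure, and `ε > 0`, there is a countable family `𝒰 = (Uᵢ)` of pairwise
disjoint measurable sets of finite positive measure such that a.e.
`|h_k − P_𝒰 h_k| ≤ ε · Σ_j |h_j|` for each `k`, where
`P_𝒰 f = Σᵢ (μ(Uᵢ)⁻¹ ∫_{Uᵢ} f dμ) · χ_{Uᵢ}` is the conditional expectation over `𝒰`. -/
theorem statement5 {Ω : Type*} [MeasurableSpace Ω] (μ : Measure Ω) [SigmaFinite μ]
    (n : ℕ) (h : Fin n → Ω → ℝ) (hmeas : ∀ k, Measurable (h k))
    (hint : ∀ (k : Fin n) (A : Set Ω), MeasurableSet A → μ A < ⊤ → IntegrableOn (h k) A μ)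
    (ε : ℝ) (hε : 0 < ε) :
    ∃ (ι : Type) (_ : Countable ι) (U : ι → Set Ω),
      (∀ i, MeasurableSet (U i)) ∧
      Pairwise (Function.onFun Disjoint U) ∧
      (∀ i, 0 < μ (U i) ∧ μ (U i) < ⊤) ∧
      ∀ k : Fin n, ∀ᵐ ω ∂μ,
        |h k ω - ∑' i : ι, Set.indicator (U i)
            (fun _ => (∫ x in U i, h k x ∂μ) / (μ (U i)).toReal) ω|
          ≤ ε * ∑ j : Fin n, |h j ω| := by
  obtain ⟨ι, hι, U, hU, -, hle⟩ := statement5_general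
    (fun k ↦ ((hmeas k).stronglyMeasurable.finStronglyMeasurable μ).aefinStronglyMeasurable) hε
  exact ⟨ι, hι, U, hU.measurableSet, hU.disjoint, fun i ↦ ⟨hU.measure_pos i, hU.measure_lt_top i⟩,
    by simpa only [condExpOver, setAverage_eq, smul_eq_mul, div_eq_inv_mul, Real.norm_eq_abs,
      measureReal_def] using hle⟩
end
end

section
/- Let (Ω, Σ, μ) be a measure space and 1 < r < p < ∞. For measurable f, h : Ω → ℝ define ‖f‖_{L^{p,∞}_r(μ)} = sup{μ(A)^{(1/p)−(1/r)}(∫_A |f|^r dμ)^{1/r} : A ∈ Σ, 0 < μ(A) < ∞} and, for a measure ν on Σ, ‖h‖_{L^{p,∞}_1(ν)} = sup{ν(A)^{(1/p)−1} ∫_A |h| dν : A ∈ Σ, 0 < ν(A) < ∞}; let L^{p,∞}_r(μ) and L^{p,∞}_1(ν) denote the corresponding Banach lattices of (a.e.-classes of) functions with finite norm, ordered a.e. pointwise. Then there exist an index set Γ, measures ν_γ on Σ, and vector lattice homomorphisms S_γ : L^{p,∞}_r(μ) → L^{p,∞}_1(ν_γ) with ‖S_γ‖ ≤ 1 for all γ,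 such that sup_{γ∈Γ} ‖S_γ f‖_{L^{p,∞}_1(ν_γ)} = ‖f‖_{L^{p,∞}_r(μ)} for every f ∈ L^{p,∞}_r(μ); that is, L^{p,∞}_r(μ) embeds lattice isometrically into the ℓ∞-sum (⊕_{γ∈Γ} L^{p,∞}_1(ν_γ))_∞. -/
open MeasureTheory

noncomputable section

/-- The set of values whose supremum is the norm
`‖f‖_{L^{p,∞}_r(μ)} = sup {μ(A)^{1/p−1/r} (∫_A |f|^r dμ)^{1/r} : 0 < μ(A) < ∞}`. -/
def wrSet {Ω : Type*} [MeasurableSpace Ω] (p r : ℝ) (μ : Measure Ω)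
    (f : Ω →ₘ[μ] ℝ) : Set ℝ :=
  {t : ℝ | ∃ A : Set Ω, MeasurableSet A ∧ 0 < μ A ∧ μ A < ⊤ ∧
    t = (μ A).toReal ^ (1/p - 1/r) * (∫ x in A, |f x| ^ r ∂μ) ^ (1/r)}

/-- The set of values whose supremum is the norm
`‖h‖_{L^{p,∞}_1(ν)} = sup {ν(A)^{1/p−1} ∫_A |h| dν : 0 < ν(A) < ∞}`. -/
def w1Set {Ω : Type*} [MeasurableSpace Ω] (p : ℝ) (ν : Measure Ω)
    (h : Ω →ₘ[ν] ℝ) : Set ℝ :=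
  {t : ℝ | ∃ A : Set Ω, MeasurableSet A ∧ 0 < ν A ∧ ν A < ⊤ ∧
    t = (ν A).toReal ^ (1/p - 1) * ∫ x in A, |h x| ∂ν}

/-!
By Young's inequality, `s` bounds the weak norm of order `r` of `f` exactly when
`∫_A ((|f| / c) ^ r - 1)⁺ ≤ C * (s / c) ^ p` for all `c > 0` and all `A` of finite measure, where
`C` depends only on `p / r`. The function `(z ^ r - 1)⁺` of `z ≥ 0` is, up to a factor close to `1`
in the variable `z`, a sum of hinges `t * (v * z - 1)⁺`, and each hinge is the integrand that
belongs to the function `v * |f|`, to the order `1` and to a measure multiplied by `t`. Hence a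
disjoint union of copies of `μ` with weights `t`, on which `f` is represented by `v * f`, carries
the norm of `f` to the weak norm of order `1`.

The copies have to be found inside the given `σ`-algebra. The finite-measure part of `μ` splits into
pieces that are homogeneous in the sense of Maharam. A piece that is not an atom splits further into
countably many parts, each of which can receive a copy of the whole piece by Maharam's embedding
theorem, and infinitely many atoms have room for countably many copies of each of them. If there are
only finitely many atoms, each has a single copy. There `f` is constant, and a single hinge, tangent
to `z ^ r - 1` at the value of `|f|`, is enough; the index `γ` records the points of tangency.
-/

open scoped ENNReal NNReal

/-! ### The weak norm through truncated integrals -/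

/-- The constant `(1 - 1/P)^(P-1) / P` in the sharp form `a * T^(1-1/P) ≤ T + C * a^P` of Young's
inequality; it is the ratio between `a^P` and the largest possible integral of `(h - 1)⁺` when
`∫_A h ≤ a * ν(A)^(1-1/P)` for all `A`. -/
def youngConst (P : ℝ) : ℝ := (1 - 1 / P) ^ (P - 1) / P

lemma one_sub_one_div_pos {P : ℝ} (hP : 1 < P) : 0 < 1 - 1 / P :=
  sub_pos.2 ((div_lt_one (zero_lt_one.trans hP)).2 hP)

lemma youngConst_pos {P : ℝ} (hP : 1 < P) : 0 < youngConst P :=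
  div_pos (Real.rpow_pos_of_pos (one_sub_one_div_pos hP) _) (zero_lt_one.trans hP)

lemma mul_rpow_le_add_youngConst_mul {P a T : ℝ} (hP : 1 < P) (ha : 0 ≤ a) (hT : 0 ≤ T) :
    a * T ^ (1 - 1 / P) ≤ T + youngConst P * a ^ P := by
  have hb := one_sub_one_div_pos hP
  have hP0 : 0 < P := by linarith
  have hexp : (P - 1) * (1 / P) = 1 - 1 / P := by field_simp
  have hmean := Real.geom_mean_le_arith_mean2_weighted hb.le (by positivity : 0 ≤ 1 / P)
    (p₁ := T / (1 - 1 / P)) (p₂ := (1 - 1 / P) ^ (P - 1) * a ^ P)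
    (by positivity) (by positivity) (by ring)
  calc a * T ^ (1 - 1 / P)
      = (T / (1 - 1 / P)) ^ (1 - 1 / P) * ((1 - 1 / P) ^ (P - 1) * a ^ P) ^ (1 / P) := by
        rw [Real.div_rpow hT hb.le, Real.mul_rpow (by positivity) (by positivity),
          ← Real.rpow_mul hb.le, ← Real.rpow_mul ha, hexp, mul_one_div_cancel hP0.ne',
          Real.rpow_one, ← mul_assoc,
          div_mul_cancel₀ _ (Real.rpow_pos_of_pos hb _).ne', mul_comm]
    _ ≤ _ := hmean
    _ = T + youngConst P * a ^ P := by
        rw [mul_div_cancel₀ _ hb.ne', youngConst]; ring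

lemma exists_mul_rpow_eq_add_youngConst_mul {P T : ℝ} (hP : 1 < P) (hT : 0 < T) :
    ∃ a > 0, a * T ^ (1 - 1 / P) = T + youngConst P * a ^ P := by
  have hb := one_sub_one_div_pos hP
  have hP0 : 0 < P := by linarith
  refine ⟨(1 - 1 / P)⁻¹ * T ^ (1 / P), by positivity, ?_⟩
  have hpow : ((1 - 1 / P)⁻¹ * T ^ (1 / P)) ^ P = (1 - 1 / P)⁻¹ ^ P * T := by
    rw [Real.mul_rpow (by positivity) (by positivity), ← Real.rpow_mul hT.le,
      one_div_mul_cancel hP0.ne', Real.rpow_one]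
  have hconst : youngConst P * (1 - 1 / P)⁻¹ ^ P = (1 - 1 / P)⁻¹ / P := by
    rw [youngConst, Real.inv_rpow hb.le, Real.rpow_sub_one hb.ne', div_mul_eq_mul_div,
      div_mul_eq_mul_div, mul_inv_cancel₀ (Real.rpow_pos_of_pos hb P).ne', one_div]
  calc (1 - 1 / P)⁻¹ * T ^ (1 / P) * T ^ (1 - 1 / P)
      = (1 - 1 / P)⁻¹ * T := by
        rw [mul_assoc, ← Real.rpow_add hT, add_sub_cancel, Real.rpow_one]
    _ = T + (1 - 1 / P)⁻¹ / P * T := by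
        have : P - 1 ≠ 0 := by linarith
        field_simp; ring
    _ = _ := by rw [hpow, ← mul_assoc, hconst]

/-- The normalising factor between the truncated integrals that describe the weak norms of
orders `1` and `r`. -/
def youngRatio (p r : ℝ) : ℝ := youngConst p / youngConst (p / r)

lemma youngRatio_pos {p r : ℝ} (hr : 1 < r) (hrp : r < p) : 0 < youngRatio p r :=
  div_pos (youngConst_pos (hr.trans hrp))
    (youngConst_pos ((one_lt_div (zero_lt_one.trans hr)).2 hrp))

lemma youngRatio_mul_youngConst {p r : ℝ} (hr : 0 < r) (hrp : r < p) :
    youngRatio p r * youngConst (p / r) = youngConst p :=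
  div_mul_cancel₀ _ (youngConst_pos ((one_lt_div hr).2 hrp)).ne'

section WeakNorm

variable {Ω : Type*} [MeasurableSpace Ω]

lemma setLIntegral_ofReal_sub_one_add_measure {ν : Measure Ω} {g : Ω → ℝ} (hg : Measurable g)
    {A : Set Ω} (hA : MeasurableSet A) :
    ∫⁻ x in A, ENNReal.ofReal (g x - 1) ∂ν + ν (A ∩ {x | 1 < g x})
      = ∫⁻ x in A ∩ {x | 1 < g x}, ENNReal.ofReal (g x) ∂ν := by
  have hB : MeasurableSet {x | 1 < g x} := measurableSet_lt measurable_const hg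
  have hoff : ∫⁻ x in A \ {x | 1 < g x}, ENNReal.ofReal (g x - 1) ∂ν = 0 :=
    setLIntegral_eq_zero (hA.diff hB) fun x hx =>
      ENNReal.ofReal_of_nonpos (by simpa using hx.2)
  rw [← lintegral_inter_add_sdiff _ A hB, hoff, add_zero, ← setLIntegral_one,
    ← lintegral_add_right _ measurable_const]
  refine setLIntegral_congr_fun (hA.inter hB) fun x hx => ?_
  have hx1 : 1 < g x := hx.2
  rw [← ENNReal.ofReal_one, ← ENNReal.ofReal_add (by linarith) zero_le_one, sub_add_cancel]

lemma setLIntegral_ofReal_le_add_measure {ν : Measure Ω} {g : Ω → ℝ} (A : Set Ω) :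
    ∫⁻ x in A, ENNReal.ofReal (g x) ∂ν ≤ ∫⁻ x in A, ENNReal.ofReal (g x - 1) ∂ν + ν A := by
  rw [← setLIntegral_one, ← lintegral_add_right _ measurable_const]
  refine lintegral_mono fun x => ?_
  calc ENNReal.ofReal (g x) = ENNReal.ofReal (g x - 1 + 1) := by rw [sub_add_cancel]
    _ ≤ ENNReal.ofReal (g x - 1) + 1 := by simpa using ENNReal.ofReal_add_le (p := g x - 1) (q := 1)

lemma lintegral_ofReal_div {ν : Measure Ω} {h : Ω → ℝ} (hm : Measurable h) {c : ℝ} (hc : 0 < c) :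
    ∫⁻ x, ENNReal.ofReal (h x / c) ∂ν = (∫⁻ x, ENNReal.ofReal (h x) ∂ν) / ENNReal.ofReal c := by
  simp only [ENNReal.ofReal_div_of_pos hc, ENNReal.div_eq_inv_mul]
  exact lintegral_const_mul _ hm.ennreal_ofReal

lemma setLIntegral_ofReal_div_sub_one_le {ν : Measure Ω} {h : Ω → ℝ} {P a c : ℝ} (hP : 1 < P)
    (ha : 0 ≤ a) (hm : Measurable h) (hc : 0 < c)
    (H : ∀ A, MeasurableSet A → ν A < ⊤ →
      ∫⁻ x in A, ENNReal.ofReal (h x) ∂ν ≤ ENNReal.ofReal (a * ν.real A ^ (1 - 1 / P)))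
    {A : Set Ω} (hA : MeasurableSet A) (hAfin : ν A < ⊤) :
    ∫⁻ x in A, ENNReal.ofReal (h x / c - 1) ∂ν ≤
      ENNReal.ofReal (youngConst P * (a / c) ^ P) := by
  set B := A ∩ {x | 1 < h x / c}
  have hB : MeasurableSet B := hA.inter (measurableSet_lt measurable_const (hm.div_const c))
  have hBfin : ν B < ⊤ := (measure_mono Set.inter_subset_left).trans_lt hAfin
  have hK := youngConst_pos hP
  refine (ENNReal.add_le_add_iff_right hBfin.ne).1 ?_
  calc ∫⁻ x in A, ENNReal.ofReal (h x / c - 1) ∂ν + ν B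
      = (∫⁻ x in B, ENNReal.ofReal (h x) ∂ν) / ENNReal.ofReal c := by
        rw [setLIntegral_ofReal_sub_one_add_measure (hm.div_const c) hA, lintegral_ofReal_div hm hc]
    _ ≤ ENNReal.ofReal (a * ν.real B ^ (1 - 1 / P)) / ENNReal.ofReal c := by
        gcongr; exact H B hB hBfin
    _ = ENNReal.ofReal (a / c * ν.real B ^ (1 - 1 / P)) := by
        rw [← ENNReal.ofReal_div_of_pos hc]; congr 1; ring
    _ ≤ ENNReal.ofReal (ν.real B + youngConst P * (a / c) ^ P) :=
        ENNReal.ofReal_le_ofReal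
          (mul_rpow_le_add_youngConst_mul hP (by positivity) measureReal_nonneg)
    _ = ENNReal.ofReal (youngConst P * (a / c) ^ P) + ν B := by
        rw [ENNReal.ofReal_add measureReal_nonneg (by positivity), ofReal_measureReal hBfin.ne,
          add_comm]

lemma setLIntegral_ofReal_le_of_div_sub_one_le {ν : Measure Ω} {h : Ω → ℝ} {P a : ℝ} (hP : 1 < P)
    (ha : 0 < a) (hm : Measurable h) {A : Set Ω} (hAfin : ν A < ⊤)
    (H : ∀ c > 0, ∫⁻ x in A, ENNReal.ofReal (h x / c - 1) ∂ν ≤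
      ENNReal.ofReal (youngConst P * (a / c) ^ P)) :
    ∫⁻ x in A, ENNReal.ofReal (h x) ∂ν ≤ ENNReal.ofReal (a * ν.real A ^ (1 - 1 / P)) := by
  rcases eq_or_ne (ν A) 0 with h0 | h0
  · rw [Measure.restrict_eq_zero.2 h0]; simp
  have hA : 0 < ν.real A := ENNReal.toReal_pos h0 hAfin.ne
  obtain ⟨b, hb, hyoung⟩ := exists_mul_rpow_eq_add_youngConst_mul hP hA
  have hK := youngConst_pos hP
  have hab : a / (a / b) = b := by field_simp
  have hc : 0 < a / b := by positivity
  have hdiv : (∫⁻ x in A, ENNReal.ofReal (h x) ∂ν) / ENNReal.ofReal (a / b)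
      ≤ ENNReal.ofReal (b * ν.real A ^ (1 - 1 / P)) := by
    rw [← lintegral_ofReal_div hm hc, hyoung, ENNReal.ofReal_add measureReal_nonneg (by positivity),
      ofReal_measureReal hAfin.ne, add_comm]
    refine (setLIntegral_ofReal_le_add_measure A).trans ?_
    gcongr
    simpa only [hab] using H (a / b) hc
  rw [ENNReal.div_le_iff (by simpa using hc) ENNReal.ofReal_ne_top,
    ← ENNReal.ofReal_mul (by positivity)] at hdiv
  convert hdiv using 2
  field_simp

/-- The truncation of `φ` at the levels `n` bridges the gap between the Bochner integrals of
`wrSet`, which vanish for non-integrable functions, and lower integrals. -/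
lemma lintegral_ofReal_le_of_forall_setLIntegral_le {μ : Measure Ω} {φ : Ω → ℝ} {C : ℝ≥0∞}
    (H : ∀ n : ℕ, ∫⁻ x in {x | φ x ≤ n}, ENNReal.ofReal (φ x) ∂μ ≤ C) :
    ∫⁻ x, ENNReal.ofReal (φ x) ∂μ ≤ C := by
  have hmono : Monotone fun n : ℕ => {x | φ x ≤ n} := fun m n hmn x (hx : φ x ≤ m) =>
    show φ x ≤ n from hx.trans (by exact_mod_cast hmn)
  have hcover : ⋃ n : ℕ, {x | φ x ≤ n} = Set.univ :=
    Set.iUnion_eq_univ_iff.2 fun x => exists_nat_ge (φ x)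
  rw [← setLIntegral_univ, ← hcover, setLIntegral_iUnion_of_directed _ hmono.directed_le]
  exact iSup_le H

variable {μ : Measure Ω} {f : Ω →ₘ[μ] ℝ} {p r s : ℝ}

lemma measurable_abs_rpow (f : Ω →ₘ[μ] ℝ) (r : ℝ) : Measurable fun x => |f x| ^ r :=
  (continuous_abs.measurable.comp f.measurable).pow_const r

lemma rpow_mul_rpow_le_iff {T I : ℝ} (hr : 0 < r) (hrp : r < p) (hs : 0 ≤ s) (hT : 0 < T)
    (hI : 0 ≤ I) :
    T ^ (1 / p - 1 / r) * I ^ (1 / r) ≤ s ↔ I ≤ s ^ r * T ^ (1 - 1 / (p / r)) := by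
  have hp : 0 < p := hr.trans hrp
  have hexp : (1 / p - 1 / r) * r = -(1 - 1 / (p / r)) := by field_simp; ring
  rw [← Real.rpow_le_rpow_iff (by positivity) hs hr, Real.mul_rpow (by positivity) (by positivity),
    ← Real.rpow_mul hT.le, ← Real.rpow_mul hI, hexp, one_div_mul_cancel hr.ne', Real.rpow_one,
    Real.rpow_neg hT.le, inv_mul_le_iff₀ (by positivity), mul_comm]

lemma mem_upperBounds_wrSet_iff_setLIntegral (hr : 0 < r) (hrp : r < p) (hs : 0 ≤ s) :
    s ∈ upperBounds (wrSet p r μ f) ↔ ∀ A, MeasurableSet A → μ A < ⊤ →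
      ∫⁻ x in A, ENNReal.ofReal (|f x| ^ r) ∂μ ≤
        ENNReal.ofReal (s ^ r * μ.real A ^ (1 - 1 / (p / r))) := by
  have hm := measurable_abs_rpow f r
  have hnonneg (x : Ω) : 0 ≤ |f x| ^ r := by positivity
  have hexp : 0 ≤ 1 - 1 / (p / r) := (one_sub_one_div_pos ((one_lt_div hr).2 hrp)).le
  constructor
  · intro H A hA hAfin
    refine lintegral_ofReal_le_of_forall_setLIntegral_le fun n => ?_
    have hlevel : MeasurableSet {x | |f x| ^ r ≤ n} := measurableSet_le hm measurable_const
    rw [Measure.restrict_restrict hlevel, Set.inter_comm]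
    set B := A ∩ {x | |f x| ^ r ≤ n}
    have hB : MeasurableSet B := hA.inter hlevel
    have hBfin : μ B < ⊤ := (measure_mono Set.inter_subset_left).trans_lt hAfin
    have hint : IntegrableOn (fun x => |f x| ^ r) B μ :=
      Measure.integrableOn_of_bounded (M := n) hBfin.ne hm.aestronglyMeasurable <|
        (ae_restrict_iff' hB).2 <| .of_forall fun x hx =>
          (Real.norm_of_nonneg (hnonneg x)).trans_le hx.2
    rw [← ofReal_integral_eq_lintegral_ofReal hint (.of_forall hnonneg)]
    refine ENNReal.ofReal_le_ofReal ?_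
    rcases eq_or_ne (μ B) 0 with h0 | h0
    · rw [Measure.restrict_eq_zero.2 h0, integral_zero_measure]; positivity
    · refine ((rpow_mul_rpow_le_iff hr hrp hs (ENNReal.toReal_pos h0 hBfin.ne)
        (integral_nonneg hnonneg)).1 (H ⟨B, hB, pos_iff_ne_zero.2 h0, hBfin, rfl⟩)).trans ?_
      have hBA : μ.real B ≤ μ.real A := measureReal_mono Set.inter_subset_left hAfin.ne
      gcongr
      exact hBA
  · rintro H t ⟨A, hA, hA0, hAfin, rfl⟩
    refine (rpow_mul_rpow_le_iff hr hrp hs (ENNReal.toReal_pos hA0.ne' hAfin.ne)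
      (integral_nonneg hnonneg)).2 ?_
    rw [integral_eq_lintegral_of_nonneg_ae (.of_forall hnonneg) hm.aestronglyMeasurable]
    exact ENNReal.toReal_le_of_le_ofReal (by positivity) (H A hA hAfin)

lemma mem_upperBounds_wrSet_iff (hr : 0 < r) (hrp : r < p) (hs : 0 < s) :
    s ∈ upperBounds (wrSet p r μ f) ↔ ∀ c > 0, ∀ A, MeasurableSet A → μ A < ⊤ →
      ∫⁻ x in A, ENNReal.ofReal ((|f x| / c) ^ r - 1) ∂μ ≤
        ENNReal.ofReal (youngConst (p / r) * (s / c) ^ p) := by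
  have hP : 1 < p / r := (one_lt_div hr).2 hrp
  have hm := measurable_abs_rpow f r
  have hdiv (x : Ω) {c : ℝ} (hc : 0 < c) : (|f x| / c) ^ r = |f x| ^ r / c ^ r :=
    Real.div_rpow (abs_nonneg _) hc.le r
  have hbound {c : ℝ} (hc : 0 < c) : (s / c) ^ p = (s ^ r / c ^ r) ^ (p / r) := by
    rw [← Real.div_rpow hs.le hc.le, ← Real.rpow_mul (by positivity), mul_div_cancel₀ _ hr.ne']
  rw [mem_upperBounds_wrSet_iff_setLIntegral hr hrp hs.le]
  constructor
  · intro H c hc A hA hAfin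
    simp only [hdiv _ hc, hbound hc]
    exact setLIntegral_ofReal_div_sub_one_le hP (by positivity) hm (by positivity) H hA hAfin
  · intro H A hA hAfin
    refine setLIntegral_ofReal_le_of_div_sub_one_le hP (by positivity) hm hAfin fun c hc => ?_
    have hroot : 0 < c ^ (1 / r) := by positivity
    have hc' : (c ^ (1 / r)) ^ r = c := by
      rw [← Real.rpow_mul hc.le, one_div_mul_cancel hr.ne', Real.rpow_one]
    simpa only [hdiv _ hroot, hbound hroot, hc'] using H _ hroot A hA hAfin

lemma w1Set_eq_wrSet_one (p : ℝ) (ν : Measure Ω) (h : Ω →ₘ[ν] ℝ) :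
    w1Set p ν h = wrSet p 1 ν h := by
  simp only [w1Set, wrSet, Real.rpow_one, div_one]

lemma nonneg_of_mem_wrSet {t : ℝ} (ht : t ∈ wrSet p r μ f) : 0 ≤ t := by
  obtain ⟨A, -, -, -, rfl⟩ := ht
  have : 0 ≤ ∫ x in A, |f x| ^ r ∂μ := integral_nonneg fun x => by positivity
  positivity

lemma nonneg_of_mem_w1Set {ν : Measure Ω} {h : Ω →ₘ[ν] ℝ} {t : ℝ} (ht : t ∈ w1Set p ν h) :
    0 ≤ t :=
  nonneg_of_mem_wrSet (w1Set_eq_wrSet_one p ν h ▸ ht)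

lemma tsum_setLIntegral_le {ν : Measure Ω} {ψ : Ω → ℝ≥0∞} {C : ℝ≥0∞}
    (H : ∀ A, MeasurableSet A → ν A < ⊤ → ∫⁻ x in A, ψ x ∂ν ≤ C)
    {J : Type*} {T : J → Set Ω} (hT : ∀ j, MeasurableSet (T j)) (hTfin : ∀ j, ν (T j) < ⊤)
    (hdisj : Pairwise (Function.onFun (AEDisjoint ν) T)) :
    ∑' j, ∫⁻ x in T j, ψ x ∂ν ≤ C := by
  rw [ENNReal.tsum_eq_iSup_sum]
  refine iSup_le fun F => ?_
  rw [← lintegral_biUnion_finset₀ (fun i _ j _ hij => hdisj hij)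
    fun j _ => (hT j).nullMeasurableSet]
  exact H _ (F.measurableSet_biUnion fun j _ => hT j)
    (measure_biUnion_lt_top F.finite_toSet fun j _ => hTfin j)

end WeakNorm

/-! ### Approximating `z ^ r - 1` by positive parts of affine functions -/

/-- Coefficients of the positive parts `(x / q^k - 1)⁺` whose sum is the piecewise linear function
interpolating the points `(q^k, (ρ * q)^k - 1)`: the chord over `[q^k, q^(k+1)]` has slope
`(ρ * q - 1) / (q - 1) * ρ^k`, and each coefficient is `q^k` times the jump of the slope. -/
def hingeCoeff (q ρ : ℝ) : ℕ → ℝ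
  | 0 => (ρ * q - 1) / (q - 1)
  | k + 1 => (ρ * q - 1) / (q - 1) * (ρ ^ (k + 1) - ρ ^ k) * q ^ (k + 1)

section Hinge

variable {q ρ r x : ℝ}

lemma chordSlope_pos (hq : 1 < q) (hρ : 1 < ρ) : 0 < (ρ * q - 1) / (q - 1) :=
  div_pos (by nlinarith) (by linarith)

lemma hingeCoeff_pos (hq : 1 < q) (hρ : 1 < ρ) : ∀ k, 0 < hingeCoeff q ρ k
  | 0 => chordSlope_pos hq hρ
  | k + 1 => mul_pos (mul_pos (chordSlope_pos hq hρ)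
      (sub_pos.2 (pow_lt_pow_right₀ hρ k.lt_succ_self))) (by positivity)

lemma sum_hingeCoeff_mul (hq : 1 < q) (n : ℕ) :
    ∑ k ∈ Finset.range (n + 1), hingeCoeff q ρ k * (x / q ^ k - 1)
      = (ρ * q - 1) / (q - 1) * ρ ^ n * (x - q ^ n) + (ρ * q) ^ n - 1 := by
  have : q ≠ 0 := by positivity
  have : q - 1 ≠ 0 := by linarith
  induction n with
  | zero => simp [hingeCoeff]
  | succ n ih =>
    rw [Finset.sum_range_succ, ih, hingeCoeff]
    field_simp
    ring

lemma tsum_ofReal_hingeCoeff_mul (hq : 1 < q) (hρ : 1 < ρ) {n : ℕ} (hle : q ^ n ≤ x)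
    (hlt : x < q ^ (n + 1)) :
    ∑' k, ENNReal.ofReal (hingeCoeff q ρ k * (x / q ^ k - 1))
      = ENNReal.ofReal ((ρ * q - 1) / (q - 1) * ρ ^ n * (x - q ^ n) + (ρ * q) ^ n - 1) := by
  rw [← sum_hingeCoeff_mul hq, ENNReal.ofReal_sum_of_nonneg]
  · refine tsum_eq_sum fun k hk => ENNReal.ofReal_of_nonpos ?_
    have hqk : q ^ (n + 1) ≤ q ^ k := pow_le_pow_right₀ hq.le (by simpa using hk)
    exact mul_nonpos_of_nonneg_of_nonpos (hingeCoeff_pos hq hρ k).le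
      (sub_nonpos.2 ((div_le_one (by positivity)).2 (hlt.le.trans hqk)))
  · intro k hk
    have hqk : q ^ k ≤ q ^ n := pow_le_pow_right₀ hq.le (by simpa [Nat.lt_succ_iff] using hk)
    exact mul_nonneg (hingeCoeff_pos hq hρ k).le
      (sub_nonneg.2 ((one_le_div (by positivity)).2 (hqk.trans hle)))

lemma tsum_ofReal_hingeCoeff_mul_of_le_one (hq : 1 < q) (hρ : 1 < ρ) (hx1 : x ≤ 1) :
    ∑' k, ENNReal.ofReal (hingeCoeff q ρ k * (x / q ^ k - 1)) = 0 := by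
  refine ENNReal.tsum_eq_zero.2 fun k => ENNReal.ofReal_of_nonpos ?_
  have hxk : x / q ^ k ≤ 1 := div_le_one_of_le₀ (hx1.trans (one_le_pow₀ hq.le)) (by positivity)
  exact mul_nonpos_of_nonneg_of_nonpos (hingeCoeff_pos hq hρ k).le (sub_nonpos.2 hxk)

lemma tsum_ofReal_hingeCoeff_mul_mem_Icc (hq : 1 < q) (hr : 1 < r) (hx : 0 ≤ x) :
    ∑' k, ENNReal.ofReal (hingeCoeff q (q ^ (r - 1)) k * (x / q ^ k - 1)) ∈
      Set.Icc (ENNReal.ofReal ((x / q) ^ r - 1)) (ENNReal.ofReal ((x * q) ^ r - 1)) := by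
  have hq0 : 0 < q := by linarith
  have hr0 : 0 ≤ r := by linarith
  set ρ := q ^ (r - 1)
  have hρ : 1 < ρ := Real.one_lt_rpow hq (by linarith)
  rcases lt_or_ge x 1 with hx1 | hx1
  · rw [tsum_ofReal_hingeCoeff_mul_of_le_one hq hρ hx1.le]
    refine ⟨(ENNReal.ofReal_of_nonpos (sub_nonpos.2 ?_)).le, zero_le⟩
    exact Real.rpow_le_one (by positivity) ((div_le_one hq0).2 (hx1.le.trans hq.le)) hr0
  obtain ⟨n, hle, hlt⟩ := exists_nat_pow_near hx1 hq
  have hnode (k : ℕ) : (ρ * q) ^ k = (q ^ k) ^ r := by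
    rw [← Real.rpow_add_one hq0.ne', sub_add_cancel, Real.rpow_pow_comm hq0.le]
  have hσ := chordSlope_pos hq hρ
  rw [tsum_ofReal_hingeCoeff_mul hq hρ hle hlt]
  constructor <;> refine ENNReal.ofReal_le_ofReal ?_
  · have hbelow : (x / q) ^ r ≤ (ρ * q) ^ n := by
      rw [hnode]
      refine Real.rpow_le_rpow (by positivity) ?_ hr0
      rw [div_le_iff₀ hq0, ← pow_succ]
      exact hlt.le
    have : 0 ≤ (ρ * q - 1) / (q - 1) * ρ ^ n * (x - q ^ n) :=
      mul_nonneg (by positivity) (by linarith)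
    linarith
  · have habove : (ρ * q) ^ (n + 1) ≤ (x * q) ^ r := by
      rw [hnode]
      refine Real.rpow_le_rpow (by positivity) ?_ hr0
      rw [pow_succ]
      gcongr
    have hchord : (ρ * q - 1) / (q - 1) * ρ ^ n * (q ^ (n + 1) - q ^ n)
        = (ρ * q) ^ (n + 1) - (ρ * q) ^ n := by
      have : q - 1 ≠ 0 := by linarith
      field_simp
      ring
    have : (ρ * q - 1) / (q - 1) * ρ ^ n * (x - q ^ n)
        ≤ (ρ * q - 1) / (q - 1) * ρ ^ n * (q ^ (n + 1) - q ^ n) := by gcongr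
    linarith

lemma exists_tsum_hinge_mem_Icc (hr : 1 < r) (hq : 1 < q) :
    ∃ t v : ℕ → ℝ, (∀ k, 0 < t k) ∧ (∀ k, 0 < v k) ∧ ∀ z, 0 ≤ z →
      ∑' k, ENNReal.ofReal (t k * (v k * z - 1)) ∈
        Set.Icc (ENNReal.ofReal ((z / q ^ 2) ^ r - 1)) (ENNReal.ofReal (z ^ r - 1)) := by
  have hq0 : 0 < q := by linarith
  refine ⟨hingeCoeff q (q ^ (r - 1)), fun k => (q ^ (k + 1))⁻¹,
    hingeCoeff_pos hq (Real.one_lt_rpow hq (by linarith)), fun k => by positivity, fun z hz => ?_⟩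
  have hscale (k : ℕ) : (q ^ (k + 1))⁻¹ * z = z / q / q ^ k := by
    rw [div_div, ← pow_succ', inv_mul_eq_div]
  have hmem := tsum_ofReal_hingeCoeff_mul_mem_Icc hq hr (div_nonneg hz hq0.le)
  rw [div_mul_cancel₀ _ hq0.ne', div_div, ← sq] at hmem
  simpa only [hscale] using hmem

/-- The affine function `t * (v * z - 1)` is the tangent of `z ^ r - 1` at `max 1 z₀`. -/
lemma exists_affine_le_rpow_sub_one (hr : 1 < r) (z₀ : ℝ) :
    ∃ t v : ℝ, 0 < t ∧ 0 < v ∧ (∀ z, 0 ≤ z → t * (v * z - 1) ≤ z ^ r - 1) ∧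
      (1 ≤ z₀ → z₀ ^ r - 1 ≤ t * (v * z₀ - 1)) := by
  set y := max 1 z₀
  have hy : 0 < y := zero_lt_one.trans_le (le_max_left _ _)
  have hr1 : 0 < r - 1 := by linarith
  have ht : 0 < (r - 1) * y ^ r + 1 := by positivity
  have hsub : y ^ (r - 1) = y ^ r / y := Real.rpow_sub_one hy.ne' r
  have hform (z : ℝ) : ((r - 1) * y ^ r + 1) * (r * y ^ (r - 1) / ((r - 1) * y ^ r + 1) * z - 1)
      = (1 + r * (z / y - 1)) * y ^ r - 1 := by
    rw [hsub]
    field_simp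
    ring
  refine ⟨(r - 1) * y ^ r + 1, r * y ^ (r - 1) / ((r - 1) * y ^ r + 1), ht, by positivity,
    fun z hz => ?_, fun hz => ?_⟩
  · have hbernoulli : 1 + r * (z / y - 1) ≤ (1 + (z / y - 1)) ^ r :=
      one_add_mul_self_le_rpow_one_add (by linarith [div_nonneg hz hy.le]) hr.le
    rw [add_sub_cancel, Real.div_rpow hz hy.le, le_div_iff₀ (by positivity)] at hbernoulli
    linarith [hform z]
  · have hyz : y = z₀ := max_eq_right hz
    rw [hform, ← hyz, div_self hy.ne']
    simp

end Hinge

/-! ### Extreme points and relatively atomless measures -/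

section ExtremePoints

variable {E : Type*} [NormedAddCommGroup E]

lemma surjective_inclusionInDoubleDual [InnerProductSpace ℝ E] [CompleteSpace E] :
    Function.Surjective (NormedSpace.inclusionInDoubleDual ℝ E) := by
  intro Φ
  let Λ : StrongDual ℝ E := LinearMap.mkContinuous
    { toFun := fun x => Φ (InnerProductSpace.toDual ℝ E x)
      map_add' := fun x y => by rw [map_add, map_add]
      map_smul' := fun c x => by rw [LinearIsometryEquiv.map_smulₛₗ, map_smul]; rfl }
    ‖Φ‖ fun x => (Φ.le_opNorm _).trans_eq (by rw [LinearIsometryEquiv.norm_map])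
  refine ⟨(InnerProductSpace.toDual ℝ E).symm Λ, ContinuousLinearMap.ext fun ℓ => ?_⟩
  obtain ⟨x, rfl⟩ := (InnerProductSpace.toDual ℝ E).surjective ℓ
  rw [NormedSpace.dual_def, InnerProductSpace.toDual_apply_apply, real_inner_comm,
    ← InnerProductSpace.toDual_apply_apply, LinearIsometryEquiv.apply_symm_apply]
  rfl

/-- Closed convex sets are weakly closed and, by reflexivity, bounded weakly closed sets are weakly
compact, so the Krein–Milman theorem applies in the weak topology. -/
lemma extremePoints_nonempty_of_isClosed_of_isBounded [NormedSpace ℝ E]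
    (hE : Function.Surjective (NormedSpace.inclusionInDoubleDual ℝ E)) {K : Set E}
    (hne : K.Nonempty) (hconvex : Convex ℝ K) (hclosed : IsClosed K)
    (hbdd : Bornology.IsBounded K) : (K.extremePoints ℝ).Nonempty := by
  have hcompact : IsCompact (toWeakSpace ℝ E '' K) := by
    rw [← hclosed.closure_eq, hconvex.toWeakSpace_closure ℝ]
    refine NormedSpace.isCompact_closure_of_isBounded ℝ E _ ?_ ?_
    · rwa [Set.preimage_image_eq _ (toWeakSpace ℝ E).injective]
    · refine fun Φ _ => (hE (WeakDual.toStrongDual Φ)).imp fun x hx => ?_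
      exact WeakDual.toStrongDual.injective hx
  have : LocallyConvexSpace ℝ (WeakSpace ℝ E) :=
    inferInstanceAs (LocallyConvexSpace ℝ (WeakBilin (topDualPairing ℝ E).flip))
  have hext := hcompact.extremePoints_nonempty (hne.image _)
  rw [← image_extremePoints] at hext
  exact hext.of_image

end ExtremePoints

/-- `m` generates the σ-algebra of measurable sets up to `μ`-null sets. -/
def GeneratesMod {Ω : Type*} (m : MeasurableSpace Ω) {_ : MeasurableSpace Ω}
    (μ : Measure Ω) : Prop :=
  ∀ F, MeasurableSet F → ∃ G, MeasurableSet[m] G ∧ F =ᵐ[μ] G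

/-- `μ` is atomless relative to the sub-σ-algebra `m`: on no set of positive measure does `m`
generate the measurable sets. For the trivial `m` this says that `μ` has no atoms. -/
def IsRelAtomless {Ω : Type*} (m : MeasurableSpace Ω) {_ : MeasurableSpace Ω}
    (μ : Measure Ω) : Prop :=
  ∀ E, MeasurableSet E → μ E ≠ 0 → ¬ GeneratesMod m (μ.restrict E)

/-- The densities `0 ≤ g ≤ 1` in `L²` with the same integral as `h` over every set of `m`. -/
def relDensities {Ω : Type*} (m : MeasurableSpace Ω) {_ : MeasurableSpace Ω} (μ : Measure Ω)
    [IsFiniteMeasure μ] (h : Ω → ℝ) : Set (Lp ℝ 2 μ) :=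
  Set.Icc 0 (Lp.const 2 μ 1) ∩
    {g | ∀ A, MeasurableSet[m] A → ∫ x in A, g x ∂μ = ∫ x in A, h x ∂μ}

section RelAtomless

variable {Ω : Type*} {m m0 : MeasurableSpace Ω} {μ : Measure Ω} [IsFiniteMeasure μ] {h : Ω → ℝ}

lemma setIntegral_mul_condExp_sub_eq_zero (hm : m ≤ m0) {e f : Ω → ℝ} (he : Integrable e μ)
    (hf : Integrable f μ) (hfe : Integrable (f * μ[e | m]) μ) (hef : Integrable (e * μ[f | m]) μ)
    {A : Set Ω} (hA : MeasurableSet[m] A) :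
    ∫ x in A, (f x * μ[e | m] x - e x * μ[f | m] x) ∂μ = 0 := by
  have hcond : ∫ x in A, (f * μ[e | m]) x ∂μ = ∫ x in A, (e * μ[f | m]) x ∂μ := by
    rw [← setIntegral_condExp hm hfe hA, ← setIntegral_condExp hm hef hA]
    refine setIntegral_congr_ae (hm _ hA) ?_
    filter_upwards [condExp_mul_of_stronglyMeasurable_right stronglyMeasurable_condExp hfe hf,
      condExp_mul_of_stronglyMeasurable_right stronglyMeasurable_condExp hef he] with x h₁ h₂ _
    rw [h₁, h₂, Pi.mul_apply, Pi.mul_apply, mul_comm]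
  exact (integral_sub hfe.integrableOn hef.integrableOn).trans (sub_eq_zero.2 hcond)

lemma ae_condExp_pos (hm : m ≤ m0) {e : Ω → ℝ} (he : Integrable e μ) (he0 : 0 ≤ᵐ[μ] e) :
    ∀ᵐ x ∂μ, 0 < e x → 0 < μ[e | m] x := by
  have hZ : MeasurableSet[m] {x | μ[e | m] x ≤ 0} :=
    (stronglyMeasurable_condExp (μ := μ) (f := e)).measurable measurableSet_Iic
  have hint : ∫ x in {x | μ[e | m] x ≤ 0}, e x ∂μ = 0 := by
    refine le_antisymm ?_ (setIntegral_nonneg_of_ae he0)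
    rw [← setIntegral_condExp hm he hZ]
    exact setIntegral_nonpos (hm _ hZ) fun x hx => hx
  rw [setIntegral_eq_zero_iff_of_nonneg_ae (ae_restrict_of_ae he0) he.integrableOn,
    Filter.EventuallyEq, ae_restrict_iff' (hm _ hZ)] at hint
  filter_upwards [hint] with x hx hpos
  by_contra hle
  exact hpos.ne' (hx (not_lt.1 hle))

lemma ae_condExp_mem_Icc (hm : m ≤ m0) {e : Ω → ℝ} (he : Integrable e μ)
    (he01 : ∀ᵐ x ∂μ, e x ∈ Set.Icc 0 1) : ∀ᵐ x ∂μ, μ[e | m] x ∈ Set.Icc 0 1 := by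
  have hle : μ[e | m] ≤ᵐ[μ] μ[fun _ => (1 : ℝ) | m] :=
    condExp_mono he (integrable_const _) (he01.mono fun x hx => hx.2)
  rw [condExp_const hm] at hle
  filter_upwards [condExp_nonneg (m := m) (he01.mono fun x hx => hx.1), hle] with x h0 h1
  exact ⟨h0, h1⟩

lemma integrable_mul_of_mem_Icc {a b : Ω → ℝ} (ha : Measurable a) (hb : Measurable b)
    (ha01 : ∀ᵐ x ∂μ, a x ∈ Set.Icc 0 1) (hb01 : ∀ᵐ x ∂μ, b x ∈ Set.Icc 0 1) :
    Integrable (a * b) μ := by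
  refine Integrable.of_bound (ha.mul hb).aestronglyMeasurable 1 ?_
  filter_upwards [ha01, hb01] with x hax hbx
  rw [Pi.mul_apply, Real.norm_of_nonneg (mul_nonneg hax.1 hbx.1)]
  exact mul_le_one₀ hax.2 hbx.1 hbx.2

/-- With `f` the restriction of `e` to a set `F` which is not in `m` up to null sets, the
perturbation is `f * μ[e | m] - e * μ[f | m]`. -/
lemma exists_perturbation (hm : m ≤ m0) (hμ : IsRelAtomless m μ) {e : Ω → ℝ}
    (he : Measurable e) (he01 : ∀ᵐ x ∂μ, e x ∈ Set.Icc 0 1) (hpos : μ {x | 0 < e x} ≠ 0) :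
    ∃ w : Ω → ℝ, Measurable w ∧ (∀ᵐ x ∂μ, |w x| ≤ e x) ∧ ¬ w =ᵐ[μ] 0 ∧
      ∀ A, MeasurableSet[m] A → ∫ x in A, w x ∂μ = 0 := by
  have hE : MeasurableSet {x | 0 < e x} := measurableSet_lt measurable_const he
  obtain ⟨F, hF, hFG⟩ := not_forall₂.1 (hμ _ hE hpos)
  push Not at hFG
  set f := F.indicator e
  have hf : Measurable f := he.indicator hF
  have hf01 : ∀ᵐ x ∂μ, f x ∈ Set.Icc 0 1 := by
    filter_upwards [he01] with x hx
    by_cases hxF : x ∈ F <;> simp [f, hxF, hx.1, hx.2]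
  have hei : Integrable e μ := by
    simpa using integrable_mul_of_mem_Icc he measurable_one he01 (.of_forall fun _ => by simp)
  have hfi : Integrable f μ := hei.indicator hF
  have hcm (g : Ω → ℝ) : Measurable μ[g | m] := (stronglyMeasurable_condExp.mono hm).measurable
  have hce01 := ae_condExp_mem_Icc hm hei he01
  have hcf01 := ae_condExp_mem_Icc hm hfi hf01
  refine ⟨fun x => f x * μ[e | m] x - e x * μ[f | m] x,
    (hf.mul (hcm e)).sub (he.mul (hcm f)), ?_, fun h0 => ?_, fun A hA =>
      setIntegral_mul_condExp_sub_eq_zero hm hei hfi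
        (integrable_mul_of_mem_Icc hf (hcm e) hf01 hce01)
        (integrable_mul_of_mem_Icc he (hcm f) he01 hcf01) hA⟩
  · filter_upwards [he01, hce01, hcf01] with x hex hce hcf
    have hfe : f x ≤ e x := Set.indicator_le_self' (fun _ _ => hex.1) x
    have hf0 : 0 ≤ f x := Set.indicator_apply_nonneg fun _ => hex.1
    have h₁ := mul_le_of_le_one_right hf0 hce.2
    have h₂ := mul_le_of_le_one_right hex.1 hcf.2
    rw [abs_le]
    constructor <;> linarith [mul_nonneg hf0 hce.1, mul_nonneg hex.1 hcf.1]
  · refine hFG {x | 0 < μ[f | m] x}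
      ((stronglyMeasurable_condExp (μ := μ) (f := f)).measurable measurableSet_Ioi) ?_
    refine (ae_restrict_iff' hE).2 ?_
    filter_upwards [h0, ae_condExp_pos hm hei (he01.mono fun x hx => hx.1)] with x hx hce hex
    have hce := hce hex
    have hbal : f x * μ[e | m] x = e x * μ[f | m] x := sub_eq_zero.1 hx
    refine propext (show x ∈ F ↔ 0 < μ[f | m] x from ?_)
    rw [← mul_pos_iff_of_pos_left (b := μ[f | m] x) hex, ← hbal, mul_pos_iff_of_pos_right hce]
    by_cases hxF : x ∈ F <;> simp [f, hxF, show 0 < e x from hex]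

lemma mem_relDensities_iff {g : Lp ℝ 2 μ} :
    g ∈ relDensities m μ h ↔ (∀ᵐ x ∂μ, g x ∈ Set.Icc 0 1) ∧
      ∀ A, MeasurableSet[m] A → ∫ x in A, g x ∂μ = ∫ x in A, h x ∂μ := by
  refine and_congr_left' ?_
  rw [Set.mem_Icc, ← Lp.coeFn_nonneg, ← Lp.coeFn_le]
  have hconst := Lp.coeFn_const (p := 2) (μ := μ) (c := (1 : ℝ))
  refine ⟨fun ⟨h0, h1⟩ => ?_, fun h01 => ⟨h01.mono fun x hx => hx.1, ?_⟩⟩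
  · filter_upwards [h0, h1, hconst] with x h0 h1 hc
    exact ⟨h0, h1.trans_eq hc⟩
  · filter_upwards [h01, hconst] with x hx hc
    exact hx.2.trans_eq hc.symm

lemma toLp_mem_relDensities (hL : MemLp h 2 μ) (h01 : ∀ᵐ x ∂μ, h x ∈ Set.Icc 0 1) :
    hL.toLp h ∈ relDensities m μ h := by
  refine mem_relDensities_iff.2 ⟨?_, fun A _ => integral_congr_ae (ae_restrict_of_ae hL.coeFn_toLp)⟩
  filter_upwards [hL.coeFn_toLp, h01] with x hx hx01
  rwa [hx]

lemma continuous_setIntegral_Lp_two {A : Set Ω} (hA : MeasurableSet A) :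
    Continuous fun g : Lp ℝ 2 μ => ∫ x in A, g x ∂μ := by
  simp only [← L2.inner_indicatorConstLp_one (𝕜 := ℝ) hA (measure_ne_top μ A)]
  fun_prop

lemma setIntegral_smul_add_smul {A : Set Ω} (a b : ℝ) (g g' : Lp ℝ 2 μ) (hA : MeasurableSet A) :
    ∫ x in A, (a • g + b • g' : Lp ℝ 2 μ) x ∂μ
      = a * ∫ x in A, g x ∂μ + b * ∫ x in A, g' x ∂μ := by
  simp only [← L2.inner_indicatorConstLp_one (𝕜 := ℝ) hA (measure_ne_top μ A),
    inner_add_right, real_inner_smul_right]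

lemma convex_relDensities (hm : m ≤ m0) : Convex ℝ (relDensities m μ h) := by
  intro g hg g' hg' a b ha hb hab
  rw [mem_relDensities_iff] at hg hg' ⊢
  refine ⟨?_, fun A hA => ?_⟩
  · filter_upwards [hg.1, hg'.1, Lp.coeFn_add (a • g) (b • g'), Lp.coeFn_smul a g,
      Lp.coeFn_smul b g'] with x hx hx' hadd hsmul hsmul'
    rw [hadd, Pi.add_apply, hsmul, hsmul']
    exact convex_Icc 0 1 hx hx' ha hb hab
  · rw [setIntegral_smul_add_smul _ _ _ _ (hm _ hA), hg.2 A hA, hg'.2 A hA, ← add_mul, hab, one_mul]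

lemma extremePoints_relDensities_nonempty (hm : m ≤ m0) (hL : MemLp h 2 μ)
    (h01 : ∀ᵐ x ∂μ, h x ∈ Set.Icc 0 1) :
    ((relDensities m μ h).extremePoints ℝ).Nonempty := by
  refine extremePoints_nonempty_of_isClosed_of_isBounded surjective_inclusionInDoubleDual
    ⟨_, toLp_mem_relDensities hL h01⟩ (convex_relDensities hm) ?_ ?_
  · refine isClosed_Icc.inter ?_
    simp only [Set.ofPred_forall]
    exact isClosed_iInter fun A => isClosed_iInter fun hA =>
      isClosed_eq (continuous_setIntegral_Lp_two (hm _ hA)) continuous_const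
  · refine (Metric.isBounded_closedBall (x := 0) (r := ‖Lp.const 2 μ (1 : ℝ)‖)).subset
      fun g hg => mem_closedBall_zero_iff.2 (norm_le_norm_of_abs_le_abs ?_)
    rw [abs_of_nonneg hg.1.1, abs_of_nonneg (hg.1.1.trans hg.1.2)]
    exact hg.1.2

lemma add_toLp_mem_relDensities (hm : m ≤ m0) {g : Lp ℝ 2 μ} (hg : g ∈ relDensities m μ h)
    {w : Ω → ℝ} (hw : MemLp w 2 μ) (hwg : ∀ᵐ x ∂μ, |w x| ≤ min (g x) (1 - g x))
    (hwA : ∀ A, MeasurableSet[m] A → ∫ x in A, w x ∂μ = 0) :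
    g + hw.toLp w ∈ relDensities m μ h := by
  obtain ⟨-, hgA⟩ := mem_relDensities_iff.1 hg
  refine mem_relDensities_iff.2 ⟨?_, fun A hA => ?_⟩
  · filter_upwards [Lp.coeFn_add g (hw.toLp w), hw.coeFn_toLp, hwg] with x hadd hwx hle
    rw [hadd, Pi.add_apply, hwx]
    obtain ⟨h₁, h₂⟩ := abs_le.1 hle
    constructor <;> linarith [min_le_left (g x) (1 - g x), min_le_right (g x) (1 - g x)]
  · have hadd := setIntegral_smul_add_smul 1 1 g (hw.toLp w) (hm _ hA)
    rwa [one_smul, one_smul, one_mul, one_mul, hgA A hA,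
      integral_congr_ae (ae_restrict_of_ae hw.coeFn_toLp), hwA A hA, add_zero] at hadd

lemma ae_eq_zero_of_mem_extremePoints_relDensities (hm : m ≤ m0) {g : Lp ℝ 2 μ}
    (hg : g ∈ (relDensities m μ h).extremePoints ℝ) {w : Ω → ℝ} (hw : Measurable w)
    (hwg : ∀ᵐ x ∂μ, |w x| ≤ min (g x) (1 - g x))
    (hwA : ∀ A, MeasurableSet[m] A → ∫ x in A, w x ∂μ = 0) : w =ᵐ[μ] 0 := by
  have hL : MemLp w 2 μ := by
    refine MemLp.of_bound hw.aestronglyMeasurable 1 ?_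
    filter_upwards [hwg] with x hx
    rw [Real.norm_eq_abs]
    linarith [min_le_left (g x) (1 - g x), min_le_right (g x) (1 - g x)]
  have hplus := add_toLp_mem_relDensities hm hg.1 hL hwg hwA
  have hminus := add_toLp_mem_relDensities hm hg.1 hL.neg (by simpa using hwg)
    fun A hA => by simp [integral_neg, hwA A hA]
  rw [MemLp.toLp_neg hL] at hminus
  have hmid : g ∈ openSegment ℝ (g + hL.toLp w) (g + -hL.toLp w) :=
    ⟨1 / 2, 1 / 2, by norm_num, by norm_num, by norm_num, by module⟩
  have hzero : hL.toLp w = 0 := by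
    simpa using ((mem_extremePoints.1 hg).2 _ hplus _ hminus hmid).1
  exact (MemLp.toLp_eq_toLp_iff hL MemLp.zero).1 (hzero.trans (MemLp.toLp_zero _).symm)

lemma ae_eq_zero_or_one_of_mem_extremePoints (hm : m ≤ m0) (hμ : IsRelAtomless m μ)
    {g : Lp ℝ 2 μ} (hg : g ∈ (relDensities m μ h).extremePoints ℝ) :
    ∀ᵐ x ∂μ, g x = 0 ∨ g x = 1 := by
  obtain ⟨hg01, -⟩ := mem_relDensities_iff.1 hg.1
  have hgm : Measurable g := (Lp.stronglyMeasurable g).measurable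
  have hnull : μ {x | 0 < min (g x) (1 - g x)} = 0 := by
    by_contra hpos
    obtain ⟨w, hw, hwg, hw0, hwA⟩ := exists_perturbation hm hμ
      (hgm.min (measurable_const.sub hgm))
      (hg01.mono fun x hx => ⟨le_min hx.1 (sub_nonneg.2 hx.2), min_le_of_left_le hx.2⟩) hpos
    exact hw0 (ae_eq_zero_of_mem_extremePoints_relDensities hm hg hw hwg hwA)
  filter_upwards [hg01, measure_eq_zero_iff_ae_notMem.1 hnull] with x hx hmin
  rcases min_le_iff.1 (not_lt.1 hmin) with h0 | h1
  · exact .inl (le_antisymm h0 hx.1)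
  · exact .inr (le_antisymm hx.2 (sub_nonpos.1 h1))

/-- A relative form of Lyapunov's theorem: the extreme densities are indicators. -/
lemma IsRelAtomless.exists_measureReal_inter_eq (hm : m ≤ m0) (hμ : IsRelAtomless m μ)
    (hh : Measurable h) (h01 : ∀ᵐ x ∂μ, h x ∈ Set.Icc 0 1) :
    ∃ B, MeasurableSet B ∧
      ∀ A, MeasurableSet[m] A → μ.real (B ∩ A) = ∫ x in A, h x ∂μ := by
  have hL : MemLp h 2 μ := MemLp.of_bound hh.aestronglyMeasurable 1
    (h01.mono fun x hx => (Real.norm_of_nonneg hx.1).trans_le hx.2)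
  obtain ⟨g, hg⟩ := extremePoints_relDensities_nonempty hm hL h01
  have hB : MeasurableSet {x | g x = 1} :=
    (Lp.stronglyMeasurable g).measurable (measurableSet_singleton 1)
  refine ⟨{x | g x = 1}, hB, fun A hA => ?_⟩
  have hind : g =ᵐ[μ] {x | g x = 1}.indicator 1 := by
    filter_upwards [ae_eq_zero_or_one_of_mem_extremePoints hm hμ hg] with x hx
    rcases hx with hx | hx <;> simp [Set.indicator, hx]
  rw [← (mem_relDensities_iff.1 hg.1).2 A hA, integral_congr_ae (ae_restrict_of_ae hind),
    integral_indicator_one hB, measureReal_restrict_apply hB]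

end RelAtomless

/-! ### Maharam types and transfers of measurable functions -/

/-- A transfer of measurable functions from `(α, μ)` to `(β, ν)`: it preserves distributions and
commutes almost everywhere with measurable operations. This is the effect on functions of a
measure-preserving embedding of the measure algebra of `μ` into that of `ν`. -/
structure Transfer {α β : Type*} [MeasurableSpace α] [MeasurableSpace β] (μ : Measure α)
    (ν : Measure β) where
  /-- The underlying map; its values on non-measurable functions are irrelevant. -/
  toFun : (α → ℝ) → β → ℝ
  measurable {f : α → ℝ} : Measurable f → Measurable (toFun f)
  map_eq {f : α → ℝ} : Measurable f → ν.map (toFun f) = μ.map f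
  ae_eq_comp₂ {Φ : ℝ × ℝ → ℝ} {f g h : α → ℝ} : Measurable Φ → Measurable f → Measurable g →
    Measurable h → (h =ᵐ[μ] fun x => Φ (f x, g x)) →
      toFun h =ᵐ[ν] fun y => Φ (toFun f y, toFun g y)

section Transfer

variable {α β E : Type*} [MeasurableSpace α] [MeasurableSpace β] [MeasurableSpace E]
  {μ : Measure α} {ν : Measure β}

lemma Transfer.lintegral_comp (T : Transfer μ ν) {φ : ℝ → ℝ≥0∞} (hφ : Measurable φ) {f : α → ℝ}
    (hf : Measurable f) : ∫⁻ y, φ (T.toFun f y) ∂ν = ∫⁻ x, φ (f x) ∂μ := by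
  rw [← lintegral_map hφ (T.measurable hf), T.map_eq hf, lintegral_map hφ hf]

/-- If every function on `α` factors through `X`, then `g ∘ X ↦ g ∘ Y` is a transfer. -/
lemma nonempty_transfer_of_map_eq {X : α → E} {Y : β → E} (hX : Measurable X) (hY : Measurable Y)
    (hXY : μ.map X = ν.map Y)
    (hfactor : ∀ f : α → ℝ, Measurable f → ∃ g : E → ℝ, Measurable g ∧ f =ᵐ[μ] g ∘ X) :
    Nonempty (Transfer μ ν) := by
  choose! g hg hfg using hfactor
  refine ⟨⟨fun f => g f ∘ Y, fun hf => (hg _ hf).comp hY, fun {f} hf => ?_,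
    fun {Φ f₁ f₂ f₃} hΦ h₁ h₂ h₃ heq => ?_⟩⟩
  · rw [← Measure.map_map (hg f hf) hY, ← hXY, Measure.map_map (hg f hf) hX]
    exact Measure.map_congr (hfg f hf).symm
  · have hS : MeasurableSet {y | g f₃ y = Φ (g f₁ y, g f₂ y)} :=
      measurableSet_eq_fun (hg f₃ h₃) (hΦ.comp ((hg f₁ h₁).prodMk (hg f₂ h₂)))
    refine (ae_map_iff hY.aemeasurable hS).1 (hXY ▸ (ae_map_iff hX.aemeasurable hS).2 ?_)
    filter_upwards [heq, hfg f₁ h₁, hfg f₂ h₂, hfg f₃ h₃] with x hx hx₁ hx₂ hx₃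
    simp only [Function.comp_apply] at hx₁ hx₂ hx₃
    rw [← hx₁, ← hx₂, ← hx₃, hx]

end Transfer

section Codes

variable {α β E : Type*} [MeasurableSpace α] [MeasurableSpace β] [MeasurableSpace E]
  {μ : Measure α} {ν : Measure β}

/-- The membership code of a point with respect to a family of sets. -/
def memCode {Ω J : Type*} (a : J → Set Ω) (x : Ω) (j : J) : Prop := x ∈ a j

lemma generateFrom_range_eq_comap_memCode {Ω J : Type*} (a : J → Set Ω) :
    MeasurableSpace.generateFrom (Set.range a) = MeasurableSpace.pi.comap (memCode a) := by
  rw [← Set.iUnion_singleton_eq_range, ← MeasurableSpace.iSup_generateFrom, MeasurableSpace.pi,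
    MeasurableSpace.comap_iSup]
  simp only [MeasurableSpace.generateFrom_singleton, MeasurableSpace.comap_comp]
  rfl

lemma measurable_memCode {Ω J : Type*} {_ : MeasurableSpace Ω} {a : J → Set Ω}
    (ha : ∀ j, MeasurableSet (a j)) : Measurable (memCode a) :=
  measurable_pi_iff.2 fun j => measurableSet_setOfPred.1 (ha j)

lemma injective_memCode_Iio_rat : Function.Injective (memCode fun q : ℚ => Set.Iio (q : ℝ)) := by
  intro x y hxy
  by_contra hne
  wlog hlt : x < y generalizing x y
  · exact this hxy.symm (Ne.symm hne) ((not_lt.1 hlt).lt_of_ne' hne)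
  obtain ⟨q, hxq, hqy⟩ := exists_rat_btwn hlt
  exact hqy.not_gt ((iff_of_eq (congr_fun hxy q)).1 hxq)

/-- A real function is determined by the sets `{x | f x < q}` with `q` rational, each of which may
be replaced by a set of `m`. -/
lemma GeneratesMod.exists_ae_eq {Ω : Type*} {m m0 : MeasurableSpace Ω} {μ : Measure Ω}
    (h : GeneratesMod m μ) {f : Ω → ℝ} (hf : Measurable f) :
    ∃ g : Ω → ℝ, Measurable[m] g ∧ f =ᵐ[μ] g := by
  have hcode := (measurable_memCode fun q : ℚ =>
    (measurableSet_Iio : MeasurableSet (Set.Iio (q : ℝ)))).measurableEmbedding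
    injective_memCode_Iio_rat
  obtain ⟨decode, hdecode, hid⟩ := hcode.exists_measurable_extend measurable_id fun _ => ⟨0⟩
  choose G hG hfG using fun q : ℚ => h _ (hf (measurableSet_Iio (a := (q : ℝ))))
  refine ⟨decode ∘ memCode G, hdecode.comp (measurable_memCode hG), ?_⟩
  filter_upwards [ae_all_iff.2 hfG] with x hx
  rw [Function.comp_apply, show memCode G x = memCode (fun q : ℚ => Set.Iio (q : ℝ)) (f x) from
    funext fun q => (hx q).symm]
  exact (congr_fun hid (f x)).symm

lemma measurableSet_forall_mem_finset {J : Type*} (F : Finset J) :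
    MeasurableSet {x : J → Prop | ∀ j ∈ F, x j} := by
  simp only [Set.ofPred_forall]
  exact F.measurableSet_biInter fun j _ => measurableSet_setOfPred.2 (measurable_pi_apply j)

lemma memCode_preimage_forall {Ω J : Type*} (a : J → Set Ω) (F : Finset J) :
    memCode a ⁻¹' {x | ∀ j ∈ F, x j} = ⋂ j ∈ F, a j := by
  ext x
  simp [memCode]

lemma map_memCode_eq {J : Type*} [IsFiniteMeasure μ] {a : J → Set α} {b : J → Set β}
    (ha : ∀ j, MeasurableSet (a j)) (hb : ∀ j, MeasurableSet (b j))
    (h : ∀ F : Finset J, μ (⋂ j ∈ F, a j) = ν (⋂ j ∈ F, b j)) :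
    μ.map (memCode a) = ν.map (memCode b) := by
  have hgen : (MeasurableSpace.pi : MeasurableSpace (J → Prop)) = MeasurableSpace.generateFrom
      (piiUnionInter (fun j => {{x : J → Prop | x j}}) Set.univ) := by
    rw [generateFrom_piiUnionInter_singleton_left]
    have hid := generateFrom_range_eq_comap_memCode fun j => {x : J → Prop | x j}
    rw [show memCode (fun j => {x : J → Prop | x j}) = id from rfl, MeasurableSpace.comap_id] at hid
    simpa only [Set.mem_univ, true_and, Set.range] using hid.symm
  have hcyl (F : Finset J) :
      μ.map (memCode a) {x | ∀ j ∈ F, x j} = ν.map (memCode b) {x | ∀ j ∈ F, x j} := by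
    have hF := measurableSet_forall_mem_finset F
    rw [Measure.map_apply (measurable_memCode ha) hF, Measure.map_apply (measurable_memCode hb) hF,
      memCode_preimage_forall, memCode_preimage_forall, h]
  refine ext_of_generate_finite _ hgen
    (isPiSystem_piiUnionInter _ (fun _ => IsPiSystem.singleton _) _) ?_ (by simpa using hcyl ∅)
  rw [piiUnionInter_singleton_left]
  rintro _ ⟨F, -, rfl⟩
  simpa only [Set.ofPred_forall] using hcyl F

/-- One more set can be matched: its density relative to `X` is transported to `β`, where it is
the density of a set. -/
lemma exists_map_restrict_eq [IsFiniteMeasure μ] [IsFiniteMeasure ν] {X : α → E} {Y : β → E}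
    (hX : Measurable X) (hY : Measurable Y) (hXY : μ.map X = ν.map Y)
    (hν : IsRelAtomless (MeasurableSpace.comap Y inferInstance) ν) (A : Set α) :
    ∃ B, MeasurableSet B ∧ (μ.restrict A).map X = (ν.restrict B).map Y := by
  set ρ := (μ.restrict A).map X
  have hρ : ρ ≤ ν.map Y := hXY ▸ Measure.map_mono Measure.restrict_le_self hX
  have hk : Measurable fun y => (ρ.rnDeriv (ν.map Y) y).toReal :=
    (Measure.measurable_rnDeriv _ _).ennreal_toReal
  have hk01 : ∀ᵐ x ∂ν, (ρ.rnDeriv (ν.map Y) (Y x)).toReal ∈ Set.Icc 0 1 := by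
    filter_upwards [ae_of_ae_map hY.aemeasurable (Measure.rnDeriv_le_one_of_le hρ)] with x hx
    exact ⟨ENNReal.toReal_nonneg, ENNReal.toReal_mono ENNReal.one_ne_top hx⟩
  obtain ⟨B, hB, hBS⟩ := hν.exists_measureReal_inter_eq hY.comap_le (hk.comp hY) hk01
  refine ⟨B, hB, Measure.ext fun S hS => ?_⟩
  have hS' := hBS (Y ⁻¹' S) ⟨S, hS, rfl⟩
  simp only [Function.comp_apply] at hS'
  rw [← setIntegral_map hS hk.aestronglyMeasurable hY.aemeasurable,
    Measure.setIntegral_toReal_rnDeriv hρ.absolutelyContinuous] at hS'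
  rw [← measureReal_eq_measureReal_iff, ← hS', map_measureReal_apply hY hS,
    measureReal_restrict_apply (hY hS), Set.inter_comm]

lemma exists_forall_of_forall_lt {ι T : Type*} [LinearOrder ι] [WellFoundedLT ι] [Nonempty T]
    {P : ι → (ι → T) → T → Prop}
    (hcongr : ∀ i c c' B, (∀ j < i, c j = c' j) → P i c B → P i c' B)
    (hstep : ∀ i c, (∀ j < i, P j c (c j)) → ∃ B, P i c B) : ∃ c, ∀ i, P i c (c i) := by
  classical
  let extend (i : ι) (c : ∀ j, j < i → T) : ι → T :=
    fun j => if h : j < i then c j h else Classical.arbitrary T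
  let c : ι → T := wellFounded_lt.fix fun i c => Classical.epsilon (P i (extend i c))
  refine ⟨c, fun i => wellFounded_lt.induction (C := fun i => P i c (c i)) i fun i ih => ?_⟩
  have hext (j : ι) (hj : j < i) : c j = extend i (fun j _ => c j) j := by
    simp only [extend, dif_pos hj]
  obtain ⟨B, hB⟩ := hstep i c ih
  refine hcongr i _ _ _ (fun j hj => (hext j hj).symm) ?_
  rw [show c i = Classical.epsilon (P i (extend i fun j _ => c j)) from wellFounded_lt.fix_eq _ _]
  exact Classical.epsilon_spec ⟨B, hcongr i _ _ _ hext hB⟩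

lemma measure_biInter_eq_of_forall_lt {ι : Type*} [LinearOrder ι] {a : ι → Set α} {b : ι → Set β}
    (huniv : μ Set.univ = ν Set.univ) {G : Set ι}
    (h : ∀ i ∈ G, ∀ F : Finset ι, (∀ j ∈ F, j < i) →
      μ (a i ∩ ⋂ j ∈ F, a j) = ν (b i ∩ ⋂ j ∈ F, b j))
    (F : Finset ι) (hF : ∀ j ∈ F, j ∈ G) : μ (⋂ j ∈ F, a j) = ν (⋂ j ∈ F, b j) := by
  rcases F.eq_empty_or_nonempty with rfl | hne
  · simpa using huniv
  · have hmax := F.max'_mem hne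
    rw [← Finset.insert_erase hmax, Finset.set_biInter_insert, Finset.set_biInter_insert]
    exact h _ (hF _ hmax) _ fun j hj => (F.le_max' j (Finset.mem_of_mem_erase hj)).lt_of_ne
      (Finset.ne_of_mem_erase hj)

lemma biInter_finset_subtype {Ω ι : Type*} {p : ι → Prop} [DecidablePred p] (a : ι → Set Ω)
    {F : Finset ι} (hF : ∀ j ∈ F, p j) : ⋂ j ∈ F.subtype p, a j = ⋂ j ∈ F, a j := by
  ext x
  simpa using forall_congr' fun j => ⟨fun h hj => h (hF j hj) hj, fun h _ hj => h hj⟩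

lemma exists_map_memCode_eq [IsFiniteMeasure μ] [IsFiniteMeasure ν]
    (huniv : μ Set.univ = ν Set.univ) {ι : Type*} [LinearOrder ι] [WellFoundedLT ι]
    {a : ι → Set α} (ha : ∀ i, MeasurableSet (a i))
    (hν : ∀ i, ∀ b : ι → Set β, (∀ j < i, MeasurableSet (b j)) →
      IsRelAtomless (MeasurableSpace.generateFrom (Set.range fun j : Set.Iio i => b j)) ν) :
    ∃ b : ι → Set β, (∀ i, MeasurableSet (b i)) ∧ μ.map (memCode a) = ν.map (memCode b) := by
  suffices ∃ b : ι → Set β, ∀ i, MeasurableSet (b i) ∧ ∀ F : Finset ι, (∀ j ∈ F, j < i) →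
      μ (a i ∩ ⋂ j ∈ F, a j) = ν (b i ∩ ⋂ j ∈ F, b j) by
    obtain ⟨b, hb⟩ := this
    exact ⟨b, fun i => (hb i).1, map_memCode_eq ha (fun i => (hb i).1) fun F =>
      measure_biInter_eq_of_forall_lt huniv (fun i _ => (hb i).2) F fun j _ => Set.mem_univ j⟩
  refine exists_forall_of_forall_lt (P := fun i b B => MeasurableSet B ∧ ∀ F : Finset ι,
    (∀ j ∈ F, j < i) → μ (a i ∩ ⋂ j ∈ F, a j) = ν (B ∩ ⋂ j ∈ F, b j)) ?_ ?_
  · refine fun i b b' B hbb' hB => ⟨hB.1, fun F hF => (hB.2 F hF).trans ?_⟩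
    rw [Set.iInter₂_congr fun j hj => hbb' j (hF j hj)]
  · intro i b hb
    have hbm (j : Set.Iio i) : MeasurableSet (b j) := (hb j j.2).1
    have hlaw : μ.map (memCode fun j : Set.Iio i => a j)
        = ν.map (memCode fun j : Set.Iio i => b j) := by
      refine map_memCode_eq (fun j => ha j) hbm fun F => ?_
      simpa using measure_biInter_eq_of_forall_lt huniv (G := Set.Iio i) (fun j hj => (hb j hj).2)
        (F.map (.subtype _)) (by simpa using fun j hj _ => hj)
    have hX : Measurable (memCode fun j : Set.Iio i => a j) := measurable_memCode fun j => ha j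
    have hY : Measurable (memCode fun j : Set.Iio i => b j) := measurable_memCode hbm
    have hνi := hν i b fun j hj => (hb j hj).1
    rw [generateFrom_range_eq_comap_memCode] at hνi
    obtain ⟨B, hB, hlawB⟩ := exists_map_restrict_eq hX hY hlaw hνi (a i)
    refine ⟨B, hB, fun F (hFi : ∀ j ∈ F, j ∈ Set.Iio i) => ?_⟩
    have hcyl := measurableSet_forall_mem_finset (F.subtype (· ∈ Set.Iio i))
    have hval := congrArg (fun ρ => ρ {x | ∀ j ∈ F.subtype (· ∈ Set.Iio i), x j}) hlawB
    beta_reduce at hval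
    rwa [Measure.map_apply hX hcyl, Measure.map_apply hY hcyl, Measure.restrict_apply (hX hcyl),
      Measure.restrict_apply (hY hcyl), memCode_preimage_forall, memCode_preimage_forall,
      biInter_finset_subtype a hFi, biInter_finset_subtype b hFi, Set.inter_comm,
      Set.inter_comm _ B] at hval

end Codes

section MaharamType

universe u

variable {α β : Type u} [MeasurableSpace α] [MeasurableSpace β] {μ : Measure α} {ν : Measure β}

/-- The Maharam type of `μ`: the least cardinality of a family of measurable sets that generates
the measurable sets up to null sets. -/
def maharamType {α : Type u} [m0 : MeasurableSpace α] (μ : Measure α) : Cardinal.{u} :=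
  ⨅ 𝒜 : {𝒜 : Set (Set α) // MeasurableSpace.generateFrom 𝒜 ≤ m0 ∧
    GeneratesMod (MeasurableSpace.generateFrom 𝒜) μ}, Cardinal.mk 𝒜.1

lemma maharamType_congr {μ' : Measure α} (h : ae μ = ae μ') : maharamType μ = maharamType μ' := by
  unfold maharamType GeneratesMod
  rw [h]

lemma exists_mk_eq_maharamType {α : Type u} [m0 : MeasurableSpace α] (μ : Measure α) :
    ∃ 𝒜 : Set (Set α), MeasurableSpace.generateFrom 𝒜 ≤ m0 ∧
      GeneratesMod (MeasurableSpace.generateFrom 𝒜) μ ∧ Cardinal.mk 𝒜 = maharamType μ := by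
  have : Nonempty {𝒜 : Set (Set α) // MeasurableSpace.generateFrom 𝒜 ≤ m0 ∧
      GeneratesMod (MeasurableSpace.generateFrom 𝒜) μ} :=
    ⟨{s | MeasurableSet s}, MeasurableSpace.generateFrom_measurableSet.le, fun F hF =>
      ⟨F, MeasurableSpace.measurableSet_generateFrom hF, ae_eq_refl _⟩⟩
  obtain ⟨𝒜, h𝒜⟩ := ciInf_mem fun 𝒜 : {𝒜 : Set (Set α) // MeasurableSpace.generateFrom 𝒜 ≤ m0 ∧
    GeneratesMod (MeasurableSpace.generateFrom 𝒜) μ} => Cardinal.mk 𝒜.1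
  exact ⟨𝒜.1, 𝒜.2.1, 𝒜.2.2, h𝒜⟩

lemma maharamType_le {α : Type u} [m0 : MeasurableSpace α] {μ : Measure α} {𝒜 : Set (Set α)}
    (hle : MeasurableSpace.generateFrom 𝒜 ≤ m0)
    (hgen : GeneratesMod (MeasurableSpace.generateFrom 𝒜) μ) : maharamType μ ≤ Cardinal.mk 𝒜 :=
  ciInf_le' _ (⟨𝒜, hle, hgen⟩ : {𝒜 : Set (Set α) // MeasurableSpace.generateFrom 𝒜 ≤ m0 ∧
    GeneratesMod (MeasurableSpace.generateFrom 𝒜) μ})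

/-- Maharam's embedding theorem. A generating family of minimal cardinality is well ordered so that
each initial segment is too small to generate on any part of `β`. -/
lemma nonempty_transfer_of_maharamType_le [IsFiniteMeasure μ] [IsFiniteMeasure ν]
    (huniv : μ Set.univ = ν Set.univ)
    (h : ∀ E, MeasurableSet E → ν E ≠ 0 → maharamType μ ≤ maharamType (ν.restrict E)) :
    Nonempty (Transfer μ ν) := by
  obtain ⟨𝒜, h𝒜, hgen, hcard⟩ := exists_mk_eq_maharamType μ
  obtain ⟨_, _, hord⟩ := Cardinal.exists_ord_eq_type_lt 𝒜
  have ha (i : 𝒜) : MeasurableSet i.1 := h𝒜 _ (MeasurableSpace.measurableSet_generateFrom i.2)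
  obtain ⟨b, hb, hab⟩ := exists_map_memCode_eq huniv ha fun i b hb E hE hE0 hgenE => by
    have hle := (h E hE hE0).trans (maharamType_le (MeasurableSpace.generateFrom_le ?_) hgenE)
    · rw [← hcard] at hle
      exact (Cardinal.mk_range_le.trans_lt (Cardinal.mk_Iio_lt i hord)).not_ge hle
    · rintro _ ⟨j, rfl⟩
      exact hb j j.2
  refine nonempty_transfer_of_map_eq (measurable_memCode ha) (measurable_memCode hb) hab
    fun f hf => ?_
  obtain ⟨g, hg, hfg⟩ := hgen.exists_ae_eq hf
  rw [← Subtype.range_coe (s := 𝒜), generateFrom_range_eq_comap_memCode] at hg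
  obtain ⟨k, hk, rfl⟩ := hg.exists_eq_measurable_comp
  exact ⟨k, hk, hfg⟩

end MaharamType

/-! ### Decomposition into homogeneous pieces -/

section Decomposition

universe u

variable {Ω : Type u} [MeasurableSpace Ω] {μ : Measure Ω} {A D E S : Set Ω}

/-- `S` can host copies of `D`: no part of `S` has smaller Maharam type than `D`, which is what an
embedding of the measure algebra of `D` into that of `S` requires. -/
structure IsHost (μ : Measure Ω) (D S : Set Ω) : Prop where
  measurableSet : MeasurableSet S
  measure_ne_zero : μ S ≠ 0
  measure_ne_top : μ S ≠ ⊤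
  maharamType_le : ∀ E, MeasurableSet E → E ⊆ S → μ E ≠ 0 →
    maharamType (μ.restrict D) ≤ maharamType (μ.restrict E)

lemma IsHost.mono (h : IsHost μ D S) (hE : MeasurableSet E) (hES : E ⊆ S) (hE0 : μ E ≠ 0) :
    IsHost μ D E where
  measurableSet := hE
  measure_ne_zero := hE0
  measure_ne_top := measure_ne_top_of_subset hES h.measure_ne_top
  maharamType_le F hF hFE := h.maharamType_le F hF (hFE.trans hES)

/-- Maharam homogeneity of a measurable set of positive finite measure: its non-null measurable
subsets all have the Maharam type of the whole set. -/
abbrev IsHomogeneous (μ : Measure Ω) (D : Set Ω) : Prop := IsHost μ D D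

lemma exists_isHomogeneous_subset (hA : MeasurableSet A) (h0 : μ A ≠ 0) (htop : μ A ≠ ⊤) :
    ∃ D ⊆ A, IsHomogeneous μ D := by
  let types : Set Cardinal.{u} :=
    {κ | ∃ E, MeasurableSet E ∧ E ⊆ A ∧ μ E ≠ 0 ∧ maharamType (μ.restrict E) = κ}
  obtain ⟨D, hD, hDA, hD0, hmin⟩ := csInf_mem (s := types) ⟨_, A, hA, subset_rfl, h0, rfl⟩
  refine ⟨D, hDA, hD, hD0, measure_ne_top_of_subset hDA htop, fun E hE hED hE0 => ?_⟩
  rw [hmin]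
  exact csInf_le' ⟨E, hE, hED.trans hDA, hE0, rfl⟩

/-- A partition of the finite-measure part of the space, up to null sets, into homogeneous
pieces. The pieces need not be countably many, so their union need not be measurable. -/
structure IsHomogeneousPartition (μ : Measure Ω) (W : Set (Set Ω)) : Prop where
  isHomogeneous : ∀ D ∈ W, IsHomogeneous μ D
  aedisjoint : W.Pairwise (AEDisjoint μ)
  measure_eq_zero : ∀ A, MeasurableSet A → μ A ≠ ⊤ → (∀ D ∈ W, μ (A ∩ D) = 0) → μ A = 0

lemma exists_isHomogeneousPartition (μ : Measure Ω) : ∃ W, IsHomogeneousPartition μ W := by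
  obtain ⟨W, hW⟩ := zorn_subset {W | (∀ D ∈ W, IsHomogeneous μ D) ∧ W.Pairwise (AEDisjoint μ)}
    fun c hc hchain => ⟨⋃₀ c, ⟨fun D ⟨V, hV, hDV⟩ => (hc hV).1 D hDV,
      (Set.pairwise_sUnion hchain.directedOn).2 fun V hV => (hc hV).2⟩,
      fun V hV => Set.subset_sUnion_of_mem hV⟩
  refine ⟨W, hW.prop.1, hW.prop.2, fun A hA hAtop hAD => ?_⟩
  by_contra hA0
  obtain ⟨E, hEA, hE⟩ := exists_isHomogeneous_subset hA hA0 hAtop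
  have hED : ∀ D ∈ W, AEDisjoint μ E D := fun D hD =>
    measure_mono_null (Set.inter_subset_inter_left _ hEA) (hAD D hD)
  have hEW : E ∈ W := hW.le_of_ge
    ⟨Set.forall_mem_insert.2 ⟨hE, hW.prop.1⟩,
      hW.prop.2.insert fun D hD _ => ⟨hED D hD, (hED D hD).symm⟩⟩
    (Set.subset_insert _ _) (Set.mem_insert _ _)
  exact hE.measure_ne_zero (by simpa only [AEDisjoint, Set.inter_self] using hED E hEW)

/-- The restriction of `μ` to `S`, rescaled to give `S` the mass `μ D`. -/
def scaledRestrict (μ : Measure Ω) (D S : Set Ω) : Measure Ω := (μ D / μ S) • μ.restrict S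

lemma scaledRestrict_absolutelyContinuous (μ : Measure Ω) (D S : Set Ω) :
    scaledRestrict μ D S ≪ μ :=
  Measure.smul_absolutelyContinuous.trans Measure.restrict_le_self.absolutelyContinuous

lemma IsHost.nonempty_transfer (h : IsHost μ D S) (hD0 : μ D ≠ 0) (hD : μ D ≠ ⊤) :
    Nonempty (Transfer (μ.restrict D) (scaledRestrict μ D S)) := by
  have : IsFiniteMeasure (μ.restrict D) := isFiniteMeasure_restrict.2 hD
  have : IsFiniteMeasure (μ.restrict S) := isFiniteMeasure_restrict.2 h.measure_ne_top
  have : IsFiniteMeasure (scaledRestrict μ D S) :=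
    Measure.smul_finite _ (ENNReal.div_ne_top hD h.measure_ne_zero)
  refine nonempty_transfer_of_maharamType_le ?_ fun E hE hE0 => ?_
  · simp only [scaledRestrict, Measure.smul_apply, Measure.restrict_apply_univ, smul_eq_mul,
      ENNReal.div_mul_cancel h.measure_ne_zero h.measure_ne_top]
  · have hES : μ (E ∩ S) ≠ 0 := fun h0 => hE0 (by
      rw [scaledRestrict, Measure.smul_apply, Measure.restrict_apply hE, h0, smul_zero])
    rw [scaledRestrict, Measure.restrict_smul, Measure.restrict_restrict hE,
      maharamType_congr (Measure.ae_ennreal_smul_measure_eq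
        (ENNReal.div_ne_zero.2 ⟨hD0, h.measure_ne_top⟩) (μ.restrict (E ∩ S)))]
    exact h.maharamType_le _ (hE.inter h.measurableSet) Set.inter_subset_right hES

/-- Atoms of a measure: every measurable set contains or avoids `D` up to a null set. Null sets
are allowed. -/
def IsMeasureAtom (μ : Measure Ω) (D : Set Ω) : Prop :=
  ∀ E, MeasurableSet E → E =ᵐ[μ.restrict D] (∅ : Set Ω) ∨ E =ᵐ[μ.restrict D] Set.univ

lemma isMeasureAtom_iff_maharamType_eq_zero :
    IsMeasureAtom μ D ↔ maharamType (μ.restrict D) = 0 := by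
  constructor
  · intro hD
    refine nonpos_iff_eq_zero.1 ((maharamType_le (𝒜 := ∅) ?_ fun F hF => ?_).trans_eq
      (Cardinal.mk_eq_zero _))
    · simp only [MeasurableSpace.generateFrom_empty, bot_le]
    · rcases hD F hF with h | h
      exacts [⟨∅, @MeasurableSet.empty _ (_), h⟩, ⟨Set.univ, @MeasurableSet.univ _ (_), h⟩]
  · intro h E hE
    obtain ⟨𝒜, -, hgen, hcard⟩ := exists_mk_eq_maharamType (μ.restrict D)
    rw [h, Cardinal.mk_set_eq_zero_iff] at hcard
    obtain ⟨G, hG, hEG⟩ := hgen E hE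
    rw [hcard, MeasurableSpace.generateFrom_empty, MeasurableSpace.measurableSet_bot_iff] at hG
    rcases hG with rfl | rfl
    exacts [Or.inl hEG, Or.inr hEG]

lemma IsMeasureAtom.exists_ae_eq_const (hD : IsMeasureAtom μ D) {f : Ω → ℝ}
    (hf : Measurable f) : ∃ z, f =ᵐ[μ.restrict D] Function.const Ω z :=
  Filter.exists_eventuallyEq_const_of_forall_separating MeasurableSet fun U hU =>
    (hD (f ⁻¹' U) (hf hU)).symm.imp Filter.eventuallyEq_univ.1 fun h =>
      measure_eq_zero_iff_ae_notMem.1 (ae_eq_empty.1 h)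

lemma IsHomogeneous.exists_subset_of_not_isMeasureAtom (hD : IsHomogeneous μ D)
    (hatom : ¬ IsMeasureAtom μ D) (hE : MeasurableSet E) (hED : E ⊆ D) (hE0 : μ E ≠ 0) :
    ∃ F ⊆ E, MeasurableSet F ∧ μ F ≠ 0 ∧ μ (E \ F) ≠ 0 := by
  have hEatom : ¬ IsMeasureAtom μ E := by
    rw [isMeasureAtom_iff_maharamType_eq_zero] at hatom ⊢
    exact fun h => hatom (nonpos_iff_eq_zero.1 (h ▸ hD.maharamType_le E hE hED hE0))
  simp only [IsMeasureAtom, not_forall, not_or] at hEatom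
  obtain ⟨F, hF, hF0, hF1⟩ := hEatom
  rw [ae_eq_empty, Measure.restrict_apply hF, Set.inter_comm] at hF0
  rw [ae_eq_univ, Measure.restrict_apply hF.compl, Set.inter_comm, ← Set.sdiff_eq] at hF1
  exact ⟨E ∩ F, Set.inter_subset_left, hE.inter hF, hF0, by rwa [Set.sdiff_self_inter]⟩

lemma IsHomogeneous.exists_pairwise_disjoint (hD : IsHomogeneous μ D)
    (hatom : ¬ IsMeasureAtom μ D) :
    ∃ T : ℕ → Set Ω, (∀ k, T k ⊆ D ∧ IsHost μ D (T k)) ∧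
      Pairwise (Function.onFun Disjoint T) := by
  let good : Set (Set Ω) := {E | MeasurableSet E ∧ E ⊆ D ∧ μ E ≠ 0}
  have hsplit : ∀ E : good, ∃ F : good, (F : Set Ω) ⊆ E ∧ μ (E \ F) ≠ 0 := by
    rintro ⟨E, hE, hED, hE0⟩
    obtain ⟨F, hFE, hF, hF0, hEF⟩ := hD.exists_subset_of_not_isMeasureAtom hatom hE hED hE0
    exact ⟨⟨F, hF, hFE.trans hED, hF0⟩, hFE, hEF⟩
  choose next hnext_subset hnext using hsplit
  let R : ℕ → good := fun k => next^[k] ⟨D, hD.measurableSet, subset_rfl, hD.measure_ne_zero⟩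
  have hR : ∀ k, R (k + 1) = next (R k) := fun k => Function.iterate_succ_apply' next k _
  have hanti : Antitone fun k => (R k : Set Ω) := antitone_nat_of_succ_le fun k => by
    simpa only [hR] using hnext_subset (R k)
  have hsub : ∀ k, (R k \ R (k + 1) : Set Ω) ⊆ D := fun k => Set.sdiff_subset.trans (R k).2.2.1
  refine ⟨fun k => R k \ R (k + 1), fun k => ⟨hsub k, hD.mono ((R k).2.1.diff (R (k + 1)).2.1)
    (hsub k) (by simpa only [hR] using hnext (R k))⟩, ?_⟩
  refine (pairwise_disjoint_on _).2 fun k l hkl => Set.disjoint_left.2 fun x hx hx' => ?_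
  exact hx.2 (hanti hkl hx'.1)

lemma IsHomogeneous.isHost_of_isMeasureAtom (hS : IsHomogeneous μ S) (hD : IsMeasureAtom μ D) :
    IsHost μ D S where
  __ := hS
  maharamType_le _ _ _ _ := by simp only [isMeasureAtom_iff_maharamType_eq_zero.1 hD, zero_le]

lemma exists_finset_injOn_prod_nat (α : Type*) :
    ∃ (s : Finset α) (σ : α × ℕ → α), Set.InjOn σ {j | j.1 ∈ s → j.2 = 0} := by
  rcases finite_or_infinite α with hα | hα
  · have := Fintype.ofFinite α
    refine ⟨Finset.univ, Prod.fst, fun j hj l hl hjl => Prod.ext hjl ?_⟩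
    rw [hj (Finset.mem_univ _), hl (Finset.mem_univ _)]
  · have hcard : Cardinal.mk (α × ℕ) = Cardinal.mk α := by
      rw [Cardinal.mk_prod, Cardinal.lift_id', Cardinal.mk_nat, Cardinal.lift_aleph0,
        Cardinal.mul_aleph0_eq (Cardinal.aleph0_le_mk α)]
    obtain ⟨σ⟩ := Cardinal.eq.1 hcard
    exact ⟨∅, σ, σ.injective.injOn⟩

lemma exists_finset_injOn_prod_nat_of_mem {α : Type*} (A : Set α) :
    ∃ (s : Finset α) (σ : α × ℕ → α), (∀ a ∈ s, a ∈ A) ∧ (∀ j, σ j ∈ A ↔ j.1 ∈ A) ∧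
      (∀ j, j.1 ∉ A → σ j = j.1) ∧ Set.InjOn σ {j | j.1 ∈ A ∧ (j.1 ∈ s → j.2 = 0)} := by
  classical
  obtain ⟨s, σ, hσ⟩ := exists_finset_injOn_prod_nat A
  let host : α × ℕ → α := fun j => if h : j.1 ∈ A then σ (⟨j.1, h⟩, j.2) else j.1
  have hhost (j) (h : j.1 ∈ A) : host j = σ (⟨j.1, h⟩, j.2) := dif_pos h
  have hhost_of_notMem (j) (h : j.1 ∉ A) : host j = j.1 := dif_neg h
  refine ⟨s.map (Function.Embedding.subtype _), host, fun a ha => ?_, fun j => ?_,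
    hhost_of_notMem, ?_⟩
  · exact Finset.property_of_mem_map_subtype s ha
  · by_cases h : j.1 ∈ A
    · simp only [hhost j h, Subtype.coe_prop, h]
    · rw [hhost_of_notMem j h]
  · rintro j ⟨hjA, hj⟩ l ⟨hlA, hl⟩ hjl
    rw [hhost j hjA, hhost l hlA] at hjl
    have := hσ (fun h => hj (Finset.mem_map_of_mem _ h)) (fun h => hl (Finset.mem_map_of_mem _ h))
      (Subtype.ext hjl)
    simp only [Prod.mk.injEq, Subtype.mk.injEq] at this
    exact Prod.ext this.1 this.2

/-- Infinitely many atoms absorb countably many copies of each of them, whereas finitely many atoms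
have room for one copy of each only; the finset `s` collects the atoms in the latter case. -/
lemma IsHomogeneousPartition.exists_hosts {W : Set (Set Ω)} (hW : IsHomogeneousPartition μ W) :
    ∃ (s : Finset W) (T : W × ℕ → Set Ω), (∀ D ∈ s, IsMeasureAtom μ D) ∧
      (∀ j : W × ℕ, IsHost μ j.1 (T j)) ∧
      {j : W × ℕ | j.1 ∈ s → j.2 = 0}.Pairwise (Function.onFun (AEDisjoint μ) T) := by
  classical
  let atoms : Set W := {D | IsMeasureAtom μ D}
  obtain ⟨s, σ, hs, hσ_mem, hσ_eq, hσ_inj⟩ := exists_finset_injOn_prod_nat_of_mem atoms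
  have hhom (D : W) : IsHomogeneous μ D := hW.isHomogeneous D D.2
  have hsplit (D : W) (hD : D ∉ atoms) := (hhom D).exists_pairwise_disjoint hD
  choose! U hU hUdisj using hsplit
  let T : W × ℕ → Set Ω := fun j => if j.1 ∈ atoms then σ j else U j.1 j.2
  have hT_atom (j) (h : j.1 ∈ atoms) : T j = σ j := if_pos h
  have hT_split (j) (h : j.1 ∉ atoms) : T j = U j.1 j.2 := if_neg h
  have hTσ : ∀ j, T j ⊆ σ j := fun j => by
    by_cases h : j.1 ∈ atoms
    · rw [hT_atom j h]
    · rw [hT_split j h, hσ_eq j h]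
      exact (hU _ h _).1
  refine ⟨s, T, hs, fun j => ?_, fun j hj l hl hjl => ?_⟩
  · by_cases h : j.1 ∈ atoms
    · rw [hT_atom j h]
      exact (hhom _).isHost_of_isMeasureAtom h
    · rw [hT_split j h]
      exact (hU _ h _).2
  · by_cases hσ : σ j = σ l
    · have hmem : j.1 ∈ atoms ↔ l.1 ∈ atoms := by rw [← hσ_mem j, hσ, hσ_mem l]
      have hj_atom : j.1 ∉ atoms := fun h => hjl (hσ_inj ⟨h, hj⟩ ⟨hmem.1 h, hl⟩ hσ)
      have hl_atom : l.1 ∉ atoms := hj_atom ∘ hmem.2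
      rw [hσ_eq j hj_atom, hσ_eq l hl_atom] at hσ
      rw [Function.onFun, hT_split j hj_atom, hT_split l hl_atom, ← hσ]
      exact (hUdisj _ hj_atom fun h => hjl (Prod.ext hσ h)).aedisjoint
    · exact (hW.aedisjoint (σ j).2 (σ l).2 (Subtype.coe_ne_coe.2 hσ)).mono (hTσ j) (hTσ l)

end Decomposition

/-! ### Measures assembled from copies of the pieces -/

section Glue

variable {Ω J : Type*} [MeasurableSpace Ω] {N : J → Measure Ω} {T : J → Set Ω}

lemma exists_measurable_forall_ae_eq (hT : ∀ j, MeasurableSet (T j))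
    (hself : ∀ j, N j (T j)ᶜ = 0) (hne : Pairwise fun j l => N j (T l) = 0) {g : J → Ω → ℝ}
    (hg : ∀ j, Measurable (g j)) (hcount : {j | ¬ g j =ᵐ[N j] 0}.Countable) :
    ∃ F : Ω → ℝ, Measurable F ∧ ∀ j, F =ᵐ[N j] g j := by
  have : Countable {j // ¬ g j =ᵐ[N j] 0} := hcount.to_subtype
  refine ⟨fun x => ∑' l : {j // ¬ g j =ᵐ[N j] 0}, (T l).indicator (g l) x,
    Measurable.tsum fun l => (hg l).indicator (hT l), fun j => ?_⟩
  have hmem : ∀ᵐ x ∂N j, x ∈ T j := hself j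
  have hnotMem : ∀ᵐ x ∂N j, ∀ l : {j // ¬ g j =ᵐ[N j] 0}, l.1 ≠ j → x ∉ T l :=
    ae_all_iff.2 fun l => Filter.eventually_imp_distrib_left.2 fun hl =>
      measure_eq_zero_iff_ae_notMem.1 (hne hl.symm)
  by_cases hj : g j =ᵐ[N j] 0
  · filter_upwards [hj, hnotMem] with x hx hxl
    rw [hx]
    exact (tsum_congr fun l => Set.indicator_of_notMem (hxl l fun h => l.2 (h ▸ hj)) _).trans
      tsum_zero
  · filter_upwards [hmem, hnotMem] with x hx hxl
    rw [tsum_eq_single ⟨j, hj⟩ fun l hl =>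
      Set.indicator_of_notMem (hxl l fun h => hl (Subtype.ext h)) _, Set.indicator_of_mem hx]

end Glue

universe u

/-- Labels for the copies of each piece: a piece `i ∈ s` has a single copy, all other pieces have
countably many. -/
abbrev CopyIndex {ι : Type*} (s : Finset ι) : Type _ := Σ i, {k : ℕ // i ∈ s → k = 0}

/-- A partition of the finite-measure part of `(Ω, μ)` into pieces of finite measure, together
with a family of measures `law j` on almost disjoint sets `target j`, each of which receives a
transfer from the piece `j.1`. The `special` pieces are the atoms that have one copy only. -/
structure CopySystem {Ω : Type u} [MeasurableSpace Ω] (μ : Measure Ω) where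
  ι : Type u
  piece : ι → Set Ω
  measurableSet_piece : ∀ i, MeasurableSet (piece i)
  measure_piece_ne_top : ∀ i, μ (piece i) ≠ ⊤
  aedisjoint_piece : Pairwise (Function.onFun (AEDisjoint μ) piece)
  measure_eq_zero : ∀ A, MeasurableSet A → μ A ≠ ⊤ → (∀ i, μ (A ∩ piece i) = 0) → μ A = 0
  special : Finset ι
  isMeasureAtom_piece : ∀ i ∈ special, IsMeasureAtom μ (piece i)
  target : CopyIndex special → Set Ω
  measurableSet_target : ∀ j, MeasurableSet (target j)
  aedisjoint_target : Pairwise (Function.onFun (AEDisjoint μ) target)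
  law : CopyIndex special → Measure Ω
  law_absolutelyContinuous : ∀ j, law j ≪ μ
  law_compl_target : ∀ j, law j (target j)ᶜ = 0
  transfer : ∀ j, Transfer (μ.restrict (piece j.1)) (law j)

lemma nonempty_copySystem {Ω : Type u} [MeasurableSpace Ω] (μ : Measure Ω) :
    Nonempty (CopySystem μ) := by
  obtain ⟨W, hW⟩ := exists_isHomogeneousPartition μ
  obtain ⟨s, T, hs, hT, hdisj⟩ := hW.exists_hosts
  have hhom (D : W) : IsHomogeneous μ D := hW.isHomogeneous D D.2
  have htransfer (j : CopyIndex s) := (hT (j.1, j.2)).nonempty_transfer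
    (hhom j.1).measure_ne_zero (hhom j.1).measure_ne_top
  exact ⟨{
    ι := W
    piece := Subtype.val
    measurableSet_piece D := (hhom D).measurableSet
    measure_piece_ne_top D := (hhom D).measure_ne_top
    aedisjoint_piece D E hDE := hW.aedisjoint D.2 E.2 (Subtype.coe_ne_coe.2 hDE)
    measure_eq_zero A hA hAtop h := hW.measure_eq_zero A hA hAtop fun D hD => h ⟨D, hD⟩
    special := s
    isMeasureAtom_piece := hs
    target j := T (j.1, j.2)
    measurableSet_target j := (hT _).measurableSet
    aedisjoint_target := fun ⟨i, k, hk⟩ ⟨i', k', hk'⟩ hne =>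
      hdisj (x := (i, k)) hk (y := (i', k')) hk' fun h => hne (by cases h; rfl)
    law j := scaledRestrict μ j.1 (T (j.1, j.2))
    law_absolutelyContinuous j := scaledRestrict_absolutelyContinuous μ _ _
    law_compl_target j := by
      rw [scaledRestrict, Measure.smul_apply,
        Measure.restrict_apply (hT _).measurableSet.compl, Set.compl_inter_self, measure_empty,
        smul_zero]
    transfer j := (htransfer j).some }⟩

namespace CopySystem

variable {Ω : Type u} [MeasurableSpace Ω] {μ : Measure Ω} (d : CopySystem μ)
  {t v : CopyIndex d.special → ℝ} {f g k : Ω →ₘ[μ] ℝ}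

/-- The superposition of all copies, the copy `j` having weight `t j`. -/
def measure (t : CopyIndex d.special → ℝ) : Measure Ω :=
  Measure.sum fun j => ENNReal.ofReal (t j) • d.law j

/-- The set of pieces on which `f` does not vanish. -/
def activePieces (f : Ω → ℝ) : Set d.ι := {i | ¬ f =ᵐ[μ.restrict (d.piece i)] 0}

open scoped Classical in
/-- Writes the transfer of `v j • f` on each target. The value is junk (zero) if the transfers
cannot be glued, which does not happen when `f` lives on countably many pieces. -/
def copyMap (t v : CopyIndex d.special → ℝ) (f : Ω →ₘ[μ] ℝ) : Ω →ₘ[d.measure t] ℝ :=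
  if h : ∃ F : Ω → ℝ, Measurable F ∧ ∀ j, F =ᵐ[d.law j] fun y => v j * (d.transfer j).toFun f y
  then AEEqFun.mk h.choose h.choose_spec.1.aestronglyMeasurable else 0

lemma measure_absolutelyContinuous : d.measure t ≪ μ :=
  Measure.absolutelyContinuous_sum_left fun j =>
    Measure.smul_absolutelyContinuous.trans (d.law_absolutelyContinuous j)

lemma law_target_of_ne : Pairwise fun j l => d.law j (d.target l) = 0 := fun j _ hjl =>
  measure_mono_null (fun x hx => (em (x ∈ d.target j)).symm.imp id fun hj => ⟨hj, hx⟩)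
    (measure_union_null (d.law_compl_target j)
      (d.law_absolutelyContinuous j (d.aedisjoint_target hjl)))

lemma law_univ_ne_top (j) : d.law j Set.univ ≠ ⊤ := by
  have h := (d.transfer j).lintegral_comp (φ := 1) measurable_one (f := 0) measurable_zero
  simp only [Pi.one_apply, lintegral_one, Measure.restrict_apply_univ] at h
  exact h ▸ d.measure_piece_ne_top j.1

lemma ae_law_of_ae_measure (ht : ∀ j, 0 < t j) {P : Ω → Prop} (h : ∀ᵐ x ∂d.measure t, P x) (j) :
    ∀ᵐ x ∂d.law j, P x :=
  (Measure.ae_ennreal_smul_measure_iff (ENNReal.ofReal_pos.2 (ht j)).ne').1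
    ((Measure.le_sum _ j).absolutelyContinuous.ae_le h)

lemma ext_of_ae_law {F G : Ω →ₘ[d.measure t] ℝ} (h : ∀ j, F =ᵐ[d.law j] G) : F = G :=
  AEEqFun.ext <| (Measure.ae_sum_iff' (measurableSet_eq_fun F.measurable G.measurable)).2
    fun j => Measure.ae_smul_measure (h j) _

lemma countable_copies {s : Set d.ι} (hs : s.Countable) :
    {j : CopyIndex d.special | j.1 ∈ s}.Countable :=
  Set.MapsTo.countable_of_injOn (f := fun j => (j.1, j.2.1)) (t := s ×ˢ Set.univ)
    (fun _ hj => ⟨hj, trivial⟩)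
    (fun ⟨i, k⟩ _ ⟨i', k'⟩ _ h => by cases k; cases k'; cases h; rfl)
    (hs.prod Set.countable_univ)

lemma copyMap_ae_eq (ht : ∀ j, 0 < t j) (hf : (d.activePieces f).Countable) (j) :
    d.copyMap t v f =ᵐ[d.law j] fun y => v j * (d.transfer j).toFun f y := by
  have hzero (j) (hj : f =ᵐ[μ.restrict (d.piece j.1)] 0) :
      (fun y => v j * (d.transfer j).toFun f y) =ᵐ[d.law j] 0 := by
    filter_upwards [(d.transfer j).ae_eq_comp₂ (Φ := fun _ => 0) measurable_const f.measurable
      f.measurable f.measurable hj] with y hy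
    rw [hy, mul_zero, Pi.zero_apply]
  have hglue := exists_measurable_forall_ae_eq d.measurableSet_target d.law_compl_target
    d.law_target_of_ne
    (fun j => ((d.transfer j).measurable f.measurable).const_mul (v j)) <|
    (d.countable_copies hf).mono fun j hj hj0 => hj (hzero j hj0)
  rw [copyMap, dif_pos hglue]
  exact Filter.EventuallyEq.trans (d.ae_law_of_ae_measure ht (AEEqFun.coeFn_mk hglue.choose _) j)
    (hglue.choose_spec.2 j)

lemma copyMap_eq_of_ae_eq_comp₂ (ht : ∀ j, 0 < t j) (hv : ∀ j, 0 < v j) {Φ : ℝ × ℝ → ℝ}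
    (hΦ : Measurable Φ) (hhom : ∀ c > 0, ∀ a b, Φ (c * a, c * b) = c * Φ (a, b))
    (hf : (d.activePieces f).Countable) (hg : (d.activePieces g).Countable)
    (hk : k =ᵐ[μ] fun x => Φ (f x, g x)) {F : Ω →ₘ[d.measure t] ℝ}
    (hF : F =ᵐ[d.measure t] fun x => Φ (d.copyMap t v f x, d.copyMap t v g x)) :
    d.copyMap t v k = F := by
  have hΦ0 : Φ (0, 0) = 0 := by
    have := hhom 2 two_pos 0 0
    simp only [mul_zero] at this
    linarith
  have hk_active : d.activePieces k ⊆ d.activePieces f ∪ d.activePieces g := fun i hi => by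
    by_contra! hfg
    obtain ⟨hfi, hgi⟩ := not_or.1 hfg
    refine hi ?_
    filter_upwards [not_not.1 hfi, not_not.1 hgi, ae_restrict_of_ae hk] with x hfx hgx hkx
    rw [hkx, hfx, hgx, Pi.zero_apply, hΦ0]
  refine d.ext_of_ae_law fun j => ?_
  filter_upwards [d.copyMap_ae_eq (v := v) ht ((hf.union hg).mono hk_active) j,
    d.copyMap_ae_eq (v := v) ht hf j, d.copyMap_ae_eq (v := v) ht hg j,
    d.ae_law_of_ae_measure ht hF j,
    (d.transfer j).ae_eq_comp₂ hΦ f.measurable g.measurable k.measurable (ae_restrict_of_ae hk)]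
    with y hky hfy hgy hFy hΦy
  rw [hky, hFy, hfy, hgy, hhom _ (hv j), hΦy]

lemma copyMap_add (ht : ∀ j, 0 < t j) (hv : ∀ j, 0 < v j)
    (hf : (d.activePieces f).Countable) (hg : (d.activePieces g).Countable) :
    d.copyMap t v (f + g) = d.copyMap t v f + d.copyMap t v g :=
  d.copyMap_eq_of_ae_eq_comp₂ ht hv (Φ := fun z => z.1 + z.2) (by fun_prop)
    (fun c _ a b => (mul_add c a b).symm) hf hg (AEEqFun.coeFn_add f g) (AEEqFun.coeFn_add _ _)

lemma copyMap_smul (ht : ∀ j, 0 < t j) (hv : ∀ j, 0 < v j)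
    (hf : (d.activePieces f).Countable) (c : ℝ) :
    d.copyMap t v (c • f) = c • d.copyMap t v f :=
  d.copyMap_eq_of_ae_eq_comp₂ ht hv (Φ := fun z => c * z.1) (by fun_prop)
    (fun _ _ _ _ => mul_left_comm _ _ _) hf hf (AEEqFun.coeFn_smul c f) (AEEqFun.coeFn_smul c _)

lemma copyMap_sup (ht : ∀ j, 0 < t j) (hv : ∀ j, 0 < v j)
    (hf : (d.activePieces f).Countable) (hg : (d.activePieces g).Countable) :
    d.copyMap t v (f ⊔ g) = d.copyMap t v f ⊔ d.copyMap t v g :=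
  d.copyMap_eq_of_ae_eq_comp₂ ht hv (Φ := fun z => z.1 ⊔ z.2) (by fun_prop)
    (fun _ hc a b => (mul_max_of_nonneg a b hc.le).symm) hf hg (AEEqFun.coeFn_sup f g)
    (AEEqFun.coeFn_sup _ _)

end CopySystem

/-! ### Norm estimates for the copy maps -/

namespace CopySystem

variable {Ω : Type u} [MeasurableSpace Ω] {μ : Measure Ω} (d : CopySystem μ)
  {t v : CopyIndex d.special → ℝ} {f : Ω →ₘ[μ] ℝ} {p r s c : ℝ}

/-- The joint contribution of all copies of the piece `i` to the integral of
`(|copyMap t v f| - 1)⁺` at a point where `|f|` takes the value `z`. -/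
def hinge (t v : CopyIndex d.special → ℝ) (i : d.ι) (z : ℝ) : ℝ≥0∞ :=
  ∑' k, ENNReal.ofReal (t ⟨i, k⟩ * (v ⟨i, k⟩ * z - 1))

lemma lintegral_copyMap_div_sub_one (ht : ∀ j, 0 < t j) (hv : ∀ j, 0 < v j)
    (hf : (d.activePieces f).Countable) (c : ℝ) :
    ∫⁻ x, ENNReal.ofReal (|d.copyMap t v f x| / c - 1) ∂d.measure t =
      ∑' i, ∫⁻ x in d.piece i, d.hinge t v i (|f x| / c) ∂μ := by
  have hmeas (j : CopyIndex d.special) :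
      Measurable fun z : ℝ => ENNReal.ofReal (t j * (v j * (|z| / c) - 1)) := by fun_prop
  have hlaw (j : CopyIndex d.special) :
      ∫⁻ x, ENNReal.ofReal (|d.copyMap t v f x| / c - 1) ∂(ENNReal.ofReal (t j) • d.law j) =
        ∫⁻ x in d.piece j.1, ENNReal.ofReal (t j * (v j * (|f x| / c) - 1)) ∂μ := by
    rw [lintegral_smul_measure, smul_eq_mul,
      ← (d.transfer j).lintegral_comp (hmeas j) f.measurable,
      ← lintegral_const_mul' _ _ ENNReal.ofReal_ne_top]
    refine lintegral_congr_ae ?_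
    filter_upwards [d.copyMap_ae_eq (v := v) ht hf j] with y hy
    rw [hy, ← ENNReal.ofReal_mul (ht j).le, abs_mul, abs_of_pos (hv j), mul_div_assoc]
  refine (lintegral_sum_measure _ _).trans ?_
  rw [tsum_congr hlaw, ENNReal.tsum_sigma']
  refine tsum_congr fun i => ?_
  simp only [hinge]
  exact (lintegral_tsum fun k => ((hmeas ⟨i, k⟩).comp f.measurable).aemeasurable).symm

lemma setLIntegral_le_tsum_piece {ψ : Ω → ℝ≥0∞} {A : Set Ω} (hA : MeasurableSet A)
    (hAfin : μ A < ⊤) : ∫⁻ x in A, ψ x ∂μ ≤ ∑' i, ∫⁻ x in d.piece i, ψ x ∂μ := by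
  set C : Set d.ι := {i | 0 < μ (A ∩ d.piece i)}
  have hC : C.Countable := Measure.countable_meas_pos_of_disjoint_of_meas_iUnion_ne_top₀ μ
    (fun i => (hA.inter (d.measurableSet_piece i)).nullMeasurableSet)
    (fun i j hij => measure_mono_null
      (Set.inter_subset_inter Set.inter_subset_right Set.inter_subset_right)
      (d.aedisjoint_piece hij))
    (ne_top_of_le_ne_top hAfin.ne
      (measure_mono (Set.iUnion_subset fun _ => Set.inter_subset_left)))
  have : Countable C := hC.to_subtype
  have hcover : μ (A \ ⋃ i : C, d.piece i) = 0 := by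
    refine d.measure_eq_zero _
      (hA.diff (MeasurableSet.iUnion fun i => d.measurableSet_piece i))
      (ne_top_of_le_ne_top hAfin.ne (measure_mono Set.sdiff_subset)) fun i => ?_
    by_cases hi : i ∈ C
    · refine measure_mono_null (fun x hx => ?_) measure_empty
      exact hx.1.2 (Set.mem_iUnion.2 ⟨⟨i, hi⟩, hx.2⟩)
    · exact measure_mono_null (Set.inter_subset_inter_left _ Set.sdiff_subset)
        (nonpos_iff_eq_zero.1 (not_lt.1 hi))
  calc ∫⁻ x in A, ψ x ∂μ ≤ ∫⁻ x in ⋃ i : C, d.piece i, ψ x ∂μ :=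
        lintegral_mono' (Measure.restrict_mono' (ae_le_set.2 hcover) le_rfl) le_rfl
    _ ≤ ∑' i : C, ∫⁻ x in d.piece i, ψ x ∂μ := lintegral_iUnion_le _ _
    _ ≤ ∑' i, ∫⁻ x in d.piece i, ψ x ∂μ :=
        ENNReal.tsum_comp_le_tsum_of_injective Subtype.val_injective _

lemma measure_target_lt_top (j : CopyIndex d.special) : d.measure t (d.target j) < ⊤ := by
  rw [measure, Measure.sum_apply _ (d.measurableSet_target j),
    tsum_eq_single j fun l hlj => by rw [Measure.smul_apply, d.law_target_of_ne hlj, smul_zero]]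
  exact ENNReal.mul_lt_top ENNReal.ofReal_lt_top
    ((measure_mono (Set.subset_univ _)).trans_lt (d.law_univ_ne_top j).lt_top)

lemma smul_law_le_restrict (j : CopyIndex d.special) :
    ENNReal.ofReal (t j) • d.law j ≤ (d.measure t).restrict (d.target j) := by
  have hself : (d.law j).restrict (d.target j) = d.law j :=
    Measure.restrict_eq_self_of_ae_mem (d.law_compl_target j)
  calc ENNReal.ofReal (t j) • d.law j
      = (ENNReal.ofReal (t j) • d.law j).restrict (d.target j) := by
        rw [Measure.restrict_smul, hself]
    _ ≤ (d.measure t).restrict (d.target j) :=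
        Measure.restrict_mono le_rfl (Measure.le_sum (fun j => ENNReal.ofReal (t j) • d.law j) j)

lemma lintegral_measure_le {C : ℝ≥0∞} {ψ : Ω → ℝ≥0∞}
    (H : ∀ A, MeasurableSet A → d.measure t A < ⊤ → ∫⁻ x in A, ψ x ∂d.measure t ≤ C) :
    ∫⁻ x, ψ x ∂d.measure t ≤ C :=
  calc ∫⁻ x, ψ x ∂d.measure t = ∑' j, ∫⁻ x, ψ x ∂(ENNReal.ofReal (t j) • d.law j) :=
        lintegral_sum_measure _ _
    _ ≤ ∑' j, ∫⁻ x in d.target j, ψ x ∂d.measure t :=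
        ENNReal.tsum_le_tsum fun j => lintegral_mono' (d.smul_law_le_restrict j) le_rfl
    _ ≤ C := tsum_setLIntegral_le H d.measurableSet_target d.measure_target_lt_top
        fun _ _ hij => d.measure_absolutelyContinuous (d.aedisjoint_target hij)

lemma tsum_setLIntegral_piece_le (hr : 0 < r) (hrp : r < p) (hs : 0 < s)
    (hf : s ∈ upperBounds (wrSet p r μ f)) (hc : 0 < c) :
    ∑' i, ∫⁻ x in d.piece i, ENNReal.ofReal ((|f x| / c) ^ r - 1) ∂μ ≤
      ENNReal.ofReal (youngConst (p / r) * (s / c) ^ p) :=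
  tsum_setLIntegral_le ((mem_upperBounds_wrSet_iff hr hrp hs).1 hf c hc) d.measurableSet_piece
    (fun i => (d.measure_piece_ne_top i).lt_top) d.aedisjoint_piece

lemma countable_activePieces (hr : 0 < r) (hrp : r < p) (hf : BddAbove (wrSet p r μ f)) :
    (d.activePieces f).Countable := by
  obtain ⟨b, hb⟩ := hf
  have hmax : max b 1 ∈ upperBounds (wrSet p r μ f) := fun y hy => (hb hy).trans (le_max_left _ _)
  have hmeas (n : ℕ) : Measurable fun x => ENNReal.ofReal ((|f x| / (1 / (n + 1))) ^ r - 1) :=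
    (((f.measurable.abs.div_const _).pow_const r).sub_const 1).ennreal_ofReal
  have hsupport (n : ℕ) := Summable.countable_support_ennreal <| ne_top_of_le_ne_top
    ENNReal.ofReal_ne_top <| d.tsum_setLIntegral_piece_le hr hrp (lt_max_of_lt_right one_pos) hmax
      (Nat.one_div_pos_of_nat (n := n))
  refine (Set.countable_iUnion hsupport).mono fun i hi => ?_
  by_contra hzero
  simp only [Set.mem_iUnion, Function.mem_support, not_exists, not_not,
    lintegral_eq_zero_iff (hmeas _)] at hzero
  refine hi ?_
  filter_upwards [ae_all_iff.2 hzero] with x hx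
  refine abs_eq_zero.1 (le_antisymm (ge_of_tendsto' tendsto_one_div_add_atTop_nhds_zero_nat
    fun n => ?_) (abs_nonneg _))
  by_contra! hlt
  have hone := Real.one_lt_rpow ((one_lt_div Nat.one_div_pos_of_nat).2 hlt) hr
  linarith [ENNReal.ofReal_eq_zero.1 (hx n)]

lemma sSup_wrSet_mem_upperBounds_w1Set (hr : 1 < r) (hrp : r < p) (ht : ∀ j, 0 < t j)
    (hv : ∀ j, 0 < v j) (hf : BddAbove (wrSet p r μ f))
    (hle : ∀ i z, 0 ≤ z → d.hinge t v i z ≤ ENNReal.ofReal (youngRatio p r * (z ^ r - 1))) :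
    sSup (wrSet p r μ f) ∈ upperBounds (w1Set p (d.measure t) (d.copyMap t v f)) := by
  have hr0 : 0 < r := by linarith
  have hratio := youngRatio_pos hr hrp
  refine fun y hy => le_of_forall_gt_imp_ge_of_dense fun s hs => ?_
  have hs0 : 0 < s := (Real.sSup_nonneg fun _ => nonneg_of_mem_wrSet).trans_lt hs
  have hsf : s ∈ upperBounds (wrSet p r μ f) := fun z hz => (le_csSup hf hz).trans hs.le
  rw [w1Set_eq_wrSet_one] at hy
  refine (mem_upperBounds_wrSet_iff one_pos (hr.trans hrp) hs0).2 (fun c hc A _ _ => ?_) hy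
  simp only [Real.rpow_one, div_one]
  calc ∫⁻ x in A, ENNReal.ofReal (|d.copyMap t v f x| / c - 1) ∂d.measure t
      ≤ ∑' i, ∫⁻ x in d.piece i, d.hinge t v i (|f x| / c) ∂μ :=
        (setLIntegral_le_lintegral _ _).trans_eq
          (d.lintegral_copyMap_div_sub_one ht hv (d.countable_activePieces hr0 hrp hf) c)
    _ ≤ ∑' i, ENNReal.ofReal (youngRatio p r) *
          ∫⁻ x in d.piece i, ENNReal.ofReal ((|f x| / c) ^ r - 1) ∂μ := by
        refine ENNReal.tsum_le_tsum fun i => ?_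
        rw [← lintegral_const_mul' _ _ ENNReal.ofReal_ne_top]
        refine lintegral_mono fun x => (hle i _ (by positivity)).trans_eq ?_
        exact ENNReal.ofReal_mul hratio.le
    _ ≤ ENNReal.ofReal (youngRatio p r) *
          ENNReal.ofReal (youngConst (p / r) * (s / c) ^ p) := by
        rw [ENNReal.tsum_mul_left]
        gcongr
        exact d.tsum_setLIntegral_piece_le hr0 hrp hs0 hsf hc
    _ = ENNReal.ofReal (youngConst p * (s / c) ^ p) := by
        rw [← ENNReal.ofReal_mul hratio.le, ← mul_assoc, youngRatio_mul_youngConst hr0 hrp]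

lemma setLIntegral_le_of_mem_upperBounds_w1Set (hp : 1 < p) (ht : ∀ j, 0 < t j)
    (hv : ∀ j, 0 < v j) (hf : (d.activePieces f).Countable) (hs : 0 < s)
    (hsf : s ∈ upperBounds (w1Set p (d.measure t) (d.copyMap t v f))) (hc : 0 < c)
    {ψ : Ω → ℝ≥0∞} (hψ : ∀ i, ∀ᵐ x ∂μ.restrict (d.piece i), ψ x ≤ d.hinge t v i (|f x| / c))
    {A : Set Ω} (hA : MeasurableSet A) (hAfin : μ A < ⊤) :
    ∫⁻ x in A, ψ x ∂μ ≤ ENNReal.ofReal (youngConst p * (s / c) ^ p) := by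
  rw [w1Set_eq_wrSet_one, mem_upperBounds_wrSet_iff one_pos hp hs] at hsf
  simp only [Real.rpow_one, div_one] at hsf
  calc ∫⁻ x in A, ψ x ∂μ ≤ ∑' i, ∫⁻ x in d.piece i, ψ x ∂μ := d.setLIntegral_le_tsum_piece hA hAfin
    _ ≤ ∑' i, ∫⁻ x in d.piece i, d.hinge t v i (|f x| / c) ∂μ :=
        ENNReal.tsum_le_tsum fun i => lintegral_mono_ae (hψ i)
    _ = ∫⁻ x, ENNReal.ofReal (|d.copyMap t v f x| / c - 1) ∂d.measure t :=
        (d.lintegral_copyMap_div_sub_one ht hv hf c).symm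
    _ ≤ _ := d.lintegral_measure_le (hsf c hc)

lemma mul_mem_upperBounds_wrSet (hr : 1 < r) (hrp : r < p)
    (hf : BddAbove (wrSet p r μ f)) (hs : 0 < s) {q : ℝ} (hq : 0 < q)
    (H : ∀ c > 0, ∃ t v, (∀ j, 0 < t j) ∧ (∀ j, 0 < v j) ∧
      (∀ i, ∀ᵐ x ∂μ.restrict (d.piece i),
        ENNReal.ofReal (youngRatio p r * ((|f x| / c / q) ^ r - 1)) ≤
          d.hinge t v i (|f x| / c)) ∧
      s ∈ upperBounds (w1Set p (d.measure t) (d.copyMap t v f))) :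
    q * s ∈ upperBounds (wrSet p r μ f) := by
  have hr0 : 0 < r := by linarith
  have hratio := youngRatio_pos hr hrp
  refine (mem_upperBounds_wrSet_iff hr0 hrp (by positivity)).2 fun c hc A hA hAfin => ?_
  obtain ⟨t, v, ht, hv, hhinge, hst⟩ := H (c / q) (by positivity)
  have hbound := d.setLIntegral_le_of_mem_upperBounds_w1Set (hr.trans hrp) ht hv
    (d.countable_activePieces hr0 hrp hf) hs hst (by positivity) hhinge hA hAfin
  simp only [div_div, div_mul_cancel₀ _ hq.ne', ENNReal.ofReal_mul hratio.le] at hbound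
  rw [lintegral_const_mul' _ _ ENNReal.ofReal_ne_top, div_div_eq_mul_div, mul_comm s] at hbound
  rwa [← youngRatio_mul_youngConst hr0 hrp, mul_assoc, ENNReal.ofReal_mul hratio.le,
    ENNReal.mul_le_mul_iff_right (ENNReal.ofReal_pos.2 hratio).ne' ENNReal.ofReal_ne_top] at hbound

lemma sSup_wrSet_le (hr : 1 < r) (hrp : r < p) (hf : BddAbove (wrSet p r μ f)) {M : ℝ}
    (hM : 0 ≤ M)
    (H : ∀ n : ℕ, ∀ c > 0, ∃ t v, (∀ j, 0 < t j) ∧ (∀ j, 0 < v j) ∧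
      (∀ i, ∀ᵐ x ∂μ.restrict (d.piece i),
        ENNReal.ofReal (youngRatio p r * ((|f x| / c / (1 + 1 / (n + 1))) ^ r - 1)) ≤
          d.hinge t v i (|f x| / c)) ∧
      M ∈ upperBounds (w1Set p (d.measure t) (d.copyMap t v f))) :
    sSup (wrSet p r μ f) ≤ M := by
  have hlim : Filter.Tendsto (fun n : ℕ => (1 + 1 / ((n : ℝ) + 1)) * (M + 1 / (n + 1)))
      Filter.atTop (nhds ((1 + 0) * (M + 0))) :=
    (tendsto_one_div_add_atTop_nhds_zero_nat.const_add 1).mul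
      (tendsto_one_div_add_atTop_nhds_zero_nat.const_add M)
  rw [add_zero, one_mul, add_zero] at hlim
  refine Real.sSup_le (fun y hy => ge_of_tendsto' hlim fun n => ?_) hM
  have hn : 0 < 1 / ((n : ℝ) + 1) := Nat.one_div_pos_of_nat
  refine d.mul_mem_upperBounds_wrSet hr hrp hf (by positivity) (by positivity) (fun c hc => ?_) hy
  obtain ⟨t, v, ht, hv, hhinge, hMt⟩ := H n c hc
  exact ⟨t, v, ht, hv, hhinge, fun z hz => (hMt hz).trans (by linarith)⟩

lemma sSup_w1Set_le (hr : 1 < r) (hrp : r < p) (ht : ∀ j, 0 < t j) (hv : ∀ j, 0 < v j)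
    (hf : BddAbove (wrSet p r μ f))
    (hle : ∀ i z, 0 ≤ z → d.hinge t v i z ≤ ENNReal.ofReal (youngRatio p r * (z ^ r - 1))) :
    sSup (w1Set p (d.measure t) (d.copyMap t v f)) ≤ sSup (wrSet p r μ f) :=
  Real.sSup_le (d.sSup_wrSet_mem_upperBounds_w1Set hr hrp ht hv hf hle)
    (Real.sSup_nonneg fun _ => nonneg_of_mem_wrSet)

lemma sSup_sSup_w1Set_eq {Γ : Type*} {t v : Γ → CopyIndex d.special → ℝ} (hr : 1 < r)
    (hrp : r < p) (ht : ∀ γ j, 0 < t γ j) (hv : ∀ γ j, 0 < v γ j) (hf : BddAbove (wrSet p r μ f))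
    (hle : ∀ γ i z, 0 ≤ z →
      d.hinge (t γ) (v γ) i z ≤ ENNReal.ofReal (youngRatio p r * (z ^ r - 1)))
    (hge : ∀ n : ℕ, ∀ c > 0, ∃ γ, ∀ i, ∀ᵐ x ∂μ.restrict (d.piece i),
      ENNReal.ofReal (youngRatio p r * ((|f x| / c / (1 + 1 / (n + 1))) ^ r - 1)) ≤
        d.hinge (t γ) (v γ) i (|f x| / c)) :
    sSup {y : ℝ | ∃ γ, y = sSup (w1Set p (d.measure (t γ)) (d.copyMap (t γ) (v γ) f))} =
      sSup (wrSet p r μ f) := by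
  have hcontr γ := d.sSup_w1Set_le hr hrp (ht γ) (hv γ) hf (hle γ)
  have hbdd γ : BddAbove (w1Set p (d.measure (t γ)) (d.copyMap (t γ) (v γ) f)) :=
    ⟨_, d.sSup_wrSet_mem_upperBounds_w1Set hr hrp (ht γ) (hv γ) hf (hle γ)⟩
  refine le_antisymm (Real.sSup_le (by rintro _ ⟨γ, rfl⟩; exact hcontr γ)
    (Real.sSup_nonneg fun _ => nonneg_of_mem_wrSet)) ?_
  refine d.sSup_wrSet_le hr hrp hf (Real.sSup_nonneg ?_) fun n c hc => ?_
  · rintro _ ⟨γ, rfl⟩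
    exact Real.sSup_nonneg fun _ => nonneg_of_mem_w1Set
  · obtain ⟨γ, hγ⟩ := hge n c hc
    exact ⟨t γ, v γ, ht γ, hv γ, hγ, fun y hy => (le_csSup (hbdd γ) hy).trans
      (le_csSup ⟨_, by rintro _ ⟨γ, rfl⟩; exact hcontr γ⟩ ⟨γ, rfl⟩)⟩

open scoped Classical in
/-- A choice of one real number per copy: the copies of the `i`-th piece receive `σ i` if it is
special, and the terms of the sequence `a` otherwise. -/
def copyParam (σ : d.special → ℝ) (a : ℕ → ℝ) (j : CopyIndex d.special) : ℝ :=
  if h : j.1 ∈ d.special then σ ⟨j.1, h⟩ else a j.2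

variable {σ τ : d.special → ℝ} {a b : ℕ → ℝ} {i : d.ι}

lemma copyParam_pos (hσ : ∀ i, 0 < σ i) (ha : ∀ k, 0 < a k) (j : CopyIndex d.special) :
    0 < d.copyParam σ a j := by
  unfold copyParam
  split_ifs
  exacts [hσ _, ha _]

lemma hinge_copyParam_of_mem (hi : i ∈ d.special) (z : ℝ) :
    d.hinge (d.copyParam σ a) (d.copyParam τ b) i z =
      ENNReal.ofReal (σ ⟨i, hi⟩ * (τ ⟨i, hi⟩ * z - 1)) := by
  have : Unique {k : ℕ // i ∈ d.special → k = 0} :=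
    { default := ⟨0, fun _ => rfl⟩, uniq := fun k => Subtype.ext (k.2 hi) }
  simp only [hinge, tsum_fintype, Finset.univ_unique, Finset.sum_singleton, copyParam, dif_pos hi]

lemma hinge_copyParam_of_notMem (hi : i ∉ d.special) (z : ℝ) :
    d.hinge (d.copyParam σ a) (d.copyParam τ b) i z =
      ∑' k, ENNReal.ofReal (a k * (b k * z - 1)) := by
  simp only [hinge, copyParam, dif_neg hi]
  exact (Equiv.subtypeUnivEquiv fun k hk => absurd hk hi).tsum_eq
    fun k => ENNReal.ofReal (a k * (b k * z - 1))

/-- On a special piece only one affine function is available, so it is chosen tangent to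
`z ↦ z ^ r - 1` at the prescribed point `ζ i`. -/
lemma exists_hinge_bounds (hr : 1 < r) {α q : ℝ} (hα : 0 < α) (hq : 1 < q)
    (ζ : d.special → ℝ) :
    ∃ t v : CopyIndex d.special → ℝ, (∀ j, 0 < t j) ∧ (∀ j, 0 < v j) ∧
      (∀ i z, 0 ≤ z → d.hinge t v i z ≤ ENNReal.ofReal (α * (z ^ r - 1))) ∧
      ∀ i z, 0 ≤ z → (∀ hi : i ∈ d.special, z = ζ ⟨i, hi⟩) →
        ENNReal.ofReal (α * ((z / q) ^ r - 1)) ≤ d.hinge t v i z := by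
  have hsqrt : 1 < √q := Real.lt_sqrt_of_sq_lt (by simpa using hq)
  obtain ⟨a, b, ha, hb, hseries⟩ := exists_tsum_hinge_mem_Icc hr hsqrt
  choose σ τ hσ hτ hle htangent using fun i => exists_affine_le_rpow_sub_one hr (ζ i)
  rw [Real.sq_sqrt (by linarith)] at hseries
  refine ⟨d.copyParam (fun i => α * σ i) (fun k => α * a k), d.copyParam τ b,
    d.copyParam_pos (fun i => mul_pos hα (hσ i)) fun k => mul_pos hα (ha k),
    d.copyParam_pos hτ hb, fun i z hz => ?_, fun i z hz hζ => ?_⟩ <;>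
  by_cases hi : i ∈ d.special
  · rw [d.hinge_copyParam_of_mem hi, mul_assoc]
    gcongr
    exact hle _ z hz
  · simp only [d.hinge_copyParam_of_notMem hi, mul_assoc, ENNReal.ofReal_mul hα.le,
      ENNReal.tsum_mul_left]
    gcongr
    exact (hseries z hz).2
  · rw [d.hinge_copyParam_of_mem hi, mul_assoc]
    rcases le_or_gt z q with hzq | hzq
    · have : (z / q) ^ r ≤ 1 :=
        Real.rpow_le_one (by positivity) ((div_le_one (by linarith)).2 hzq) (by linarith)
      rw [ENNReal.ofReal_of_nonpos (mul_nonpos_of_nonneg_of_nonpos hα.le (by linarith))]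
      exact zero_le
    · gcongr
      calc (z / q) ^ r - 1 ≤ z ^ r - 1 := by gcongr; exact div_le_self hz hq.le
        _ ≤ _ := hζ hi ▸ htangent ⟨i, hi⟩ (by rw [← hζ hi]; linarith)
  · simp only [d.hinge_copyParam_of_notMem hi, mul_assoc, ENNReal.ofReal_mul hα.le,
      ENNReal.tsum_mul_left]
    gcongr
    exact (hseries z hz).1

lemma exists_ae_eq_on_special {g : Ω → ℝ} (hg : Measurable g) :
    ∃ ζ : d.special → ℝ, ∀ i, ∀ᵐ x ∂μ.restrict (d.piece i),
      ∀ hi : i ∈ d.special, g x = ζ ⟨i, hi⟩ := by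
  choose ζ hζ using fun i : d.special =>
    (d.isMeasureAtom_piece i i.2).exists_ae_eq_const hg
  exact ⟨ζ, fun i => ae_all_iff.2 fun hi => hζ ⟨i, hi⟩⟩

end CopySystem

/-- For `1 < r < p < ∞`, the weak-`L^p` space `L^{p,∞}_r(μ)` (with the `r`-th order norm)
embeds lattice isometrically into an `ℓ∞`-sum of weak-`L^p` spaces `L^{p,∞}_1(ν_γ)` equipped
with the first-order norm: there are measures `ν_γ` and contractive lattice homomorphisms
`S_γ` with `sup_γ ‖S_γ f‖_{L^{p,∞}_1(ν_γ)} = ‖f‖_{L^{p,∞}_r(μ)}` for every `f` of finite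
norm. -/
theorem statement17 {Ω : Type*} [MeasurableSpace Ω] (μ : Measure Ω) (p r : ℝ)
    (hr : 1 < r) (hrp : r < p) :
    ∃ (Γ : Type) (ν : Γ → Measure Ω)
      (S : ∀ γ : Γ, (Ω →ₘ[μ] ℝ) → (Ω →ₘ[ν γ] ℝ)),
      -- each S_γ is a vector lattice homomorphism on L^{p,∞}_r(μ)
      (∀ γ, ∀ f g : Ω →ₘ[μ] ℝ, BddAbove (wrSet p r μ f) → BddAbove (wrSet p r μ g) →
        S γ (f + g) = S γ f + S γ g) ∧
      (∀ γ, ∀ (c : ℝ) (f : Ω →ₘ[μ] ℝ), BddAbove (wrSet p r μ f) →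
        S γ (c • f) = c • S γ f) ∧
      (∀ γ, ∀ f g : Ω →ₘ[μ] ℝ, BddAbove (wrSet p r μ f) → BddAbove (wrSet p r μ g) →
        S γ (f ⊔ g) = S γ f ⊔ S γ g) ∧
      -- each S_γ is contractive
      (∀ γ, ∀ f : Ω →ₘ[μ] ℝ, BddAbove (wrSet p r μ f) →
        BddAbove (w1Set p (ν γ) (S γ f)) ∧
          sSup (w1Set p (ν γ) (S γ f)) ≤ sSup (wrSet p r μ f)) ∧
      -- the embedding is a lattice isometry
      (∀ f : Ω →ₘ[μ] ℝ, BddAbove (wrSet p r μ f) →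
        sSup {t : ℝ | ∃ γ, t = sSup (w1Set p (ν γ) (S γ f))} = sSup (wrSet p r μ f)) := by
  obtain ⟨d⟩ := nonempty_copySystem μ
  have hα := youngRatio_pos hr hrp
  choose t v ht hv hhinge_le hle_hinge using
    fun γ : ℕ × (Fin d.special.card → ℝ) => d.exists_hinge_bounds hr hα
      (lt_add_of_pos_right 1 (Nat.one_div_pos_of_nat (n := γ.1))) (γ.2 ∘ d.special.equivFin)
  have hcount {f : Ω →ₘ[μ] ℝ} := d.countable_activePieces (f := f) (zero_lt_one.trans hr) hrp
  refine ⟨ℕ × (Fin d.special.card → ℝ), fun γ => d.measure (t γ), fun γ => d.copyMap (t γ) (v γ),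
    fun γ f g hf hg => d.copyMap_add (ht γ) (hv γ) (hcount hf) (hcount hg),
    fun γ c f hf => d.copyMap_smul (ht γ) (hv γ) (hcount hf) c,
    fun γ f g hf hg => d.copyMap_sup (ht γ) (hv γ) (hcount hf) (hcount hg),
    fun γ f hf => ⟨⟨_, d.sSup_wrSet_mem_upperBounds_w1Set hr hrp (ht γ) (hv γ) hf (hhinge_le γ)⟩,
      d.sSup_w1Set_le hr hrp (ht γ) (hv γ) hf (hhinge_le γ)⟩,
    fun f hf => d.sSup_sSup_w1Set_eq hr hrp ht hv hf hhinge_le fun n c hc => ?_⟩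
  obtain ⟨ζ, hζ⟩ := d.exists_ae_eq_on_special (f.measurable.abs.div_const c)
  refine ⟨(n, ζ ∘ d.special.equivFin.symm), fun i => ?_⟩
  filter_upwards [hζ i] with x hx
  exact hle_hinge (n, ζ ∘ d.special.equivFin.symm) i _ (by positivity) fun hi => by
    simpa only [Function.comp_apply, Equiv.symm_apply_apply] using hx hi
end
end

section
/- Let 1 ≤ p < ∞, let Γ be an index set with measure spaces (Ω_γ, Σ_γ, μ_γ) for γ ∈ Γ, and let Z = (⊕_{γ∈Γ} L^p(μ_γ))_∞ be the Banach lattice of families z = (z_γ)_{γ∈Γ}, z_γ ∈ L^p(μ_γ), with ‖z‖ = sup_γ ‖z_γ‖_{L^p(μ_γ)} < ∞ and coordinatewise (a.e. pointwise) order. Let 0 < c ≤ 1 and let (x_n)_{n∈ℕ} be a sequence of pairwise disjoint positive elements of Z such that c·‖(a_n)‖_{ℓ^p} < ‖Σ_n a_n x_n‖ ≤ ‖(a_n)‖_{ℓ^p} for every nonzero (a_n) ∈ ℓ^p. Then there exists a positive bounded linear projection P from Z onto the closed linear span of (x_n) with ‖P‖ ≤ c^{−p}. In particular, the closed span of a disjoint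 positive sequence equivalent to the unit vector basis of ℓ^p in Z is the range of a positive projection. -/
/-- A bundled measure space. -/
structure MeasSp where
  carrier : Type
  [mble : MeasurableSpace carrier]
  meas : MeasureTheory.Measure carrier

attribute [instance] MeasSp.mble

open MeasureTheory
open scoped ENNReal

noncomputable section

/-!
The projection is `P z = ∑ fₙ(z) xₙ`, where the functionals `fₙ` are positive, biorthogonal to `x`
and satisfy `∑ |fₙ(z)|^p ≤ c⁻ᵖ ‖z‖^p`; the upper `p`-estimate then gives `‖P‖ ≤ c⁻¹ ≤ c⁻ᵖ`.

To find them, look at positive families `g = (gₙ)` in the dual with `gₙ(xₘ) = 0` for `n ≠ m` and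
`∑ |gₙ(z)|^p gₙ(xₙ)^(1 - p) ≤ ‖z‖^p`. They form a convex weak*-compact set. Every coordinate `γ`
contributes the family of integrals against `xₙ(γ)^(p - 1)`, with `gₙ(xₙ) = ‖xₙ(γ)‖^p`, and for
`b ≥ 0` the lower estimate, applied to the coefficients `bₙ^(1/p)`, says that
`sup_g ∑ bₙ gₙ(xₙ) ≥ c^p ∑ bₙ`. By a Hahn-Banach minimax argument a single `g` has `gₙ(xₙ) ≥ c^p`
for all `n`, and `fₙ = gₙ / gₙ(xₙ)` is as required.
-/

section Minimax

variable {ι : Type*}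

lemma nonneg_of_forall_lt_add_mul {a v y : ℝ} (h : ∀ t : ℝ, 0 ≤ t → v < a + t * y) : 0 ≤ y := by
  by_contra! hy
  have := h (|v - a| / -y) (div_nonneg (abs_nonneg _) (neg_pos.2 hy).le)
  rw [div_mul_eq_mul_div, mul_div_assoc, div_neg, div_self hy.ne] at this
  linarith [neg_abs_le (v - a)]

theorem exists_mem_ge_of_forall_dotProduct_le [Fintype ι] {S : Set (ι → ℝ)} {d : ι → ℝ}
    (hScomp : IsCompact S) (hSconv : Convex ℝ S)
    (h : ∀ b : ι → ℝ, 0 ≤ b → ∀ r, (∀ u ∈ S, b ⬝ᵥ u ≤ r) → b ⬝ᵥ d ≤ r) :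
    ∃ u ∈ S, d ≤ u := by
  classical
  by_contra! hS
  obtain ⟨f, r, v, hfS, hrv, hfd⟩ := geometric_hahn_banach_compact_closed hSconv hScomp
    (convex_Ici d) isClosed_Ici (Set.disjoint_left.2 hS)
  set b : ι → ℝ := fun n ↦ f (Pi.single n 1)
  have hfb (u : ι → ℝ) : f u = b ⬝ᵥ u := by
    conv_lhs => rw [pi_eq_sum_univ' u]
    simp only [map_sum, map_smul, smul_eq_mul, dotProduct, b, mul_comm]
  have hb : 0 ≤ b := fun n ↦ nonneg_of_forall_lt_add_mul fun t ht ↦ by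
    have hmem : d + t • Pi.single n 1 ∈ Set.Ici d :=
      Set.mem_Ici.2 (le_add_of_nonneg_right (smul_nonneg ht (Pi.single_nonneg.2 zero_le_one)))
    simpa only [map_add, map_smul, smul_eq_mul] using hfd _ hmem
  have hdr : f d ≤ r := hfb d ▸ h b hb r fun u hu ↦ hfb u ▸ (hfS u hu).le
  linarith [hfd d Set.self_mem_Ici]

theorem exists_mem_forall_ge_of_forall_sum_le {E : Type*} [AddCommGroup E] [Module ℝ E]
    [TopologicalSpace E] {S : Set E} (hScomp : IsCompact S) (hSconv : Convex ℝ S)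
    (φ : ι → E →L[ℝ] ℝ) (d : ι → ℝ)
    (h : ∀ (s : Finset ι) (b : ι → ℝ), 0 ≤ b → ∀ r,
      (∀ g ∈ S, ∑ n ∈ s, b n * φ n g ≤ r) → ∑ n ∈ s, b n * d n ≤ r) :
    ∃ g ∈ S, ∀ n, d n ≤ φ n g := by
  classical
  suffices (S ∩ ⋂ n, {g | d n ≤ φ n g}).Nonempty by
    simpa [Set.Nonempty] using this
  refine hScomp.inter_iInter_nonempty _
    (fun n ↦ isClosed_le continuous_const (φ n).continuous) fun s ↦ ?_
  let Φ : E →L[ℝ] (s → ℝ) := .pi fun n ↦ φ n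
  obtain ⟨_, ⟨g, hg, rfl⟩, hdg⟩ := exists_mem_ge_of_forall_dotProduct_le (d := fun n : s ↦ d n)
    (hScomp.image Φ.continuous) (hSconv.linear_image Φ.toLinearMap) fun b hb r hr ↦ by
      set b' : ι → ℝ := fun n ↦ if hn : n ∈ s then b ⟨n, hn⟩ else 0
      have hb' : 0 ≤ b' := fun n ↦ by
        by_cases hn : n ∈ s
        · simpa [b', hn] using hb ⟨n, hn⟩
        · simp [b', hn]
      have hsum (u : ι → ℝ) : ∑ n ∈ s, b' n * u n = b ⬝ᵥ fun n : s ↦ u n := by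
        simp [dotProduct, ← Finset.sum_coe_sort s, b']
      rw [← hsum]
      exact h s b' hb' r fun g hg ↦ (hsum _).trans_le (hr _ ⟨g, hg, rfl⟩)
  exact ⟨g, hg, Set.mem_iInter₂.2 fun n hn ↦ hdg ⟨n, hn⟩⟩

end Minimax

section DualSystems

variable {ι Z : Type*} [NormedAddCommGroup Z] [NormedSpace ℝ Z] {p : ℝ} {x : ι → Z} {K : Set Z}

/-- The weak* version of the biorthogonal systems we look for: families of functionals `g` that are
nonnegative on `K`, vanish off the diagonal on `x`, and satisfy
`∑ |g n z| ^ p / g n (x n) ^ (p - 1) ≤ ‖z‖ ^ p`. The latter is encoded by its Legendre transform in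
the weights `t`, because that form is visibly stable under convex combinations and weak* limits and
is meaningful also when `g n (x n) = 0`. -/
def dualSystems (p : ℝ) (x : ι → Z) (K : Set Z) : Set (ι → WeakDual ℝ Z) :=
  {g | (∀ n, ∀ z ∈ K, 0 ≤ g n z) ∧ (Pairwise fun n m ↦ g n (x m) = 0) ∧
    ∀ (s : Finset ι) (t : ι → ℝ), 0 ≤ t → ∀ z,
      p * ∑ n ∈ s, t n ^ (p - 1) * |g n z| ≤ ‖z‖ ^ p + (p - 1) * ∑ n ∈ s, t n ^ p * g n (x n)}

lemma zero_mem_dualSystems : 0 ∈ dualSystems p x K := by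
  have h0 (n : ι) (z : Z) : (0 : ι → WeakDual ℝ Z) n z = 0 := rfl
  refine ⟨fun n z _ ↦ (h0 n z).ge, fun n m _ ↦ h0 n _, fun s t _ z ↦ ?_⟩
  simp only [h0, abs_zero, mul_zero, Finset.sum_const_zero, add_zero]
  positivity

lemma convex_dualSystems (hp : 0 ≤ p) : Convex ℝ (dualSystems p x K) := by
  rintro g ⟨hg₀, hg₁, hg⟩ h ⟨hh₀, hh₁, hh⟩ a b ha hb hab
  have happ (n : ι) (z : Z) : (a • g + b • h) n z = a * g n z + b * h n z := rfl
  refine ⟨fun n z hz ↦ ?_, fun n m hnm ↦ ?_, fun s t ht z ↦ ?_⟩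
  · rw [happ]
    exact add_nonneg (mul_nonneg ha (hg₀ n z hz)) (mul_nonneg hb (hh₀ n z hz))
  · simp only [happ, hg₁ hnm, hh₁ hnm, mul_zero, add_zero]
  · calc p * ∑ n ∈ s, t n ^ (p - 1) * |(a • g + b • h) n z|
        ≤ p * ∑ n ∈ s, t n ^ (p - 1) * (a * |g n z| + b * |h n z|) := by
          gcongr with n
          · exact Real.rpow_nonneg (ht n) _
          · rw [happ, ← abs_of_nonneg ha, ← abs_of_nonneg hb, ← abs_mul, ← abs_mul,
              abs_of_nonneg ha, abs_of_nonneg hb]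
            exact abs_add_le _ _
      _ = a * (p * ∑ n ∈ s, t n ^ (p - 1) * |g n z|)
          + b * (p * ∑ n ∈ s, t n ^ (p - 1) * |h n z|) := by
          simp only [Finset.mul_sum, ← Finset.sum_add_distrib]
          exact Finset.sum_congr rfl fun n _ ↦ by ring
      _ ≤ a * (‖z‖ ^ p + (p - 1) * ∑ n ∈ s, t n ^ p * g n (x n))
          + b * (‖z‖ ^ p + (p - 1) * ∑ n ∈ s, t n ^ p * h n (x n)) := by
          gcongr
          exacts [hg s t ht z, hh s t ht z]
      _ = (a + b) * ‖z‖ ^ p + (p - 1) * ∑ n ∈ s, t n ^ p * (a • g + b • h) n (x n) := by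
          simp only [happ, mul_add, Finset.sum_add_distrib, mul_left_comm _ a, mul_left_comm _ b,
            ← Finset.mul_sum]
          ring
      _ = ‖z‖ ^ p + (p - 1) * ∑ n ∈ s, t n ^ p * (a • g + b • h) n (x n) := by
          rw [hab, one_mul]

lemma continuous_eval_weakDual (n : ι) (z : Z) :
    Continuous fun g : ι → WeakDual ℝ Z ↦ g n z :=
  (WeakDual.eval_continuous z).comp (continuous_apply n)

lemma isClosed_dualSystems : IsClosed (dualSystems p x K) := by
  have hev (n : ι) (z : Z) := continuous_eval_weakDual (ι := ι) n z
  simp only [dualSystems, Pairwise, Set.ofPred_and, Set.ofPred_forall]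
  refine .inter ?_ (.inter ?_ ?_)
  · exact isClosed_iInter fun n ↦ isClosed_iInter fun z ↦ isClosed_iInter fun _ ↦
      isClosed_le continuous_const (hev n z)
  · exact isClosed_iInter fun n ↦ isClosed_iInter fun m ↦ isClosed_iInter fun _ ↦
      isClosed_eq (hev n _) continuous_const
  · exact isClosed_iInter fun s ↦ isClosed_iInter fun t ↦ isClosed_iInter fun _ ↦
      isClosed_iInter fun z ↦ isClosed_le
        (continuous_const.mul <| continuous_finsetSum _ fun n _ ↦
          continuous_const.mul (hev n z).abs)
        (continuous_const.add <| continuous_const.mul <| continuous_finsetSum _ fun n _ ↦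
          continuous_const.mul (hev n _))

lemma abs_apply_le_of_mem_dualSystems (hp : 1 ≤ p) {g : ι → WeakDual ℝ Z}
    (hg : g ∈ dualSystems p x K) (n : ι) (z : Z) :
    p * |g n z| ≤ ‖z‖ ^ p + (p - 1) * ‖x n‖ ^ p := by
  have hg' (z : Z) : p * |g n z| ≤ ‖z‖ ^ p + (p - 1) * g n (x n) := by
    simpa using hg.2.2 {n} 1 zero_le_one z
  -- At `z = x n` the inequality bounds the diagonal entry on its own right-hand side.
  have hgx : g n (x n) ≤ ‖x n‖ ^ p := by
    nlinarith [hg' (x n), le_abs_self (g n (x n))]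
  nlinarith [hg' z]

theorem isCompact_dualSystems (hp : 1 ≤ p) : IsCompact (dualSystems p x K) := by
  refine (isCompact_univ_pi fun n ↦ WeakDual.isCompact_closedBall (𝕜 := ℝ) 0
    ((1 + (p - 1) * ‖x n‖ ^ p) / p)).of_isClosed_subset isClosed_dualSystems
    fun g hg n _ ↦ ?_
  rw [Set.mem_preimage, mem_closedBall_zero_iff]
  refine (ContinuousLinearMap.opNorm_bound_of_ball_bound one_pos _ _ fun z hz ↦ ?_).trans_eq
    (div_one _)
  have hz1 : ‖z‖ ^ p ≤ 1 :=
    Real.rpow_le_one (norm_nonneg z) (mem_closedBall_zero_iff.1 hz) (by linarith)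
  rw [le_div_iff₀' (by linarith)]
  exact (abs_apply_le_of_mem_dualSystems hp hg n z).trans (by gcongr)

lemma comp_mem_dualSystems {Y : Type*} [NormedAddCommGroup Y] [NormedSpace ℝ Y] {L : Set Y}
    (hp : 0 ≤ p) {T : Z →L[ℝ] Y} (hT : ∀ z, ‖T z‖ ≤ ‖z‖) (hTK : Set.MapsTo T K L)
    {g : ι → WeakDual ℝ Y} (hg : g ∈ dualSystems p (T ∘ x) L) :
    (fun n ↦ StrongDual.toWeakDual ((g n).toStrongDual ∘L T)) ∈ dualSystems p x K :=
  ⟨fun n _ hz ↦ hg.1 n _ (hTK hz), fun _ _ hnm ↦ hg.2.1 hnm, fun s t ht z ↦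
    (hg.2.2 s t ht (T z)).trans (add_le_add_left (Real.rpow_le_rpow (norm_nonneg _) (hT z) hp) _)⟩

lemma sum_rpow_le_of_mem_dualSystems (hp : 1 ≤ p) {g : ι → WeakDual ℝ Z}
    (hg : g ∈ dualSystems p x K) {d : ℝ} (hd : 0 < d) (hdg : ∀ n, d ≤ g n (x n)) (s : Finset ι)
    (z : Z) : ∑ n ∈ s, |(g n (x n))⁻¹ * g n z| ^ p ≤ d⁻¹ * ‖z‖ ^ p := by
  -- The optimal weights, for which both sums in the defining inequality have the same terms.
  set t : ι → ℝ := fun n ↦ |(g n (x n))⁻¹ * g n z|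
  have ht : 0 ≤ t := fun n ↦ abs_nonneg _
  have hgt (n : ι) : t n ^ (p - 1) * |g n z| = t n ^ p * g n (x n) := by
    have hpos : 0 < g n (x n) := hd.trans_le (hdg n)
    have habs : |g n z| = t n * g n (x n) := by
      simp only [t, abs_mul, abs_inv, abs_of_pos hpos]
      field_simp
    rw [habs, ← mul_assoc, ← Real.rpow_add_one' (ht n) (by linarith), sub_add_cancel]
  have hweighted : ∑ n ∈ s, t n ^ p * g n (x n) ≤ ‖z‖ ^ p := by
    have := hg.2.2 s t ht z
    simp only [hgt] at this
    linarith
  rw [inv_mul_eq_div, le_div_iff₀ hd, Finset.sum_mul]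
  refine (Finset.sum_le_sum fun n _ ↦ ?_).trans hweighted
  exact mul_le_mul_of_nonneg_left (hdg n) (Real.rpow_nonneg (ht n) p)

theorem exists_biorthogonal_of_dualSystems (hp : 1 ≤ p) {d : ℝ} (hd : 0 < d)
    (h : ∀ (s : Finset ι) (b : ι → ℝ), 0 ≤ b → ∀ r,
      (∀ g ∈ dualSystems p x K, ∑ n ∈ s, b n * g n (x n) ≤ r) → ∑ n ∈ s, b n * d ≤ r) :
    ∃ f : ι → StrongDual ℝ Z, (∀ n, ∀ z ∈ K, 0 ≤ f n z) ∧ (∀ n, f n (x n) = 1) ∧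
      (Pairwise fun n m ↦ f n (x m) = 0) ∧
      ∀ (s : Finset ι) z, ∑ n ∈ s, |f n z| ^ p ≤ d⁻¹ * ‖z‖ ^ p := by
  let φ (n : ι) : (ι → WeakDual ℝ Z) →L[ℝ] ℝ :=
    { toFun g := g n (x n)
      map_add' _ _ := rfl
      map_smul' _ _ := rfl
      cont := continuous_eval_weakDual n (x n) }
  obtain ⟨g, hg, hdg⟩ := exists_mem_forall_ge_of_forall_sum_le (isCompact_dualSystems hp)
    (convex_dualSystems (by linarith)) φ (fun _ ↦ d) h
  have hpos (n : ι) : 0 < g n (x n) := hd.trans_le (hdg n)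
  refine ⟨fun n ↦ (g n (x n))⁻¹ • (g n).toStrongDual, fun n z hz ↦ ?_, fun n ↦ ?_,
    fun n m hnm ↦ ?_, sum_rpow_le_of_mem_dualSystems hp hg hd hdg⟩
  · exact mul_nonneg (inv_nonneg.2 (hpos n).le) (hg.1 n z hz)
  · exact inv_mul_cancel₀ (hpos n).ne'
  · exact mul_eq_zero_of_right _ (hg.2.1 hnm)

end DualSystems

section Estimates

variable {ι Z : Type*} [NormedAddCommGroup Z] [NormedSpace ℝ Z] {p c C : ℝ} {x : ι → Z}

/-- A family `x` satisfies an upper `p`-estimate with constant `C` if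
`‖∑ aₙ xₙ‖ ≤ C ‖(aₙ)‖_{ℓ^p}` for all finitely supported `(aₙ)`. -/
def HasUpperEstimate (p C : ℝ) (x : ι → Z) : Prop :=
  ∀ (s : Finset ι) (a : ι → ℝ), ‖∑ n ∈ s, a n • x n‖ ≤ C * (∑ n ∈ s, |a n| ^ p) ^ p⁻¹

/-- A family `x` satisfies a lower `p`-estimate with constant `c` if
`c ‖(aₙ)‖_{ℓ^p} ≤ ‖∑ aₙ xₙ‖` for all finitely supported `(aₙ)`. -/
def HasLowerEstimate (p c : ℝ) (x : ι → Z) : Prop :=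
  ∀ (s : Finset ι) (a : ι → ℝ), c * (∑ n ∈ s, |a n| ^ p) ^ p⁻¹ ≤ ‖∑ n ∈ s, a n • x n‖

lemma hasUpperEstimate_of_forall_exists_ne_zero (hp : p ≠ 0)
    (h : ∀ (s : Finset ι) (a : ι → ℝ), (∃ n ∈ s, a n ≠ 0) →
      ‖∑ n ∈ s, a n • x n‖ ≤ C * (∑ n ∈ s, |a n| ^ p) ^ p⁻¹) :
    HasUpperEstimate p C x := fun s a ↦ by
  by_cases ha : ∃ n ∈ s, a n ≠ 0
  · exact h s a ha
  · push Not at ha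
    rw [Finset.sum_eq_zero fun n hn ↦ by rw [ha n hn, zero_smul], norm_zero,
      Finset.sum_eq_zero fun n hn ↦ by rw [ha n hn, abs_zero, Real.zero_rpow hp],
      Real.zero_rpow (inv_ne_zero hp), mul_zero]

lemma hasLowerEstimate_of_forall_exists_ne_zero (hp : p ≠ 0)
    (h : ∀ (s : Finset ι) (a : ι → ℝ), (∃ n ∈ s, a n ≠ 0) →
      c * (∑ n ∈ s, |a n| ^ p) ^ p⁻¹ ≤ ‖∑ n ∈ s, a n • x n‖) :
    HasLowerEstimate p c x := fun s a ↦ by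
  by_cases ha : ∃ n ∈ s, a n ≠ 0
  · exact h s a ha
  · push Not at ha
    rw [Finset.sum_eq_zero fun n hn ↦ by rw [ha n hn, abs_zero, Real.zero_rpow hp],
      Real.zero_rpow (inv_ne_zero hp), mul_zero]
    exact norm_nonneg _

lemma HasUpperEstimate.norm_sum_le (hx : HasUpperEstimate p C x) (hp : 0 < p) (hC : 0 ≤ C)
    {s : Finset ι} {a : ι → ℝ} {A : ℝ} (hA : 0 ≤ A) (ha : ∑ n ∈ s, |a n| ^ p ≤ A ^ p) :
    ‖∑ n ∈ s, a n • x n‖ ≤ C * A := by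
  refine (hx s a).trans (mul_le_mul_of_nonneg_left ?_ hC)
  rwa [Real.rpow_inv_le_iff_of_pos (Finset.sum_nonneg fun n _ ↦ by positivity) hA hp]

lemma HasUpperEstimate.summable [CompleteSpace Z] (hx : HasUpperEstimate p C x) (hp : 0 < p)
    {a : ι → ℝ} (ha : Summable fun n ↦ |a n| ^ p) : Summable fun n ↦ a n • x n := by
  refine summable_iff_vanishing_norm.2 fun ε hε ↦ ?_
  have hlim : Filter.Tendsto (fun y : ℝ ↦ C * y ^ p⁻¹) (nhds 0) (nhds 0) := by
    have hcont : Continuous fun y : ℝ ↦ C * y ^ p⁻¹ :=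
      continuous_const.mul (Real.continuous_rpow_const (inv_pos.2 hp).le)
    simpa [hp.ne'] using hcont.tendsto 0
  obtain ⟨s, hs⟩ := summable_iff_vanishing.1 ha _ (hlim.eventually_lt_const hε)
  exact ⟨s, fun t ht ↦ (hx t a).trans_lt (hs t ht)⟩

theorem HasUpperEstimate.exists_clm_hasSum [CompleteSpace Z] (hx : HasUpperEstimate p C x)
    (hp : 0 < p) (hC : 0 ≤ C) {f : ι → StrongDual ℝ Z} {A : ℝ} (hA : 0 ≤ A)
    (hf : ∀ (s : Finset ι) z, ∑ n ∈ s, |f n z| ^ p ≤ (A * ‖z‖) ^ p) :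
    ∃ P : Z →L[ℝ] Z, (∀ z, HasSum (fun n ↦ f n z • x n) (P z)) ∧ ∀ z, ‖P z‖ ≤ C * A * ‖z‖ := by
  have hsum (z : Z) : HasSum (fun n ↦ f n z • x n) (∑' n, f n z • x n) :=
    (hx.summable hp (summable_of_sum_le (fun n ↦ by positivity) (hf · z))).hasSum
  have hnorm (z : Z) : ‖∑' n, f n z • x n‖ ≤ C * A * ‖z‖ :=
    le_of_tendsto (hsum z).norm <| .of_forall fun s ↦
      (hx.norm_sum_le hp hC (by positivity) (hf s z)).trans_eq (mul_assoc C A ‖z‖).symm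
  let P : Z →ₗ[ℝ] Z :=
    { toFun z := ∑' n, f n z • x n
      map_add' y z := by
        simpa only [map_add, add_smul] using ((hsum y).add (hsum z)).tsum_eq
      map_smul' r z := by
        simpa only [map_smul, smul_assoc, RingHom.id_apply] using ((hsum z).const_smul r).tsum_eq }
  exact ⟨P.mkContinuous (C * A) hnorm, hsum, hnorm⟩

theorem isProj_topologicalClosure_span_of_hasSum {f : ι → StrongDual ℝ Z} {P : Z →L[ℝ] Z}
    (hP : ∀ z, HasSum (fun n ↦ f n z • x n) (P z)) (hself : ∀ n, f n (x n) = 1)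
    (hne : Pairwise fun n m ↦ f n (x m) = 0) :
    LinearMap.IsProj (Submodule.span ℝ (Set.range x)).topologicalClosure P.toLinearMap := by
  have hPx (m : ι) : P (x m) = x m := by
    have hsingle : HasSum (fun n ↦ f n (x m) • x n) (f m (x m) • x m) :=
      hasSum_single m fun n hn ↦ by rw [hne hn, zero_smul]
    rw [(hP (x m)).unique hsingle, hself, one_smul]
  refine ⟨fun z ↦ ?_, fun z hz ↦ ?_⟩
  · refine mem_closure_of_tendsto (hP z) (.of_forall fun s ↦ ?_)
    exact Submodule.sum_smul_mem _ _ fun n _ ↦ Submodule.subset_span ⟨n, rfl⟩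
  · have hspan : Submodule.span ℝ (Set.range x) ≤ LinearMap.eqLocus P.toLinearMap .id :=
      Submodule.span_le.2 (Set.range_subset_iff.2 hPx)
    exact Submodule.topologicalClosure_minimal _ hspan
      (isClosed_eq P.continuous continuous_id) hz

end Estimates

section RealInequalities

variable {ι : Type*} {s : Finset ι} {y : ι → ℝ}

lemma mul_mul_rpow_sub_one_le {z y p : ℝ} (hz : 0 ≤ z) (hy : 0 ≤ y) (hp : 1 ≤ p) :
    p * (z * y ^ (p - 1)) ≤ z ^ p + (p - 1) * y ^ p := by
  have hp0 : 0 < p := by linarith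
  have h := Real.geom_mean_le_arith_mean2_weighted (w₁ := p⁻¹) (w₂ := 1 - p⁻¹)
    (by positivity) (sub_nonneg.2 (inv_le_one_of_one_le₀ hp)) (Real.rpow_nonneg hz p)
    (Real.rpow_nonneg hy p) (add_sub_cancel _ _)
  have hexp : p * (1 - p⁻¹) = p - 1 := by field_simp
  rw [← Real.rpow_mul hz, ← Real.rpow_mul hy, mul_inv_cancel₀ hp0.ne', Real.rpow_one, hexp] at h
  calc p * (z * y ^ (p - 1)) ≤ p * (p⁻¹ * z ^ p + (1 - p⁻¹) * y ^ p) := by gcongr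
    _ = z ^ p + (p - 1) * y ^ p := by field_simp

lemma forall_eq_zero_or_exists_mem_forall_ne_eq_zero
    (hy : (s : Set ι).Pairwise fun n m ↦ y n = 0 ∨ y m = 0) :
    (∀ n ∈ s, y n = 0) ∨ ∃ k ∈ s, ∀ n ∈ s, n ≠ k → y n = 0 := by
  refine or_iff_not_imp_left.2 fun h ↦ ?_
  push Not at h
  obtain ⟨k, hk, hyk⟩ := h
  exact ⟨k, hk, fun n hn hnk ↦ (hy hn hk hnk).resolve_right hyk⟩

lemma abs_sum_mul_rpow_of_pairwise_eq_zero {p : ℝ} (hp : p ≠ 0)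
    (hy : (s : Set ι).Pairwise fun n m ↦ y n = 0 ∨ y m = 0) (a : ι → ℝ) :
    |∑ n ∈ s, a n * y n| ^ p = ∑ n ∈ s, |a n| ^ p * |y n| ^ p := by
  rcases forall_eq_zero_or_exists_mem_forall_ne_eq_zero hy with h | ⟨k, hk, h⟩
  · rw [Finset.sum_eq_zero fun n hn ↦ by rw [h n hn, mul_zero],
      Finset.sum_eq_zero fun n hn ↦ by rw [h n hn, abs_zero, Real.zero_rpow hp, mul_zero],
      abs_zero, Real.zero_rpow hp]
  · rw [Finset.sum_eq_single_of_mem k hk fun n hn hnk ↦ by rw [h n hn hnk, mul_zero],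
      Finset.sum_eq_single_of_mem k hk fun n hn hnk ↦ by
        rw [h n hn hnk, abs_zero, Real.zero_rpow hp, mul_zero],
      abs_mul, Real.mul_rpow (abs_nonneg _) (abs_nonneg _)]

/-- The scalar duality map `y ↦ sign y * |y| ^ (p - 1)` of `L^p`, written as a quotient so that it
vanishes at `0` also for `p = 1`. -/
def dualityDensity (p y : ℝ) : ℝ := |y| ^ p / y

lemma dualityDensity_zero (p : ℝ) : dualityDensity p 0 = 0 := div_zero _

lemma mul_dualityDensity_self {p : ℝ} (hp : p ≠ 0) (y : ℝ) : y * dualityDensity p y = |y| ^ p := by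
  rcases eq_or_ne y 0 with rfl | hy
  · rw [zero_mul, abs_zero, Real.zero_rpow hp]
  · exact mul_div_cancel₀ _ hy

lemma dualityDensity_nonneg {p y : ℝ} (hy : 0 ≤ y) : 0 ≤ dualityDensity p y := by
  unfold dualityDensity
  positivity

lemma measurable_dualityDensity (p : ℝ) : Measurable (dualityDensity p) := by
  unfold dualityDensity
  fun_prop

lemma abs_dualityDensity_le (p y : ℝ) : |dualityDensity p y| ≤ |y| ^ (p - 1) := by
  rcases eq_or_ne y 0 with rfl | hy
  · rw [dualityDensity_zero, abs_zero]
    positivity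
  · rw [dualityDensity, abs_div, Real.rpow_sub_one (abs_ne_zero.2 hy),
      abs_of_nonneg (Real.rpow_nonneg (abs_nonneg y) p)]

lemma rpow_mul_abs_mul_dualityDensity_le {p t : ℝ} (hp : 1 ≤ p) (ht : 0 ≤ t) (z y : ℝ) :
    p * (t ^ (p - 1) * |z * dualityDensity p y|) ≤ |z| ^ p + (p - 1) * (t ^ p * |y| ^ p) :=
  calc p * (t ^ (p - 1) * |z * dualityDensity p y|)
      ≤ p * (t ^ (p - 1) * (|z| * |y| ^ (p - 1))) := by
        rw [abs_mul]
        gcongr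
        exact abs_dualityDensity_le p y
    _ = p * (|z| * (t * |y|) ^ (p - 1)) := by
        rw [Real.mul_rpow ht (abs_nonneg y), mul_left_comm |z|]
    _ ≤ |z| ^ p + (p - 1) * (t * |y|) ^ p :=
        mul_mul_rpow_sub_one_le (abs_nonneg z) (by positivity) hp
    _ = |z| ^ p + (p - 1) * (t ^ p * |y| ^ p) := by rw [Real.mul_rpow ht (abs_nonneg y)]

lemma sum_rpow_mul_abs_mul_dualityDensity_le {p : ℝ} (hp : 1 ≤ p)
    (hy : (s : Set ι).Pairwise fun n m ↦ y n = 0 ∨ y m = 0) {t : ι → ℝ} (ht : 0 ≤ t) (z : ℝ) :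
    p * ∑ n ∈ s, t n ^ (p - 1) * |z * dualityDensity p (y n)| ≤
      |z| ^ p + (p - 1) * ∑ n ∈ s, t n ^ p * |y n| ^ p := by
  have hp0 : p ≠ 0 := by linarith
  have hl {n : ι} (hn : y n = 0) : t n ^ (p - 1) * |z * dualityDensity p (y n)| = 0 := by
    rw [hn, dualityDensity_zero, mul_zero, abs_zero, mul_zero]
  have hr {n : ι} (hn : y n = 0) : t n ^ p * |y n| ^ p = 0 := by
    rw [hn, abs_zero, Real.zero_rpow hp0, mul_zero]
  rcases forall_eq_zero_or_exists_mem_forall_ne_eq_zero hy with h | ⟨k, hk, h⟩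
  · rw [Finset.sum_eq_zero fun n hn ↦ hl (h n hn), Finset.sum_eq_zero fun n hn ↦ hr (h n hn),
      mul_zero, mul_zero, add_zero]
    positivity
  · rw [Finset.sum_eq_single_of_mem k hk fun n hn hnk ↦ hl (h n hn hnk),
      Finset.sum_eq_single_of_mem k hk fun n hn hnk ↦ hr (h n hn hnk)]
    exact rpow_mul_abs_mul_dualityDensity_le hp (ht k) z (y k)

end RealInequalities

section Lp

variable {α ι : Type*} [MeasurableSpace α] {μ : Measure α} {p : ℝ≥0∞}

lemma integrable_abs_rpow (hp0 : p ≠ 0) (hp : p ≠ ∞) (f : Lp ℝ p μ) :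
    Integrable (fun w ↦ |f w| ^ p.toReal) μ :=
  (Lp.memLp f).integrable_norm_rpow hp0 hp

lemma norm_rpow_eq_integral_abs_rpow (hp0 : p ≠ 0) (hp : p ≠ ∞) (f : Lp ℝ p μ) :
    ‖f‖ ^ p.toReal = ∫ w, |f w| ^ p.toReal ∂μ := by
  have hnn : 0 ≤ ∫ w, |f w| ^ p.toReal ∂μ := integral_nonneg fun w ↦ by positivity
  rw [Lp.norm_def, (Lp.memLp f).eLpNorm_eq_integral_rpow_norm hp0 hp]
  simp only [Real.norm_eq_abs]
  rw [ENNReal.toReal_ofReal (by positivity),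
    Real.rpow_inv_rpow hnn (ENNReal.toReal_ne_zero.2 ⟨hp0, hp⟩)]

lemma ae_eq_zero_or_eq_zero_of_abs_inf_abs_eq_zero {f g : Lp ℝ p μ} (h : |f| ⊓ |g| = 0) :
    ∀ᵐ w ∂μ, f w = 0 ∨ g w = 0 := by
  have h0 : (|f| ⊓ |g| : Lp ℝ p μ) =ᵐ[μ] 0 := h ▸ Lp.coeFn_zero ℝ p μ
  filter_upwards [Lp.coeFn_inf |f| |g|, Lp.coeFn_abs f, Lp.coeFn_abs g, h0] with w hinf hf hg h0
  rw [h0, Pi.inf_apply, hf, hg, Pi.zero_apply] at hinf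
  rcases min_choice |f w| |g w| with hmin | hmin
  · exact .inl (abs_eq_zero.1 (hmin.symm.trans hinf.symm))
  · exact .inr (abs_eq_zero.1 (hmin.symm.trans hinf.symm))

lemma ae_pairwise_eq_zero_or_eq_zero {x : ι → Lp ℝ p μ}
    (hx : Pairwise fun n m ↦ |x n| ⊓ |x m| = 0) (s : Finset ι) :
    ∀ᵐ w ∂μ, (s : Set ι).Pairwise fun n m ↦ x n w = 0 ∨ x m w = 0 := by
  refine (ae_ball_iff s.countable_toSet).2 fun n _ ↦ (ae_ball_iff s.countable_toSet).2 fun m _ ↦ ?_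
  rcases eq_or_ne n m with rfl | hnm
  · exact .of_forall fun w h ↦ (h rfl).elim
  · filter_upwards [ae_eq_zero_or_eq_zero_of_abs_inf_abs_eq_zero (hx hnm)] with w hw _ using hw

lemma norm_sum_smul_rpow_of_pairwise_disjoint (hp0 : p ≠ 0) (hp : p ≠ ∞) {x : ι → Lp ℝ p μ}
    (hx : Pairwise fun n m ↦ |x n| ⊓ |x m| = 0) (s : Finset ι) (a : ι → ℝ) :
    ‖∑ n ∈ s, a n • x n‖ ^ p.toReal = ∑ n ∈ s, |a n| ^ p.toReal * ‖x n‖ ^ p.toReal := by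
  simp only [norm_rpow_eq_integral_abs_rpow hp0 hp, ← integral_const_mul]
  rw [← integral_finsetSum _ fun n _ ↦ (integrable_abs_rpow hp0 hp (x n)).const_mul _]
  refine integral_congr_ae ?_
  have hsmul : ∀ᵐ w ∂μ, ∀ n ∈ s, (a n • x n) w = a n * x n w :=
    (ae_ball_iff s.countable_toSet).2 fun n _ ↦ Lp.coeFn_smul (a n) (x n)
  filter_upwards [Lp.coeFn_finsetSum s fun n ↦ a n • x n, hsmul,
    ae_pairwise_eq_zero_or_eq_zero hx s] with w hsum hsmul hdisj
  rw [hsum, Finset.sum_apply, Finset.sum_congr rfl hsmul]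
  exact abs_sum_mul_rpow_of_pairwise_eq_zero (ENNReal.toReal_ne_zero.2 ⟨hp0, hp⟩) hdisj a

variable [Fact (1 ≤ p)]

lemma memLp_dualityDensity (hp : p ≠ ∞) (f : Lp ℝ p μ) :
    MemLp (fun w ↦ dualityDensity p.toReal (f w)) (1 - p⁻¹)⁻¹ μ := by
  have hp1 : 1 ≤ p := Fact.out
  have hp0 : p ≠ 0 := (one_pos.trans_le hp1).ne'
  have hexp : p / (p - 1) = (1 - p⁻¹)⁻¹ := by
    rw [← ENNReal.inv_div (.inl hp) (.inl hp0), ENNReal.sub_div fun _ _ ↦ hp0,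
      ENNReal.div_self hp0 hp, one_div]
  have hpow := (Lp.memLp f).norm_rpow_div (p - 1)
  rw [hexp, ENNReal.toReal_sub_of_le hp1 hp, ENNReal.toReal_one] at hpow
  refine hpow.mono ?_ (.of_forall fun w ↦ ?_)
  · exact ((measurable_dualityDensity _).comp_aemeasurable
      (Lp.aestronglyMeasurable f).aemeasurable).aestronglyMeasurable
  · exact (abs_dualityDensity_le _ _).trans (le_abs_self _)

/-- The image of `f` under the (unnormalised) duality map of `L^p`: integration against
`sign f * |f| ^ (p - 1)`. -/
def dualityFunctional (hp : p ≠ ∞) (f : Lp ℝ p μ) : StrongDual ℝ (Lp ℝ p μ) :=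
  have := ENNReal.HolderConjugate.inv_one_sub_inv' (Fact.out : 1 ≤ p)
  have : Fact (1 ≤ (1 - p⁻¹)⁻¹) := by simp [fact_iff]
  ((ContinuousLinearMap.mul ℝ ℝ).lpPairing μ p (1 - p⁻¹)⁻¹).flip (memLp_dualityDensity hp f).toLp

lemma dualityFunctional_apply (hp : p ≠ ∞) (f z : Lp ℝ p μ) :
    dualityFunctional hp f z = ∫ w, z w * dualityDensity p.toReal (f w) ∂μ := by
  have := ENNReal.HolderConjugate.inv_one_sub_inv' (Fact.out : 1 ≤ p)
  have : Fact (1 ≤ (1 - p⁻¹)⁻¹) := by simp [fact_iff]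
  rw [dualityFunctional, ContinuousLinearMap.flip_apply,
    ContinuousLinearMap.lpPairing_eq_integral]
  refine integral_congr_ae ?_
  filter_upwards [(memLp_dualityDensity hp f).coeFn_toLp] with w hw
  rw [hw, ContinuousLinearMap.mul_apply']

lemma integrable_mul_dualityDensity (hp : p ≠ ∞) (f z : Lp ℝ p μ) :
    Integrable (fun w ↦ z w * dualityDensity p.toReal (f w)) μ :=
  have := ENNReal.HolderConjugate.inv_one_sub_inv' (Fact.out : 1 ≤ p)
  (Lp.memLp z).integrable_mul (memLp_dualityDensity hp f)

lemma dualityFunctional_nonneg (hp : p ≠ ∞) {f z : Lp ℝ p μ} (hf : 0 ≤ f) (hz : 0 ≤ z) :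
    0 ≤ dualityFunctional hp f z := by
  rw [dualityFunctional_apply]
  refine integral_nonneg_of_ae ?_
  filter_upwards [(Lp.coeFn_nonneg f).2 hf, (Lp.coeFn_nonneg z).2 hz] with w hfw hzw
  exact mul_nonneg hzw (dualityDensity_nonneg hfw)

lemma dualityFunctional_self (hp : p ≠ ∞) (f : Lp ℝ p μ) :
    dualityFunctional hp f f = ‖f‖ ^ p.toReal := by
  have hp0 : p ≠ 0 := (one_pos.trans_le Fact.out).ne'
  simp only [dualityFunctional_apply, norm_rpow_eq_integral_abs_rpow hp0 hp,
    mul_dualityDensity_self (ENNReal.toReal_ne_zero.2 ⟨hp0, hp⟩)]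

lemma dualityFunctional_eq_zero_of_disjoint (hp : p ≠ ∞) {f g : Lp ℝ p μ} (h : |f| ⊓ |g| = 0) :
    dualityFunctional hp f g = 0 := by
  rw [dualityFunctional_apply]
  refine integral_eq_zero_of_ae ?_
  filter_upwards [ae_eq_zero_or_eq_zero_of_abs_inf_abs_eq_zero h] with w hw
  rcases hw with hw | hw
  · rw [hw, dualityDensity_zero, mul_zero, Pi.zero_apply]
  · rw [hw, zero_mul, Pi.zero_apply]

lemma sum_rpow_mul_abs_dualityFunctional_le (hp : p ≠ ∞) {x : ι → Lp ℝ p μ}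
    (hx : Pairwise fun n m ↦ |x n| ⊓ |x m| = 0) (s : Finset ι) {t : ι → ℝ} (ht : 0 ≤ t)
    (z : Lp ℝ p μ) :
    p.toReal * ∑ n ∈ s, t n ^ (p.toReal - 1) * |dualityFunctional hp (x n) z| ≤
      ‖z‖ ^ p.toReal + (p.toReal - 1) * ∑ n ∈ s, t n ^ p.toReal * ‖x n‖ ^ p.toReal := by
  have hp1 : 1 ≤ p.toReal := by simpa using ENNReal.toReal_mono hp (Fact.out : 1 ≤ p)
  have hp0 : p ≠ 0 := (one_pos.trans_le Fact.out).ne'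
  have hdens (n : ι) : Integrable
      (fun w ↦ t n ^ (p.toReal - 1) * |z w * dualityDensity p.toReal (x n w)|) μ :=
    (integrable_mul_dualityDensity hp (x n) z).abs.const_mul _
  have hpow (n : ι) : Integrable (fun w ↦ t n ^ p.toReal * |x n w| ^ p.toReal) μ :=
    (integrable_abs_rpow hp0 hp (x n)).const_mul _
  have hsum := integrable_finsetSum s fun n _ ↦ hpow n
  calc p.toReal * ∑ n ∈ s, t n ^ (p.toReal - 1) * |dualityFunctional hp (x n) z|
      ≤ p.toReal * ∑ n ∈ s,
          ∫ w, t n ^ (p.toReal - 1) * |z w * dualityDensity p.toReal (x n w)| ∂μ := by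
        gcongr with n
        rw [dualityFunctional_apply, integral_const_mul]
        exact mul_le_mul_of_nonneg_left abs_integral_le_integral_abs (Real.rpow_nonneg (ht n) _)
    _ = ∫ w, p.toReal * ∑ n ∈ s,
          t n ^ (p.toReal - 1) * |z w * dualityDensity p.toReal (x n w)| ∂μ := by
        rw [integral_const_mul, integral_finsetSum _ fun n _ ↦ hdens n]
    _ ≤ ∫ w, (|z w| ^ p.toReal +
          (p.toReal - 1) * ∑ n ∈ s, t n ^ p.toReal * |x n w| ^ p.toReal) ∂μ := by
        refine integral_mono_ae ((integrable_finsetSum s fun n _ ↦ hdens n).const_mul _)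
          ((integrable_abs_rpow hp0 hp z).add (hsum.const_mul _)) ?_
        filter_upwards [ae_pairwise_eq_zero_or_eq_zero hx s] with w hw
        exact sum_rpow_mul_abs_mul_dualityDensity_le hp1 hw ht (z w)
    _ = ‖z‖ ^ p.toReal + (p.toReal - 1) * ∑ n ∈ s, t n ^ p.toReal * ‖x n‖ ^ p.toReal := by
        rw [integral_add (integrable_abs_rpow hp0 hp z) (hsum.const_mul _), integral_const_mul,
          integral_finsetSum _ fun n _ ↦ hpow n]
        simp only [integral_const_mul, norm_rpow_eq_integral_abs_rpow hp0 hp]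

end Lp

section LpSum

lemma dualityFunctional_mem_dualSystems {α ι : Type*} [MeasurableSpace α] {μ : Measure α}
    {p : ℝ≥0∞} [Fact (1 ≤ p)] (hp : p ≠ ∞) {x : ι → Lp ℝ p μ} (hpos : ∀ n, 0 ≤ x n)
    (hdisj : Pairwise fun n m ↦ |x n| ⊓ |x m| = 0) :
    (fun n ↦ StrongDual.toWeakDual (dualityFunctional hp (x n))) ∈
      dualSystems p.toReal x {z | 0 ≤ z} := by
  refine ⟨fun n z hz ↦ dualityFunctional_nonneg hp (hpos n) hz,
    fun n m hnm ↦ dualityFunctional_eq_zero_of_disjoint hp (hdisj hnm), fun s t ht z ↦ ?_⟩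
  simpa only [StrongDual.toWeakDual_apply, dualityFunctional_self] using
    sum_rpow_mul_abs_dualityFunctional_le hp hdisj s ht z

variable {Γ ι : Type*} {α : Γ → Type*} [∀ γ, MeasurableSpace (α γ)] {μ : ∀ γ, Measure (α γ)}
  {p : ℝ≥0∞} [Fact (1 ≤ p)] {x : ι → lp (fun γ ↦ Lp ℝ p (μ γ)) ∞} {c : ℝ}

lemma sum_mul_rpow_le_of_forall_sum_mul_norm_rpow_le (hp : p ≠ ∞) (hc : 0 ≤ c)
    (hdisj : Pairwise fun n m ↦ ∀ γ, |x n γ| ⊓ |x m γ| = 0)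
    (hlower : HasLowerEstimate p.toReal c x) {s : Finset ι} {b : ι → ℝ} (hb : 0 ≤ b) {r : ℝ}
    (hr : 0 ≤ r) (h : ∀ γ, ∑ n ∈ s, b n * ‖x n γ‖ ^ p.toReal ≤ r) :
    ∑ n ∈ s, b n * c ^ p.toReal ≤ r := by
  have hp0 : p ≠ 0 := (one_pos.trans_le Fact.out).ne'
  have hq : 0 < p.toReal := ENNReal.toReal_pos hp0 hp
  have hroot (n : ι) : |b n ^ p.toReal⁻¹| ^ p.toReal = b n := by
    rw [abs_of_nonneg (Real.rpow_nonneg (hb n) _), Real.rpow_inv_rpow (hb n) hq.ne']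
  have hB : 0 ≤ ∑ n ∈ s, b n := Finset.sum_nonneg fun n _ ↦ hb n
  have hnorm : ‖∑ n ∈ s, b n ^ p.toReal⁻¹ • x n‖ ≤ r ^ p.toReal⁻¹ := by
    refine lp.norm_le_of_forall_le (Real.rpow_nonneg hr _) fun γ ↦ ?_
    rw [Real.le_rpow_inv_iff_of_pos (norm_nonneg _) hr hq, lp.coeFn_sum, Finset.sum_apply]
    simp only [lp.coeFn_smul, Pi.smul_apply]
    rw [norm_sum_smul_rpow_of_pairwise_disjoint hp0 hp fun n m hnm ↦ hdisj hnm γ]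
    simpa only [hroot] using h γ
  have hle := (hlower s fun n ↦ b n ^ p.toReal⁻¹).trans hnorm
  simp only [hroot] at hle
  rwa [Real.le_rpow_inv_iff_of_pos (by positivity) hr hq, Real.mul_rpow hc (by positivity),
    Real.rpow_inv_rpow hB hq.ne', mul_comm, Finset.sum_mul] at hle

theorem sum_mul_rpow_le_of_forall_mem_dualSystems (hp : p ≠ ∞) (hc : 0 ≤ c)
    (hpos : ∀ n γ, 0 ≤ x n γ) (hdisj : Pairwise fun n m ↦ ∀ γ, |x n γ| ⊓ |x m γ| = 0)
    (hlower : HasLowerEstimate p.toReal c x) {s : Finset ι} {b : ι → ℝ} (hb : 0 ≤ b) {r : ℝ}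
    (h : ∀ g ∈ dualSystems p.toReal x {z | ∀ γ, 0 ≤ z γ}, ∑ n ∈ s, b n * g n (x n) ≤ r) :
    ∑ n ∈ s, b n * c ^ p.toReal ≤ r := by
  have hr : 0 ≤ r := by
    have h0 (n : ι) : (0 : ι → WeakDual ℝ (lp (fun γ ↦ Lp ℝ p (μ γ)) ∞)) n (x n) = 0 := rfl
    simpa only [h0, mul_zero, Finset.sum_const_zero] using h 0 zero_mem_dualSystems
  refine sum_mul_rpow_le_of_forall_sum_mul_norm_rpow_le hp hc hdisj hlower hb hr fun γ ↦ ?_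
  have hmem := comp_mem_dualSystems (K := {z | ∀ γ, 0 ≤ z γ}) ENNReal.toReal_nonneg
    (T := lp.evalCLM ℝ (fun γ ↦ Lp ℝ p (μ γ)) ∞ γ)
    (lp.norm_apply_le_norm ENNReal.top_ne_zero · γ) (fun z hz ↦ hz γ)
    (dualityFunctional_mem_dualSystems hp (hpos · γ) fun n m hnm ↦ hdisj hnm γ)
  refine (Finset.sum_congr rfl fun n _ ↦ ?_).trans_le (h _ hmem)
  exact congrArg (b n * ·) (dualityFunctional_self hp (x n γ)).symm

lemma hasSum_smul_apply_nonneg {a : ι → ℝ} {z : lp (fun γ ↦ Lp ℝ p (μ γ)) ∞}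
    (hz : HasSum (fun n ↦ a n • x n) z) (ha : ∀ n, 0 ≤ a n) (hx : ∀ n γ, 0 ≤ x n γ) (γ : Γ) :
    0 ≤ z γ := by
  have hγ : HasSum (fun n ↦ a n • x n γ) (z γ) :=
    hz.mapL (lp.evalCLM ℝ (fun γ ↦ Lp ℝ p (μ γ)) ∞ γ)
  refine hγ.nonneg fun n ↦ (Lp.coeFn_nonneg _).1 ?_
  filter_upwards [Lp.coeFn_smul (a n) (x n γ), (Lp.coeFn_nonneg (x n γ)).2 (hx n γ)] with w hw hxw
  rw [hw]
  exact mul_nonneg (ha n) hxw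

end LpSum

theorem statement18_general {Γ ι : Type*} {α : Γ → Type*} [∀ γ, MeasurableSpace (α γ)]
    {μ : ∀ γ, Measure (α γ)} {p : ℝ≥0∞} [Fact (1 ≤ p)] (hp : p ≠ ∞) {c C : ℝ} (hc : 0 < c)
    (hC : 0 ≤ C) {x : ι → lp (fun γ ↦ Lp ℝ p (μ γ)) ∞} (hpos : ∀ n γ, 0 ≤ x n γ)
    (hdisj : Pairwise fun n m ↦ ∀ γ, |x n γ| ⊓ |x m γ| = 0)
    (hlower : HasLowerEstimate p.toReal c x) (hupper : HasUpperEstimate p.toReal C x) :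
    ∃ P : lp (fun γ ↦ Lp ℝ p (μ γ)) ∞ →L[ℝ] lp (fun γ ↦ Lp ℝ p (μ γ)) ∞,
      (∀ z, (∀ γ, 0 ≤ z γ) → ∀ γ, 0 ≤ P z γ) ∧
      (∀ z, P (P z) = P z) ∧
      Set.range P = closure (Submodule.span ℝ (Set.range x) : Set (lp (fun γ ↦ Lp ℝ p (μ γ)) ∞)) ∧
      ∀ z, ‖P z‖ ≤ C / c * ‖z‖ := by
  have hp1 : 1 ≤ p.toReal := by simpa using ENNReal.toReal_mono hp (Fact.out : 1 ≤ p)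
  have hq : 0 < p.toReal := by linarith
  obtain ⟨f, hf_nonneg, hf_self, hf_ne, hf_sum⟩ := exists_biorthogonal_of_dualSystems hp1
    (Real.rpow_pos_of_pos hc p.toReal) fun s b hb r h ↦
      sum_mul_rpow_le_of_forall_mem_dualSystems hp hc.le hpos hdisj hlower hb h
  have hf_bound (s : Finset ι) z : ∑ n ∈ s, |f n z| ^ p.toReal ≤ (c⁻¹ * ‖z‖) ^ p.toReal := by
    rw [Real.mul_rpow (by positivity) (norm_nonneg z), Real.inv_rpow hc.le]
    exact hf_sum s z
  obtain ⟨P, hP, hP_norm⟩ := hupper.exists_clm_hasSum hq hC (inv_pos.2 hc).le hf_bound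
  have hproj := isProj_topologicalClosure_span_of_hasSum hP hf_self hf_ne
  refine ⟨P, fun z hz ↦ hasSum_smul_apply_nonneg (hP z) (hf_nonneg · z hz) hpos,
    fun z ↦ hproj.map_id _ (hproj.map_mem z), ?_, hP_norm⟩
  exact congrArg SetLike.coe hproj.range

/-- In an `ℓ∞`-sum `Z = (⊕_γ L^p(μ_γ))_∞`, the closed linear span of a pairwise disjoint
positive sequence equivalent to the unit vector basis of `ℓ^p` (with constants `c` and `1`)
is the range of a positive bounded projection of norm at most `c^{-p}`. -/
theorem statement18 (p : ℝ) (hp : 1 ≤ p) [Fact (1 ≤ ENNReal.ofReal p)]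
    (Γ : Type*) (M : Γ → MeasSp)
    (c : ℝ) (hc0 : 0 < c) (hc1 : c ≤ 1)
    (x : ℕ → lp (fun γ : Γ => Lp ℝ (ENNReal.ofReal p) (M γ).meas) ∞)
    (hpos : ∀ n γ, 0 ≤ x n γ)
    (hdisj : ∀ n m : ℕ, n ≠ m → ∀ γ, |x n γ| ⊓ |x m γ| = 0)
    (hlp : ∀ (s : Finset ℕ) (a : ℕ → ℝ), (∃ n ∈ s, a n ≠ 0) →
      c * (∑ n ∈ s, |a n| ^ p) ^ (1/p) < ‖∑ n ∈ s, a n • x n‖ ∧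
      ‖∑ n ∈ s, a n • x n‖ ≤ (∑ n ∈ s, |a n| ^ p) ^ (1/p)) :
    ∃ P : lp (fun γ : Γ => Lp ℝ (ENNReal.ofReal p) (M γ).meas) ∞ →L[ℝ]
        lp (fun γ : Γ => Lp ℝ (ENNReal.ofReal p) (M γ).meas) ∞,
      (∀ z, (∀ γ, 0 ≤ z γ) → ∀ γ, 0 ≤ P z γ) ∧
      (∀ z, P (P z) = P z) ∧
      Set.range P = closure (Submodule.span ℝ (Set.range x) :
        Set (lp (fun γ : Γ => Lp ℝ (ENNReal.ofReal p) (M γ).meas) ∞)) ∧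
      (∀ z, ‖P z‖ ≤ c ^ (-p) * ‖z‖) := by
  have hp0 : 0 < p := one_pos.trans_le hp
  have hq : (ENNReal.ofReal p).toReal = p := ENNReal.toReal_ofReal hp0.le
  have hlower : HasLowerEstimate p c x :=
    hasLowerEstimate_of_forall_exists_ne_zero hp0.ne' fun s a ha ↦ by
      simpa only [one_div] using (hlp s a ha).1.le
  have hupper : HasUpperEstimate p 1 x :=
    hasUpperEstimate_of_forall_exists_ne_zero hp0.ne' fun s a ha ↦ by
      simpa only [one_div, one_mul] using (hlp s a ha).2
  obtain ⟨P, hP_pos, hP_idem, hP_range, hP_norm⟩ := statement18_general ENNReal.ofReal_ne_top hc0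
    zero_le_one hpos hdisj (hq.symm ▸ hlower) (hq.symm ▸ hupper)
  have hconst : 1 / c ≤ c ^ (-p) := by
    rw [one_div, ← Real.rpow_neg_one]
    exact Real.rpow_le_rpow_of_exponent_ge hc0 hc1 (neg_le_neg hp)
  exact ⟨P, hP_pos, hP_idem, hP_range, fun z ↦ (hP_norm z).trans (by gcongr)⟩
end
end
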